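/- Let Γ' be a finitely generated group admitting an injective group homomorphism into PSL₂(ℝ) with discrete image (i.e., Γ' is isomorphic to a finitely generated discrete subgroup of PSL₂(ℝ)). Suppose there is a short exact sequence 1 → F → Γ → Γ' → 1 of groups with F finite, i.e., a surjective homomorphism Γ → Γ' whose kernel is finite. Then Γ contains a finite-index subgroup isomorphic to a free group or to a surface group. -/

import Mathlib

open scoped MatrixGroups

noncomputable instance : TopologicalSpace (Matrix.SpecialLinearGroup (Fin 2) ℝ) :=
  inferInstanceAs (TopologicalSpace {A : Matrix (Fin 2) (Fin 2) ℝ // A.det = 1})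

noncomputable instance : TopologicalSpace PSL(2, ℝ) :=
  inferInstanceAs (TopologicalSpace (Quotient _))

/-- The surface group relator `[a₁,b₁]⋯[a_g,b_g]`. -/
def surfaceRelator (g : ℕ) : FreeGroup (Fin g × Fin 2) :=
  (List.ofFn fun i : Fin g =>
    FreeGroup.of (i, 0) * FreeGroup.of (i, 1) *
      (FreeGroup.of (i, 0))⁻¹ * (FreeGroup.of (i, 1))⁻¹).prod

/-- The fundamental group of the closed orientable surface of genus `g`. -/
abbrev SurfaceGroup (g : ℕ) : Type :=
  PresentedGroup ({surfaceRelator g} : Set (FreeGroup (Fin g × Fin 2)))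

def IsSurfaceGroup (G : Type*) [Group G] : Prop :=
  ∃ g : ℕ, 2 ≤ g ∧ Nonempty (G ≃* SurfaceGroup g)

def IsFreeGroupOn (G : Type*) [Group G] : Prop :=
  ∃ S : Type, Nonempty (G ≃* FreeGroup S)

section
open scoped Topology

namespace Hyp

/-- Symmetric 2×2 matrices as triples `(x, y, z)`. -/
abbrev V3 := ℝ × ℝ × ℝ

def B (X Y : V3) : ℝ := X.1 * Y.2.2 + X.2.2 * Y.1 - 2 * X.2.1 * Y.2.1
def Q (X : V3) : ℝ := X.1 * X.2.2 - X.2.1 ^ 2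
def D3 (a b c : V3) : ℝ :=
  a.1 * (b.2.1 * c.2.2 - b.2.2 * c.2.1) - a.2.1 * (b.1 * c.2.2 - b.2.2 * c.1)
    + a.2.2 * (b.1 * c.2.1 - b.2.1 * c.1)
def Cone (X : V3) : Prop := 0 < X.1 ∧ 0 < Q X
def I0 : V3 := (1, 0, 1)

theorem B_comm (X Y : V3) : B X Y = B Y X := by unfold B; ring
theorem B_add (X Y Z : V3) : B (X + Y) Z = B X Z + B Y Z := by simp [B]; ring
theorem B_sub (X Y Z : V3) : B (X - Y) Z = B X Z - B Y Z := by simp [B]; ring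
theorem B_smul (c : ℝ) (X Z : V3) : B (c • X) Z = c * B X Z := by simp [B]; ring
theorem B_add' (X Y Z : V3) : B Z (X + Y) = B Z X + B Z Y := by simp [B]; ring
theorem B_sub' (X Y Z : V3) : B Z (X - Y) = B Z X - B Z Y := by simp [B]; ring
theorem B_smul' (c : ℝ) (X Z : V3) : B Z (c • X) = c * B Z X := by simp [B]; ring
theorem B_self (X : V3) : B X X = 2 * Q X := by simp [B, Q]; ring
theorem Q_sub (X Y : V3) : Q (X - Y) = Q X + Q Y - B X Y := by simp [B, Q]; ring
theorem Q_smul (c : ℝ) (X : V3) : Q (c • X) = c ^ 2 * Q X := by simp [Q]; ring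

theorem cont_B (Y : V3) : Continuous (fun X : V3 => B X Y) := by unfold B; fun_prop
theorem cont_Q : Continuous Q := by unfold Q; fun_prop
theorem isOpen_cone : IsOpen {X : V3 | Cone X} := by
  have h1 : IsOpen {X : V3 | 0 < X.1} := isOpen_lt continuous_const continuous_fst
  have h2 : IsOpen {X : V3 | 0 < Q X} := isOpen_lt continuous_const cont_Q
  exact h1.inter h2

theorem cone_I0 : Cone I0 := by simp [Cone, Q, I0]
theorem Cone.z_pos {X : V3} (h : Cone X) : 0 < X.2.2 := by
  obtain ⟨h1, h2⟩ := h
  unfold Q at h2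
  by_contra h3
  push Not at h3
  nlinarith [sq_nonneg X.2.1]

theorem cone_B_pos {X Y : V3} (hX : Cone X) (hY : Cone Y) : 0 < B X Y := by
  have hz := hX.z_pos
  have hr := hY.z_pos
  obtain ⟨h1, h2⟩ := hX
  obtain ⟨h3, h4⟩ := hY
  unfold Q at *
  unfold B
  have key : (2 * X.2.1 * Y.2.1) ^ 2 < (X.1 * Y.2.2 + X.2.2 * Y.1) ^ 2 := by
    have e1 : X.2.1 ^ 2 * Y.2.1 ^ 2 < (X.1 * X.2.2) * (Y.1 * Y.2.2) := by
      have : X.2.1 ^ 2 < X.1 * X.2.2 := by linarith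
      have : Y.2.1 ^ 2 < Y.1 * Y.2.2 := by linarith
      apply mul_lt_mul'' <;> first | assumption | positivity
    nlinarith [sq_nonneg (X.1 * Y.2.2 - X.2.2 * Y.1)]
  have hp : 0 < X.1 * Y.2.2 + X.2.2 * Y.1 := by positivity
  have := abs_lt_of_sq_lt_sq key hp.le
  have := (abs_lt.mp this).2
  linarith

theorem Cone.smul {X : V3} (h : Cone X) {c : ℝ} (hc : 0 < c) : Cone (c • X) := by
  refine ⟨?_, ?_⟩
  · simp only [Prod.smul_fst, smul_eq_mul]; exact mul_pos hc h.1
  · rw [Q_smul]; exact mul_pos (by positivity) h.2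

theorem Cone.add {X Y : V3} (hX : Cone X) (hY : Cone Y) : Cone (X + Y) := by
  refine ⟨add_pos hX.1 hY.1, ?_⟩
  have h : Q (X + Y) = Q X + Q Y + B X Y := by simp [Q, B]; ring
  rw [h]
  have := cone_B_pos hX hY
  have := hX.2; have := hY.2
  linarith

theorem negdef {x a : V3} (hx : Cone x) (h : B x a = 0) (ha : a ≠ 0) : Q a < 0 := by
  obtain ⟨h1, h2⟩ := hx
  have key : x.1 ^ 2 * Q a = - ((x.1 * a.2.1 - x.2.1 * a.1) ^ 2 + Q x * a.1 ^ 2) := by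
    have : x.1 ^ 2 * Q a = x.1 * a.1 * B x a
        - ((x.1 * a.2.1 - x.2.1 * a.1) ^ 2 + Q x * a.1 ^ 2) := by simp only [Q, B]; ring
    rw [this, h]; ring
  by_contra hq
  push Not at hq
  have h5 : (x.1 * a.2.1 - x.2.1 * a.1) ^ 2 + Q x * a.1 ^ 2 ≤ 0 := by
    nlinarith [mul_nonneg (sq_nonneg x.1) hq]
  have h7 : 0 ≤ Q x * a.1 ^ 2 := by positivity
  have h8 := sq_nonneg (x.1 * a.2.1 - x.2.1 * a.1)
  have ha1 : a.1 = 0 := by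
    have : Q x * a.1 ^ 2 = 0 := by linarith
    have := (mul_eq_zero.mp this).resolve_left h2.ne'
    exact pow_eq_zero_iff (by norm_num) |>.mp this
  have ha2 : a.2.1 = 0 := by
    have : (x.1 * a.2.1 - x.2.1 * a.1) ^ 2 = 0 := by linarith
    have := pow_eq_zero_iff (by norm_num) |>.mp this
    rw [ha1] at this
    simpa [h1.ne'] using this
  have ha3 : a.2.2 = 0 := by
    unfold B at h
    rw [ha1, ha2] at h
    simpa [h1.ne'] using h
  exact ha (Prod.ext ha1 (Prod.ext ha2 ha3))

theorem B_gt_two {X Y : V3} (hX : Cone X) (hY : Cone Y) (h1 : Q X = 1) (h2 : Q Y = 1)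
    (hne : X ≠ Y) : 2 < B X Y := by
  have hp := cone_B_pos hX hY
  by_cases ha : Y - (B X Y / 2) • X = 0
  · exfalso
    have hY' : Y = (B X Y / 2) • X := sub_eq_zero.mp ha
    have : Q Y = (B X Y / 2) ^ 2 * Q X := by rw [← Q_smul, ← hY']
    rw [h1, h2] at this
    have h3 : B X Y / 2 = 1 := by nlinarith
    rw [h3, one_smul] at hY'
    exact hne hY'.symm
  · have h3 : B X (Y - (B X Y / 2) • X) = 0 := by
      rw [B_sub', B_smul', B_self, h1]; ring
    have h4 := negdef hX h3 ha
    rw [Q_sub, Q_smul, B_smul', h1, h2, B_comm Y X] at h4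
    nlinarith

/-- cross product identity: if `a, b ⟂ x` then `a × b` is proportional to `x`. -/
theorem cross_zero {x w a b : V3} (hc : B x w ≠ 0) (ha : B x a = 0) (hb : B x b = 0)
    (hd : D3 w a b = 0) :
    a.1 * b.2.1 - a.2.1 * b.1 = 0 ∧ a.1 * b.2.2 - a.2.2 * b.1 = 0 ∧
      a.2.1 * b.2.2 - a.2.2 * b.2.1 = 0 := by
  unfold B at *
  unfold D3 at hd
  refine ⟨?_, ?_, ?_⟩ <;> apply (mul_eq_zero.mp ?_).resolve_left hc
  · linear_combination x.1 * hd + (b.2.1 * w.1 - b.1 * w.2.1) * ha - (a.2.1 * w.1 - a.1 * w.2.1) * hb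
  · linear_combination (2*x.2.1) * hd + (b.2.2 * w.1 - b.1 * w.2.2) * ha
      - (a.2.2 * w.1 - a.1 * w.2.2) * hb
  · linear_combination x.2.2 * hd + (b.2.2 * w.2.1 - b.2.1 * w.2.2) * ha
      - (a.2.2 * w.2.1 - a.2.1 * w.2.2) * hb

theorem smul_of_cross {a b : V3} (ha : a ≠ 0)
    (h : a.1 * b.2.1 - a.2.1 * b.1 = 0 ∧ a.1 * b.2.2 - a.2.2 * b.1 = 0 ∧
      a.2.1 * b.2.2 - a.2.2 * b.2.1 = 0) : ∃ t : ℝ, b = t • a := by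
  obtain ⟨h1, h2, h3⟩ := h
  by_cases e1 : a.1 = 0
  · by_cases e2 : a.2.1 = 0
    · have e3 : a.2.2 ≠ 0 := fun e3 => ha (Prod.ext e1 (Prod.ext e2 e3))
      refine ⟨b.2.2 / a.2.2, ?_⟩
      rw [e1] at h2; rw [e2] at h3
      refine Prod.ext ?_ (Prod.ext ?_ ?_) <;> simp <;> field_simp <;> grind
    · refine ⟨b.2.1 / a.2.1, ?_⟩
      refine Prod.ext ?_ (Prod.ext ?_ ?_) <;> simp <;> field_simp <;> grind
  · refine ⟨b.1 / a.1, ?_⟩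
    refine Prod.ext ?_ (Prod.ext ?_ ?_) <;> simp <;> field_simp <;> grind

/-- Three distinct points of the hyperboloid on a common spacelike plane are independent. -/
theorem det_ne_zero {x a b c : V3} (hx : Cone x) (hc : Cone c)
    (qa : Q a = 1) (qb : Q b = 1) (qc : Q c = 1) (hab : a ≠ b) (hac : a ≠ c) (hbc : b ≠ c)
    (h1 : B x a = B x c) (h2 : B x b = B x c) : D3 c a b ≠ 0 := by
  intro hd
  have hd' : D3 c (a - c) (b - c) = 0 := by
    rw [← hd]; simp [D3]; ring
  have hca : a - c ≠ 0 := sub_ne_zero.mpr hac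
  have o1 : B x (a - c) = 0 := by rw [B_sub', h1]; ring
  have o2 : B x (b - c) = 0 := by rw [B_sub', h2]; ring
  obtain ⟨t, ht⟩ := smul_of_cross hca
    (cross_zero (cone_B_pos hx hc).ne' o1 o2 hd')
  have hq := negdef hx o1 hca
  have e1 : Q (a - c) + B c (a - c) = 0 := by
    have : Q a = Q (a - c) + B c (a - c) + Q c := by simp [Q, B]; ring
    linarith
  have e2 : Q (b - c) + B c (b - c) = 0 := by
    have : Q b = Q (b - c) + B c (b - c) + Q c := by simp [Q, B]; ring
    linarith
  rw [ht, Q_smul, B_smul'] at e2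
  have e3 : t * (t - 1) * Q (a - c) = 0 := by linear_combination e2 - t * e1
  rcases mul_eq_zero.mp e3 with e | e
  · rcases mul_eq_zero.mp e with e | e
    · rw [e, zero_smul] at ht; exact hbc (sub_eq_zero.mp ht)
    · have : t = 1 := by linarith
      rw [this, one_smul] at ht
      exact hab (sub_left_injective ht).symm
  · exact hq.ne e

/-- Transitivity of the cyclic order (Plücker relation). -/
theorem det_trans {x g a b c : V3} (hx : Cone x) (hg : Cone g) (ha : Cone a) (hb : Cone b)
    (hc : Cone c) (qg : Q g = 1) (qa : Q a = 1) (qb : Q b = 1) (qc : Q c = 1)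
    (hag : a ≠ g) (hbg : b ≠ g) (hcg : c ≠ g)
    (h1 : B x a = B x g) (h2 : B x b = B x g) (h3 : B x c = B x g)
    (hab : 0 < D3 g a b) (hbc : 0 < D3 g b c) : 0 < D3 g a c := by
  have ba := B_gt_two hg ha qg qa hag.symm
  have bb := B_gt_two hg hb qg qb hbg.symm
  have bc := B_gt_two hg hc qg qc hcg.symm
  have hz : D3 (a - g) (b - g) (c - g) = 0 := by
    have e1 : B x (a - g) = 0 := by rw [B_sub', h1]; ring
    have e2 : B x (b - g) = 0 := by rw [B_sub', h2]; ring
    have e3 : B x (c - g) = 0 := by rw [B_sub', h3]; ring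
    generalize a - g = a at *
    generalize b - g = b at *
    generalize c - g = c at *
    have hx1 := hx.1
    have : x.1 * D3 a b c = 0 := by
      unfold B at *; unfold D3
      linear_combination (b.1 * c.2.1 - b.2.1 * c.1) * e1 - (a.1 * c.2.1 - a.2.1 * c.1) * e2
        + (a.1 * b.2.1 - a.2.1 * b.1) * e3
    exact (mul_eq_zero.mp this).resolve_left hx1.ne'
  have id : D3 g a c * (B g b - 2) = D3 g a b * (B g c - 2) + D3 g b c * (B g a - 2) := by
    have : D3 g a c * (B g b - B g g) = D3 g a b * (B g c - B g g) + D3 g b c * (B g a - B g g)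
        - B g g * D3 (a - g) (b - g) (c - g) := by
      simp [D3, B]; ring
    rw [B_self, qg, hz] at this
    linarith
  have : 0 < D3 g a c * (B g b - 2) := by
    rw [id]
    have : 0 < B g c - 2 := by linarith
    have : 0 < B g a - 2 := by linarith
    positivity
  exact (pos_iff_pos_of_mul_pos this).mpr (by linarith)

end Hyp
end

section
open scoped Topology

namespace Hyp

structure Sys (G : Type) [Group G] where
  v : G → V3
  act : G → V3 →ₗ[ℝ] V3
  v_mul : ∀ g h, v (g * h) = act g (v h)
  act_B : ∀ g X Y, B (act g X) (act g Y) = B X Y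
  act_cone : ∀ g X, Cone X → Cone (act g X)
  act_det : ∀ g a b c, D3 (act g a) (act g b) (act g c) = D3 a b c
  act_inv : ∀ g X, act g⁻¹ (act g X) = X
  act_mul : ∀ g h X, act (g * h) X = act g (act h X)
  v_cone : ∀ g, Cone (v g)
  v_Q : ∀ g, Q (v g) = 1
  v_one : v 1 = I0
  v_inj : Function.Injective v
  fin : ∀ R : ℝ, {g | B I0 (v g) ≤ R}.Finite
  tf : ∀ (g : G) (n : ℕ), 0 < n → g ^ n = 1 → g = 1

namespace Sys
variable {G : Type} [Group G] (σ : Sys G)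

def Mn (X : V3) : Set G := {g | ∀ h, B X (σ.v g) ≤ B X (σ.v h)}

theorem mn_eq {X : V3} {g h : G} (hg : g ∈ σ.Mn X) (hh : h ∈ σ.Mn X) :
    B X (σ.v g) = B X (σ.v h) := le_antisymm (hg h) (hh g)

theorem mn_of_eq {X : V3} {g h : G} (hg : g ∈ σ.Mn X) (e : B X (σ.v h) = B X (σ.v g)) :
    h ∈ σ.Mn X := fun k => by rw [e]; exact hg k

/-- lower bound locally uniform -/
theorem ev_lower {X : V3} (hX : Cone X) :
    ∃ c : ℝ, 0 < c ∧ ∀ᶠ X' in 𝓝 X, Cone X' ∧ ∀ g, c * B I0 (σ.v g) ≤ B X' (σ.v g) := by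
  have h1 : Continuous (fun c : ℝ => X - c • I0) := by fun_prop
  have h2 : {c : ℝ | Cone (X - c • I0)} ∈ 𝓝 (0 : ℝ) := by
    apply (isOpen_cone.preimage h1).mem_nhds
    simpa using hX
  obtain ⟨ε, hε, hb⟩ := Metric.mem_nhds_iff.mp h2
  have h3 : Cone (X - (ε / 2) • I0) := by
    apply hb
    simp [abs_of_pos hε]; 
    linarith
  refine ⟨ε / 2, by linarith, ?_⟩
  have h4 : Continuous (fun X' : V3 => X' - (ε / 2) • I0) := by fun_prop
  have h5 : ∀ᶠ X' in 𝓝 X, Cone (X' - (ε / 2) • I0) :=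
    (isOpen_cone.preimage h4).mem_nhds h3
  filter_upwards [h5, isOpen_cone.mem_nhds hX] with X' h6 h7
  refine ⟨h7, fun g => ?_⟩
  have := cone_B_pos h6 (σ.v_cone g)
  rw [B_sub, B_smul] at this
  linarith

theorem fin_X {X : V3} (hX : Cone X) (R : ℝ) : {g | B X (σ.v g) ≤ R}.Finite := by
  obtain ⟨c, hc, h⟩ := σ.ev_lower hX
  have h' := h.self_of_nhds.2
  apply (σ.fin (R / c)).subset
  intro g hg
  simp only [Set.mem_ofPred_eq] at *
  rw [le_div_iff₀ hc]
  linarith [h' g]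

theorem mn_nonempty {X : V3} (hX : Cone X) : (σ.Mn X).Nonempty := by
  have hf := σ.fin_X hX (B X (σ.v 1))
  obtain ⟨g, hg, hmin⟩ := Set.exists_min_image _ (fun g => B X (σ.v g)) hf ⟨1, by simp⟩
  refine ⟨g, fun h => ?_⟩
  by_cases hh : B X (σ.v h) ≤ B X (σ.v 1)
  · exact hmin h hh
  · exact le_trans hg (not_le.mp hh).le

theorem mn_finite {X : V3} (hX : Cone X) : (σ.Mn X).Finite := by
  obtain ⟨g, hg⟩ := σ.mn_nonempty hX
  exact (σ.fin_X hX (B X (σ.v g))).subset fun h hh => hh g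

theorem ev_sub {X : V3} (hX : Cone X) : ∀ᶠ X' in 𝓝 X, Cone X' ∧ σ.Mn X' ⊆ σ.Mn X := by
  obtain ⟨c, hc, h⟩ := σ.ev_lower hX
  obtain ⟨g, hg⟩ := σ.mn_nonempty hX
  have hgc : ∀ᶠ X' in 𝓝 X, B X' (σ.v g) < B X (σ.v g) + 1 :=
    ((cont_B (σ.v g)).tendsto X).eventually (gt_mem_nhds (by linarith))
  have hF := σ.fin ((B X (σ.v g) + 1) / c)
  have hall : ∀ᶠ X' in 𝓝 X, ∀ k ∈ {k | B I0 (σ.v k) ≤ (B X (σ.v g) + 1) / c},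
      k ∉ σ.Mn X → B X' (σ.v g) < B X' (σ.v k) := by
    rw [Filter.eventually_all_finite hF]
    intro k _
    by_cases hk : k ∈ σ.Mn X
    · exact Filter.Eventually.of_forall fun X' h => absurd hk h
    · have : B X (σ.v g) < B X (σ.v k) := by
        by_contra hcon
        push Not at hcon
        exact hk (σ.mn_of_eq hg (le_antisymm hcon (hg k)))
      have h2 : ∀ᶠ X' in 𝓝 X, B X' (σ.v g) < B X' (σ.v k) :=
        (isOpen_lt (cont_B (σ.v g)) (cont_B (σ.v k))).mem_nhds this
      filter_upwards [h2] with X' h3 _ using h3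
  filter_upwards [h, hgc, hall] with X' h1 h2 h3
  refine ⟨h1.1, fun k hk => ?_⟩
  by_contra hkn
  have hk1 : B X' (σ.v k) ≤ B X' (σ.v g) := hk g
  have := h3 k (by
    show B I0 (σ.v k) ≤ (B X (σ.v g) + 1) / c
    rw [le_div_iff₀ hc]
    linarith [h1.2 k]) hkn
  linarith

theorem act_B' (g : G) (X : V3) (h : G) : B (σ.act g X) (σ.v (g * h)) = B X (σ.v h) := by
  rw [σ.v_mul, σ.act_B]

theorem mn_act (k g : G) (X : V3) : k * g ∈ σ.Mn (σ.act k X) ↔ g ∈ σ.Mn X := by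
  constructor
  · intro h j
    have := h (k * j)
    rwa [σ.act_B', σ.act_B'] at this
  · intro h j
    have := h (k⁻¹ * j)
    rw [σ.act_B']
    have e : B (σ.act k X) (σ.v j) = B X (σ.v (k⁻¹ * j)) := by
      rw [← σ.act_B' k X]; simp
    rw [e]; exact this

theorem mn_smul {c : ℝ} (hc : 0 < c) (X : V3) : σ.Mn (c • X) = σ.Mn X := by
  ext g
  simp only [Mn, Set.mem_ofPred_eq, B_smul]
  exact forall_congr' fun h => mul_le_mul_iff_right₀ hc

theorem v_det (k a b c : G) : D3 (σ.v (k * a)) (σ.v (k * b)) (σ.v (k * c))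
    = D3 (σ.v a) (σ.v b) (σ.v c) := by
  rw [σ.v_mul, σ.v_mul, σ.v_mul, σ.act_det]

/-! cyclic order -/

theorem d_ne {x : V3} (hx : Cone x) {a b c : G} (ha : a ∈ σ.Mn x) (hb : b ∈ σ.Mn x)
    (hc : c ∈ σ.Mn x) (hab : a ≠ b) (hac : a ≠ c) (hbc : b ≠ c) :
    D3 (σ.v a) (σ.v b) (σ.v c) ≠ 0 :=
  det_ne_zero hx (σ.v_cone a) (σ.v_Q b) (σ.v_Q c) (σ.v_Q a)
    (σ.v_inj.ne hbc) (σ.v_inj.ne hab.symm) (σ.v_inj.ne hac.symm)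
    (σ.mn_eq hb ha) (σ.mn_eq hc ha)

theorem d_trans {x : V3} (hx : Cone x) {g a b c : G} (hg : g ∈ σ.Mn x) (ha : a ∈ σ.Mn x)
    (hb : b ∈ σ.Mn x) (hc : c ∈ σ.Mn x) (hga : a ≠ g) (hgb : b ≠ g) (hgc : c ≠ g)
    (h1 : 0 < D3 (σ.v g) (σ.v a) (σ.v b)) (h2 : 0 < D3 (σ.v g) (σ.v b) (σ.v c)) :
    0 < D3 (σ.v g) (σ.v a) (σ.v c) :=
  det_trans hx (σ.v_cone g) (σ.v_cone a) (σ.v_cone b) (σ.v_cone c) (σ.v_Q _) (σ.v_Q _)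
    (σ.v_Q _) (σ.v_Q _) (σ.v_inj.ne hga) (σ.v_inj.ne hgb) (σ.v_inj.ne hgc)
    (σ.mn_eq ha hg) (σ.mn_eq hb hg) (σ.mn_eq hc hg) h1 h2

def Succ (x : V3) (g h : G) : Prop :=
  g ∈ σ.Mn x ∧ h ∈ σ.Mn x ∧ g ≠ h ∧
    ∀ k ∈ σ.Mn x, k ≠ g → k ≠ h → 0 < D3 (σ.v g) (σ.v h) (σ.v k)

theorem D3_swap23 (a b c : V3) : D3 a c b = - D3 a b c := by simp [D3]; ring
theorem D3_swap13 (a b c : V3) : D3 c b a = - D3 a b c := by simp [D3]; ring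
theorem D3_swap12 (a b c : V3) : D3 b a c = - D3 a b c := by simp [D3]; ring
theorem D3_rot (a b c : V3) : D3 c a b = D3 a b c := by simp [D3]; ring

theorem succ_unique {x : V3} {g h h' : G} (h1 : σ.Succ x g h) (h2 : σ.Succ x g h') : h = h' := by
  by_contra hne
  have a := h1.2.2.2 h' h2.2.1 h2.2.2.1.symm (Ne.symm hne)
  have b := h2.2.2.2 h h1.2.1 h1.2.2.1.symm hne
  rw [D3_swap23] at b
  linarith

theorem pred_unique {x : V3} {g g' h : G} (h1 : σ.Succ x g h) (h2 : σ.Succ x g' h) : g = g' := by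
  by_contra hne
  have a := h1.2.2.2 g' h2.1 (Ne.symm hne) h2.2.2.1
  have b := h2.2.2.2 g h1.1 hne h1.2.2.1
  rw [D3_swap13] at b
  linarith

theorem exists_least {x : V3} (hx : Cone x) {k : G} (hk : k ∈ σ.Mn x) (C : Set G)
    (hC : C ⊆ σ.Mn x) (hkC : k ∉ C) (hne : C.Nonempty) :
    ∃ h ∈ C, ∀ a ∈ C, ¬ 0 < D3 (σ.v k) (σ.v a) (σ.v h) := by
  have : Finite C := ((σ.mn_finite hx).subset hC).to_subtype
  let r : C → C → Prop := fun a b => 0 < D3 (σ.v k) (σ.v a) (σ.v b)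
  have ne : ∀ a : C, (a : G) ≠ k := fun a e => hkC (e ▸ a.2)
  have : IsTrans C r := ⟨fun a b c h1 h2 => σ.d_trans hx hk (hC a.2) (hC b.2) (hC c.2)
    (ne a) (ne b) (ne c) h1 h2⟩
  have : Std.Irrefl r := ⟨fun a h => by
    have : D3 (σ.v k) (σ.v a) (σ.v a) = 0 := by simp [D3]; ring
    simp only [r, this] at h
    exact lt_irrefl _ h⟩
  have wf := Finite.wellFounded_of_trans_of_irrefl r
  obtain ⟨h0, hh0⟩ := hne
  obtain ⟨m, -, hm⟩ := wf.has_min (Set.univ : Set C) ⟨⟨h0, hh0⟩, trivial⟩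
  exact ⟨m, m.2, fun a ha => hm ⟨a, ha⟩ trivial⟩

theorem exists_greatest {x : V3} (hx : Cone x) {k : G} (hk : k ∈ σ.Mn x) (C : Set G)
    (hC : C ⊆ σ.Mn x) (hkC : k ∉ C) (hne : C.Nonempty) :
    ∃ h ∈ C, ∀ a ∈ C, ¬ 0 < D3 (σ.v k) (σ.v h) (σ.v a) := by
  have : Finite C := ((σ.mn_finite hx).subset hC).to_subtype
  let r : C → C → Prop := fun a b => 0 < D3 (σ.v k) (σ.v b) (σ.v a)
  have ne : ∀ a : C, (a : G) ≠ k := fun a e => hkC (e ▸ a.2)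
  have : IsTrans C r := ⟨fun a b c h1 h2 => σ.d_trans hx hk (hC c.2) (hC b.2) (hC a.2)
    (ne c) (ne b) (ne a) h2 h1⟩
  have : Std.Irrefl r := ⟨fun a h => by
    have : D3 (σ.v k) (σ.v a) (σ.v a) = 0 := by simp [D3]; ring
    simp only [r, this] at h
    exact lt_irrefl _ h⟩
  have wf := Finite.wellFounded_of_trans_of_irrefl r
  obtain ⟨h0, hh0⟩ := hne
  obtain ⟨m, -, hm⟩ := wf.has_min (Set.univ : Set C) ⟨⟨h0, hh0⟩, trivial⟩
  exact ⟨m, m.2, fun a ha => hm ⟨a, ha⟩ trivial⟩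

theorem exists_succ {x : V3} (hx : Cone x) {g h0 : G} (hg : g ∈ σ.Mn x) (hh : h0 ∈ σ.Mn x)
    (hne : h0 ≠ g) : ∃ h, σ.Succ x g h := by
  obtain ⟨h, ⟨hm, hn⟩, hmin⟩ := σ.exists_least hx hg (σ.Mn x \ {g}) Set.sdiff_subset
    (by simp) ⟨h0, hh, hne⟩
  refine ⟨h, hg, hm, fun e => hn e.symm, fun k hk hkg hkh => ?_⟩
  have h1 := hmin k ⟨hk, hkg⟩
  rw [D3_swap23] at h1
  exact lt_of_le_of_ne (by linarith) (σ.d_ne hx hg hm hk (fun e => hn e.symm) hkg.symm hkh.symm).symm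

theorem succ_trans {x : V3} (hx : Cone x) (C : Set G) (hC : C ⊆ σ.Mn x) (hne : C.Nonempty)
    (hcl : ∀ g ∈ C, ∀ h, σ.Succ x g h → h ∈ C) : C = σ.Mn x := by
  refine Set.Subset.antisymm hC fun k hk => ?_
  by_contra hkC
  obtain ⟨g, hg, hmax⟩ := σ.exists_greatest hx hk C hC hkC hne
  obtain ⟨h, hs⟩ := σ.exists_succ hx (hC hg) hk (fun e => hkC (e ▸ hg))
  have hh := hcl g hg h hs
  apply hmax h hh
  rw [D3_rot]
  exact hs.2.2.2 k hk (fun e => hkC (e ▸ hg)) (fun e => hkC (e ▸ hh))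

theorem exists_pred {x : V3} (hx : Cone x) {g h0 : G} (hg : g ∈ σ.Mn x) (hh : h0 ∈ σ.Mn x)
    (hne : h0 ≠ g) : ∃ h, σ.Succ x h g := by
  by_contra hcon
  push Not at hcon
  have := σ.succ_trans hx (σ.Mn x \ {g}) Set.sdiff_subset ⟨h0, hh, hne⟩
    (fun a ha b hb => ⟨hb.2.1, fun e => hcon a (by rw [Set.mem_singleton_iff] at e; exact e ▸ hb)⟩)
  have h2 : g ∈ σ.Mn x \ {g} := by rw [this]; exact hg
  exact h2.2 rfl

theorem succ_act (k : G) {x : V3} {g h : G} :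
    σ.Succ (σ.act k x) (k * g) (k * h) ↔ σ.Succ x g h := by
  unfold Succ
  rw [σ.mn_act, σ.mn_act]
  refine and_congr_right fun _ => and_congr_right fun _ => and_congr (by simp) ?_
  constructor
  · intro H j hj h1 h2
    have := H (k * j) ((σ.mn_act k j x).mpr hj) (by simpa using h1) (by simpa using h2)
    rwa [σ.v_det] at this
  · intro H j hj h1 h2
    have e : j = k * (k⁻¹ * j) := by simp
    rw [e, σ.v_det]
    apply H
    · rw [e, σ.mn_act] at hj; exact hj
    · rintro rfl; apply h1; simp
    · rintro rfl; apply h2; simp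

theorem succ_smul {c : ℝ} (hc : 0 < c) {x : V3} {g h : G} :
    σ.Succ (c • x) g h ↔ σ.Succ x g h := by
  unfold Succ; rw [σ.mn_smul hc]

/-! edges -/

noncomputable def dv (a b : V3) : V3 :=
  (a.1 * b.2.1 - a.2.1 * b.1, (a.1 * b.2.2 - a.2.2 * b.1) / 2, a.2.1 * b.2.2 - a.2.2 * b.2.1)

theorem B_dv (a b k : V3) : B (dv a b) k = D3 a b k := by simp [B, dv, D3]; ring

def Edge (g h : G) : Prop := ∃ x, Cone x ∧ σ.Mn x = {g, h} ∧ g ≠ h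

theorem edge_ev {x : V3} (hx : Cone x) {g h : G} (hs : σ.Succ x g h) :
    ∀ᶠ t in 𝓝[>] (0:ℝ), Cone (x + t • dv (σ.v g) (σ.v h)) ∧
      σ.Mn (x + t • dv (σ.v g) (σ.v h)) = {g, h} := by
  have hc : Continuous (fun t : ℝ => x + t • dv (σ.v g) (σ.v h)) := by fun_prop
  have ht : Filter.Tendsto (fun t : ℝ => x + t • dv (σ.v g) (σ.v h)) (𝓝[>] 0) (𝓝 x) := by
    have := hc.tendsto 0
    simp only [zero_smul, add_zero] at this
    exact this.mono_left nhdsWithin_le_nhds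
  filter_upwards [ht.eventually (σ.ev_sub hx), self_mem_nhdsWithin] with t h1 h2
  obtain ⟨h1, h3⟩ := h1
  refine ⟨h1, ?_⟩
  have vg : B (x + t • dv (σ.v g) (σ.v h)) (σ.v g) = B x (σ.v g) := by
    rw [B_add, B_smul, B_dv]; simp [D3]; right; ring
  have vh : B (x + t • dv (σ.v g) (σ.v h)) (σ.v h) = B x (σ.v g) := by
    rw [B_add, B_smul, B_dv, σ.mn_eq hs.2.1 hs.1]; simp [D3]; right; ring
  have sub : σ.Mn (x + t • dv (σ.v g) (σ.v h)) ⊆ {g, h} := by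
    intro k hk
    by_contra hn
    simp only [Set.mem_insert_iff, Set.mem_singleton_iff, not_or] at hn
    have h4 := hs.2.2.2 k (h3 hk) hn.1 hn.2
    have h5 := hk g
    rw [vg, B_add, B_smul, B_dv, σ.mn_eq (h3 hk) hs.1] at h5
    have : 0 < t * D3 (σ.v g) (σ.v h) (σ.v k) := mul_pos h2 h4
    linarith
  have hgm : g ∈ σ.Mn (x + t • dv (σ.v g) (σ.v h)) := by
    obtain ⟨k, hk⟩ := σ.mn_nonempty h1
    rcases sub hk with rfl | hkh
    · exact hk
    · rw [Set.mem_singleton_iff] at hkh; subst hkh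
      exact σ.mn_of_eq hk (by rw [vg, vh])
  refine Set.Subset.antisymm sub ?_
  rintro k (rfl | hk)
  · exact hgm
  · rw [Set.mem_singleton_iff] at hk; subst hk
    exact σ.mn_of_eq hgm (by rw [vg, vh])

theorem Succ.edge {x : V3} (hx : Cone x) {g h : G} (hs : σ.Succ x g h) : σ.Edge g h := by
  obtain ⟨t, h1, h2⟩ := (σ.edge_ev hx hs).exists
  exact ⟨_, h1, h2, hs.2.2.1⟩

theorem Edge.symm {g h : G} (he : σ.Edge g h) : σ.Edge h g := by
  obtain ⟨x, h1, h2, h3⟩ := he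
  exact ⟨x, h1, by rw [h2, Set.pair_comm], h3.symm⟩

theorem Edge.act (k : G) {g h : G} (he : σ.Edge g h) : σ.Edge (k * g) (k * h) := by
  obtain ⟨x, h1, h2, h3⟩ := he
  refine ⟨σ.act k x, σ.act_cone _ _ h1, ?_, by simpa using h3⟩
  ext j
  have e : j = k * (k⁻¹ * j) := by simp
  rw [e, σ.mn_act, h2]
  simp [inv_mul_eq_iff_eq_mul]

/-- Parametrization of the bisector line. -/
theorem bisector {x x' : V3} (hx : Cone x) (hx' : Cone x') {g h : G} (hgh : g ≠ h)
    (h1 : B x (σ.v g) = B x (σ.v h)) (h2 : B x' (σ.v g) = B x' (σ.v h)) :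
    ∃ c t : ℝ, 0 < c ∧ x' = c • (x + t • dv (σ.v g) (σ.v h)) := by
  set a := σ.v g with ha
  set b := σ.v h with hb
  have p1 : 0 < B x a := cone_B_pos hx (σ.v_cone g)
  have p2 : 0 < B x' a := cone_B_pos hx' (σ.v_cone g)
  set c := B x' a / B x a with hc
  have hcp : 0 < c := div_pos p2 p1
  have hd : dv a b ≠ 0 := by
    intro e
    have hane : a ≠ 0 := by
      intro e; have := (σ.v_cone g).1; rw [← ha, e] at this; simp at this
    have e1 := congrArg (fun w : V3 => w.1) e
    have e2 := congrArg (fun w : V3 => w.2.1) e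
    have e3 := congrArg (fun w : V3 => w.2.2) e
    simp only [dv, Prod.fst_zero, Prod.snd_zero] at e1 e2 e3
    obtain ⟨t, ht⟩ := smul_of_cross (b := b) hane ⟨e1, by linarith, e3⟩
    have q1 : Q b = t ^ 2 * Q a := by rw [ht, Q_smul]
    rw [ha, hb, σ.v_Q, σ.v_Q] at q1
    have ht0 : 0 < t := by
      have h1 := (σ.v_cone h).1
      have h2 := (σ.v_cone g).1
      rw [← hb, ht] at h1
      simp only [Prod.smul_fst, smul_eq_mul] at h1
      exact (pos_iff_pos_of_mul_pos h1).mpr h2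
    have : t = 1 := by nlinarith
    rw [this, one_smul] at ht
    exact hgh (σ.v_inj ht.symm)
  have o1 : B (c⁻¹ • x' - x) a = 0 := by
    rw [B_sub, B_smul, hc]; field_simp; ring
  have o2 : B (c⁻¹ • x' - x) b = 0 := by
    rw [B_sub, B_smul, ← h2, ← h1, hc]; field_simp; ring
  obtain ⟨t, ht⟩ : ∃ t : ℝ, c⁻¹ • x' - x = t • dv a b := by
    generalize c⁻¹ • x' - x = y at o1 o2
    apply smul_of_cross hd
    unfold B at o1 o2
    simp only [dv]
    refine ⟨?_, ?_, ?_⟩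
    · linear_combination (b.1 / 2) * o1 - (a.1 / 2) * o2
    · linear_combination (b.2.1) * o1 - (a.2.1) * o2
    · linear_combination (b.2.2 / 2) * o1 - (a.2.2 / 2) * o2
  refine ⟨c, t, hcp, ?_⟩
  rw [← ht]
  simp [smul_smul, hcp.ne']

theorem two_pts_aux {x : V3} (hx : Cone x) {g h : G} (hgh : g ≠ h) {c t : ℝ} (hc : 0 < c)
    (ht : 0 < t) (hx' : Cone (c • (x + t • dv (σ.v g) (σ.v h)))) (hg : g ∈ σ.Mn x)
    (hh : h ∈ σ.Mn x) (hg' : g ∈ σ.Mn (c • (x + t • dv (σ.v g) (σ.v h)))) 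
    (hh' : h ∈ σ.Mn (c • (x + t • dv (σ.v g) (σ.v h)))) :
    σ.Succ x g h ∧ σ.Succ (c • (x + t • dv (σ.v g) (σ.v h))) h g := by
  have hg2 := hg'
  rw [σ.mn_smul hc] at hg2
  have vg : B (x + t • dv (σ.v g) (σ.v h)) (σ.v g) = B x (σ.v g) := by
    rw [B_add, B_smul, B_dv]; simp [D3]; right; ring
  refine ⟨⟨hg, hh, hgh, fun k hk h1 h2 => ?_⟩, ⟨hh', hg', hgh.symm, fun k hk h1 h2 => ?_⟩⟩
  · have h3 := hg2 k
    rw [vg, B_add, B_smul, B_dv, σ.mn_eq hk hg] at h3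
    have h4 : 0 ≤ D3 (σ.v g) (σ.v h) (σ.v k) := by
      by_contra hn; push Not at hn; nlinarith
    exact lt_of_le_of_ne h4 (σ.d_ne hx hg hh hk hgh h1.symm h2.symm).symm
  · have h6 := σ.d_ne hx' hg' hh' hk hgh h2.symm h1.symm
    rw [σ.mn_smul hc] at hk
    have h3 := σ.mn_eq hk hg2
    have h5 := hg k
    rw [vg, B_add, B_smul, B_dv] at h3
    have h4 : D3 (σ.v g) (σ.v h) (σ.v k) ≤ 0 := by
      by_contra hn; push Not at hn; nlinarith
    rw [D3_swap12]
    have := lt_of_le_of_ne h4 h6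
    linarith

theorem two_pts {x x' : V3} (hx : Cone x) (hx' : Cone x') {g h : G} (hgh : g ≠ h)
    (hg : g ∈ σ.Mn x) (hh : h ∈ σ.Mn x) (hg' : g ∈ σ.Mn x') (hh' : h ∈ σ.Mn x') :
    (∃ c : ℝ, 0 < c ∧ x' = c • x) ∨ (σ.Succ x g h ∧ σ.Succ x' h g) ∨
      (σ.Succ x h g ∧ σ.Succ x' g h) := by
  obtain ⟨c, t, hc, e⟩ := σ.bisector hx hx' hgh (σ.mn_eq hg hh) (σ.mn_eq hg' hh')
  rcases lt_trichotomy t 0 with ht | ht | ht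
  · right; right
    have e2 : x' = c • (x + (-t) • dv (σ.v h) (σ.v g)) := by
      rw [e]
      have : dv (σ.v h) (σ.v g) = - dv (σ.v g) (σ.v h) := by
        refine Prod.ext ?_ (Prod.ext ?_ ?_) <;> simp [dv] <;> ring
      rw [this, smul_neg, neg_smul, neg_neg]
    subst e2
    exact σ.two_pts_aux hx hgh.symm hc (by linarith) hx' hh hg hh' hg'
  · left; exact ⟨c, hc, by rw [e, ht]; simp⟩
  · right; left
    subst e
    exact σ.two_pts_aux hx hgh hc ht hx' hg hh hg' hh'

/-- `(g,h)` oriented edge with a vertex `x` on its initial side. -/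
def SuccV (x : V3) (g h : G) : Prop := Cone x ∧ σ.Succ x g h ∧ ∃ k ∈ σ.Mn x, k ≠ g ∧ k ≠ h

theorem vtx_unique {x x' : V3} {g h : G} (h1 : σ.SuccV x g h) (h2 : σ.SuccV x' g h) :
    ∃ c : ℝ, 0 < c ∧ x' = c • x := by
  obtain ⟨hx, hs, k, hk, hkg, hkh⟩ := h1
  obtain ⟨hx', hs', k', hk', hkg', hkh'⟩ := h2
  have contra : ∀ y k, σ.Succ y g h → σ.Succ y h g → k ∈ σ.Mn y → k ≠ g → k ≠ h → False := by
    intro y k a b hk h1 h2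
    have e1 := a.2.2.2 k hk h1 h2
    have e2 := b.2.2.2 k hk h2 h1
    rw [D3_swap12] at e2
    linarith
  rcases σ.two_pts hx hx' hs.2.2.1 hs.1 hs.2.1 hs'.1 hs'.2.1 with h | h | h
  · exact h
  · exact (contra x' k' hs' h.2 hk' hkg' hkh').elim
  · exact (contra x k hs h.1 hk hkg hkh).elim

end Sys
end Hyp
end

section
open scoped Topology

namespace Hyp
namespace Sys
variable {G : Type} [Group G] (σ : Sys G)

theorem countable_G (σ : Sys G) : Countable G := by
  rw [← Set.countable_univ_iff]
  have : (Set.univ : Set G) = ⋃ n : ℕ, {g | B I0 (σ.v g) ≤ (n : ℝ)} := by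
    ext g
    simp only [Set.mem_univ, Set.mem_iUnion, true_iff]
    exact exists_nat_ge (B I0 (σ.v g))
  rw [this]
  exact Set.countable_iUnion fun n => (σ.fin n).countable

theorem quad_countable (a b c : ℝ) (h : ¬ (a = 0 ∧ b = 0 ∧ c = 0)) :
    {e : ℝ | a * e ^ 2 + b * e + c = 0}.Countable := by
  let q : Polynomial ℝ := Polynomial.C a * Polynomial.X ^ 2 + Polynomial.C b * Polynomial.X
    + Polynomial.C c
  have hq : q ≠ 0 := by
    intro hq
    apply h
    have h2 := congrArg (fun q => Polynomial.coeff q 2) hq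
    have h1 := congrArg (fun q => Polynomial.coeff q 1) hq
    have h0 := congrArg (fun q => Polynomial.coeff q 0) hq
    simp [q, Polynomial.coeff_X, Polynomial.coeff_C] at h0 h1 h2
    exact ⟨h2, h1, h0⟩
  apply Set.Finite.countable
  refine (q.roots.toFinset.finite_toSet).subset fun e he => ?_
  have he : a * e ^ 2 + b * e + c = 0 := he
  simp [Polynomial.mem_roots hq, q, he]

theorem exists_generic : ∃ p : V3, Cone p ∧ Function.Injective (fun g => B p (σ.v g)) := by
  have := σ.countable_G
  have hcount : (⋃ gh : G × G, {e : ℝ | gh.1 ≠ gh.2 ∧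
      B (1, e, 1 + e ^ 2) (σ.v gh.1) = B (1, e, 1 + e ^ 2) (σ.v gh.2)}).Countable := by
    apply Set.countable_iUnion
    rintro ⟨g, h⟩
    by_cases hgh : g = h
    · simp [hgh]
    have hv := σ.v_inj.ne hgh
    refine (quad_countable ((σ.v g).1 - (σ.v h).1) (-2 * ((σ.v g).2.1 - (σ.v h).2.1))
      ((σ.v g).2.2 - (σ.v h).2.2 + ((σ.v g).1 - (σ.v h).1)) ?_).mono ?_
    · rintro ⟨h1, h2, h3⟩
      apply hv
      refine Prod.ext ?_ (Prod.ext ?_ ?_) <;> linarith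
    · rintro e ⟨_, he⟩
      simp only [B] at he
      show _ = _
      linarith
  obtain ⟨e, he⟩ : ∃ e : ℝ, e ∉ (⋃ gh : G × G, {e : ℝ | gh.1 ≠ gh.2 ∧
      B (1, e, 1 + e ^ 2) (σ.v gh.1) = B (1, e, 1 + e ^ 2) (σ.v gh.2)}) := by
    by_contra hcon
    push Not at hcon
    exact Cardinal.not_countable_real ((Set.eq_univ_of_forall hcon) ▸ hcount)
  refine ⟨(1, e, 1 + e ^ 2), ⟨by simp, by simp [Q]⟩, fun g h hgh => ?_⟩
  by_contra hne
  exact he (Set.mem_iUnion.mpr ⟨(g, h), hne, hgh⟩)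

noncomputable def uu (p X : V3) (g k : G) : ℝ :=
  (B X (σ.v k) - B X (σ.v g)) / (B p (σ.v g) - B p (σ.v k))

theorem exit_mem {p X : V3} {g k : G} (hg : g ∈ σ.Mn X) (hk : B p (σ.v k) < B p (σ.v g))
    (hmin : ∀ j, B p (σ.v j) < B p (σ.v g) → σ.uu p X g k ≤ σ.uu p X g j) :
    g ∈ σ.Mn (X + σ.uu p X g k • p) ∧ k ∈ σ.Mn (X + σ.uu p X g k • p) := by
  set u := σ.uu p X g k with hu
  have hu0 : 0 ≤ u := div_nonneg (by linarith [hg k]) (by linarith)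
  have hgm : g ∈ σ.Mn (X + u • p) := by
    intro j
    rw [B_add, B_add, B_smul, B_smul]
    by_cases hj : B p (σ.v j) < B p (σ.v g)
    · have := hmin j hj
      unfold uu at this
      rw [le_div_iff₀ (by linarith)] at this
      linarith
    · push Not at hj
      have := hg j
      nlinarith
  refine ⟨hgm, σ.mn_of_eq hgm ?_⟩
  rw [B_add, B_add, B_smul, B_smul]
  have : u * (B p (σ.v g) - B p (σ.v k)) = B X (σ.v k) - B X (σ.v g) :=
    div_mul_cancel₀ _ (by linarith)
  linarith

theorem exists_exit {p X : V3} (hp : Cone p) {g k0 : G}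
    (hk : B p (σ.v k0) < B p (σ.v g)) :
    ∃ k, B p (σ.v k) < B p (σ.v g) ∧
      ∀ j, B p (σ.v j) < B p (σ.v g) → σ.uu p X g k ≤ σ.uu p X g j := by
  have hf : {j | B p (σ.v j) < B p (σ.v g)}.Finite :=
    (σ.fin_X hp (B p (σ.v g))).subset fun j hj => show B p (σ.v j) ≤ B p (σ.v g) from le_of_lt hj
  exact Set.exists_min_image _ (fun j => σ.uu p X g j) hf ⟨k0, hk⟩

theorem exit_cone {p X : V3} (hp : Cone p) (hX : Cone X) {g k : G} (hg : g ∈ σ.Mn X)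
    (hk : B p (σ.v k) < B p (σ.v g)) : Cone (X + σ.uu p X g k • p) := by
  have hu0 : 0 ≤ σ.uu p X g k := div_nonneg (by linarith [hg k]) (by linarith)
  rcases hu0.eq_or_lt with h | h
  · rw [← h]; simpa using hX
  · exact hX.add (hp.smul h)

theorem self_mem (g : G) : g ∈ σ.Mn (σ.v g) := by
  intro h
  by_cases e : g = h
  · rw [e]
  · rw [B_self, σ.v_Q]
    have := B_gt_two (σ.v_cone g) (σ.v_cone h) (σ.v_Q g) (σ.v_Q h) (σ.v_inj.ne e)
    linarith

theorem wf_key {p : V3} (hp : Cone p) :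
    WellFounded (fun h g : G => B p (σ.v h) < B p (σ.v g)) := by
  rw [WellFounded.wellFounded_iff_has_min]
  rintro s ⟨g, hg⟩
  have hf : (s ∩ {j | B p (σ.v j) ≤ B p (σ.v g)}).Finite :=
    (σ.fin_X hp (B p (σ.v g))).subset Set.inter_subset_right
  obtain ⟨m, hm, hmin⟩ := Set.exists_min_image _ (fun j => B p (σ.v j)) hf ⟨g, hg, by simp⟩
  refine ⟨m, hm.1, fun x hx hlt => ?_⟩
  have h1 := hmin x ⟨hx, le_trans hlt.le hm.2⟩
  linarith

theorem conn {α : Type*} (f : G → α)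
    (hf : ∀ x, Cone x → ∀ g ∈ σ.Mn x, ∀ h ∈ σ.Mn x, f g = f h) (g h : G) : f g = f h := by
  obtain ⟨p, hp, hinj⟩ := σ.exists_generic
  obtain ⟨m, -, hm⟩ := (σ.wf_key hp).has_min Set.univ ⟨1, trivial⟩
  have key : ∀ g, f g = f m := by
    intro g
    induction g using (σ.wf_key hp).induction with
    | _ g ih =>
      by_cases hgm : g = m
      · rw [hgm]
      have hlt : B p (σ.v m) < B p (σ.v g) :=
        lt_of_le_of_ne (not_lt.mp (hm g trivial)) fun e => hgm (hinj e).symm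
      obtain ⟨k, hk, hmin⟩ := σ.exists_exit (X := σ.v g) hp hlt
      obtain ⟨h1, h2⟩ := σ.exit_mem (σ.self_mem g) hk hmin
      rw [hf _ (σ.exit_cone hp (σ.v_cone g) (σ.self_mem g) hk) g h1 k h2]
      exact ih k hk
  rw [key g, key h]

theorem morse {K : Type*} [Group K] (c : G → G → K)
    (hc : ∀ x, Cone x → ∀ g ∈ σ.Mn x, ∀ h ∈ σ.Mn x, ∀ k ∈ σ.Mn x, c g h * c h k = c g k) :
    ∃ b : G → K, ∀ x, Cone x → ∀ g ∈ σ.Mn x, ∀ h ∈ σ.Mn x, b h = b g * c g h := by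
  classical
  obtain ⟨p, hp, hinj⟩ := σ.exists_generic
  let Low : G → G → Prop := fun h g => B p (σ.v h) < B p (σ.v g) ∧
    ∃ x, Cone x ∧ g ∈ σ.Mn x ∧ h ∈ σ.Mn x
  let b : G → K := (σ.wf_key hp).fix fun g rec =>
    if h : ∃ h, Low h g then rec h.choose h.choose_spec.1 * c h.choose g else 1
  have hb : ∀ g (h : ∃ h, Low h g), b g = b h.choose * c h.choose g := by
    intro g h
    show (σ.wf_key hp).fix _ g = _
    rw [WellFounded.fix_eq, dif_pos h]
  have key : ∀ g h, Low h g → b g = b h * c h g := by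
    intro g
    induction g using (σ.wf_key hp).induction with
    | _ g ih =>
      intro h hl
      have hex : ∃ h, Low h g := ⟨h, hl⟩
      rw [hb g hex]
      have hl' := hex.choose_spec
      generalize hex.choose = h' at hl'
      -- local consistency
      have loc : ∀ X, Cone X → g ∈ σ.Mn X → ∀ k ∈ σ.Mn X, ∀ k' ∈ σ.Mn X,
          B p (σ.v k) < B p (σ.v g) → B p (σ.v k') < B p (σ.v g) →
          b k * c k g = b k' * c k' g := by
        intro X hX hg k hk k' hk' h1 h2
        rcases lt_trichotomy (B p (σ.v k)) (B p (σ.v k')) with h3 | h3 | h3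
        · rw [ih k' h2 k ⟨h3, X, hX, hk', hk⟩, mul_assoc, hc X hX k hk k' hk' g hg]
        · rw [hinj h3]
        · rw [ih k h1 k' ⟨h3, X, hX, hk, hk'⟩, mul_assoc, hc X hX k' hk' k hk g hg]
      obtain ⟨l1, y1, cy1, gy1, hy1⟩ := hl
      obtain ⟨l2, y2, cy2, gy2, hy2⟩ := hl'
      by_contra hne
      let z : ℝ → V3 := fun s => (1 - s) • y1 + s • y2
      have zc : Continuous z := by fun_prop
      have uc : ∀ k, Continuous fun s => σ.uu p (z s) g k := by
        intro k
        unfold uu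
        exact ((cont_B (σ.v k)).comp zc |>.sub ((cont_B (σ.v g)).comp zc)).div_const _
      have zcone : ∀ s ∈ Set.Icc (0:ℝ) 1, Cone (z s) := by
        rintro s ⟨h0, h1⟩
        rcases h0.eq_or_lt with e | e
        · simpa [z, ← e] using cy1
        rcases h1.eq_or_lt with e' | e'
        · simpa [z, e'] using cy2
        exact (cy1.smul (by linarith)).add (cy2.smul e)
      have zmn : ∀ s ∈ Set.Icc (0:ℝ) 1, g ∈ σ.Mn (z s) := by
        rintro s ⟨h0, h1⟩ j
        simp only [z]
        rw [B_add, B_add, B_smul, B_smul, B_smul, B_smul]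
        have := mul_le_mul_of_nonneg_left (gy1 j) (by linarith : 0 ≤ 1 - s)
        have := mul_le_mul_of_nonneg_left (gy2 j) h0
        linarith
      let L : Set G := {k | B p (σ.v k) < B p (σ.v g)}
      have hf : L.Finite := (σ.fin_X hp (B p (σ.v g))).subset fun j hj => show B p (σ.v j) ≤ B p (σ.v g) from le_of_lt hj
      let C : G → Set ℝ := fun k => {s | ∀ j, B p (σ.v j) < B p (σ.v g) →
        σ.uu p (z s) g k ≤ σ.uu p (z s) g j}
      have Cc : ∀ k, IsClosed (C k) := by
        intro k
        have : C k = ⋂ j, ⋂ (_ : B p (σ.v j) < B p (σ.v g)),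
            {s | σ.uu p (z s) g k ≤ σ.uu p (z s) g j} := by
          ext s; simp [C]
        rw [this]
        exact isClosed_iInter fun j => isClosed_iInter fun _ => isClosed_le (uc k) (uc j)
      let A1 : Set G := {k | k ∈ L ∧ b k * c k g = b h * c h g}
      let A2 : Set G := {k | k ∈ L ∧ b k * c k g ≠ b h * c h g}
      have c1 : IsClosed (⋃ k ∈ A1, C k) :=
        (hf.subset fun k hk => hk.1).isClosed_biUnion fun k _ => Cc k
      have c2 : IsClosed (⋃ k ∈ A2, C k) :=
        (hf.subset fun k hk => hk.1).isClosed_biUnion fun k _ => Cc k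
      have zero : ∀ y k, g ∈ σ.Mn y → k ∈ σ.Mn y → σ.uu p y g k = 0 := by
        intro y k h1 h2
        unfold uu; rw [σ.mn_eq h2 h1]; simp
      have nonneg : ∀ y k, g ∈ σ.Mn y → k ∈ L → 0 ≤ σ.uu p y g k := by
        intro y k h1 h2
        have h2 : B p (σ.v k) < B p (σ.v g) := h2
        exact div_nonneg (by linarith [h1 k]) (by linarith)
      have := isPreconnected_closed_iff.mp (isPreconnected_Icc (a := (0:ℝ)) (b := 1)) _ _ c1 c2
        (by
          intro s hs
          obtain ⟨k, hk, hmin⟩ := σ.exists_exit (X := z s) hp l1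
          by_cases hv : b k * c k g = b h * c h g
          · exact Or.inl (Set.mem_biUnion (⟨hk, hv⟩ : k ∈ A1) hmin)
          · exact Or.inr (Set.mem_biUnion (⟨hk, hv⟩ : k ∈ A2) hmin))
        ⟨0, by simp, Set.mem_biUnion (⟨l1, rfl⟩ : h ∈ A1) (by
          intro j hj
          have e : z 0 = y1 := by simp [z]
          rw [e, zero y1 h gy1 hy1]; exact nonneg y1 j gy1 hj)⟩
        ⟨1, by simp, Set.mem_biUnion (⟨l2, hne⟩ : h' ∈ A2) (by
          intro j hj
          have e : z 1 = y2 := by simp [z]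
          rw [e, zero y2 h' gy2 hy2]; exact nonneg y2 j gy2 hj)⟩
      obtain ⟨s, hs, hs1, hs2⟩ := this
      simp only [Set.mem_iUnion] at hs1 hs2
      obtain ⟨k, hk, hkC⟩ := hs1
      obtain ⟨k', hk', hkC'⟩ := hs2
      have e1 := σ.exit_mem (zmn s hs) hk.1 hkC
      have e2 := σ.exit_mem (zmn s hs) hk'.1 hkC'
      have eu : σ.uu p (z s) g k = σ.uu p (z s) g k' :=
        le_antisymm (hkC k' hk'.1) (hkC' k hk.1)
      rw [← eu] at e2
      apply hk'.2
      rw [← hk.2]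
      exact (loc _ (σ.exit_cone hp (zcone s hs) (zmn s hs) hk.1) e1.1 k e1.2 k' e2.2
        hk.1 hk'.1).symm
  refine ⟨b, fun x hx g hg h hh => ?_⟩
  rcases lt_trichotomy (B p (σ.v g)) (B p (σ.v h)) with h1 | h1 | h1
  · exact key h g ⟨h1, x, hx, hh, hg⟩
  · have e : g = h := hinj h1
    subst e
    have := hc x hx g hg g hg g hg
    have : c g g = 1 := by simpa using this
    rw [this, mul_one]
  · rw [key g h ⟨h1, x, hx, hg, hh⟩, mul_assoc, hc x hx h hh g hg h hh]
    have := hc x hx h hh h hh h hh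
    have : c h h = 1 := by simpa using this
    rw [this, mul_one]

end Sys
end Hyp
end

section
open scoped Topology

namespace Hyp

/-- partial products along a φ-orbit -/
def orbProd {G K : Type*} [Group K] (φ : G → G) (f : G → K) (s : G) (n : ℕ) : K :=
  ((List.range n).map fun i => f (φ^[i] s)).prod

theorem orbProd_zero {G K : Type*} [Group K] (φ : G → G) (f : G → K) (s : G) :
    orbProd φ f s 0 = 1 := by simp [orbProd]

theorem orbProd_succ {G K : Type*} [Group K] (φ : G → G) (f : G → K) (s : G) (n : ℕ) :
    orbProd φ f s (n + 1) = orbProd φ f s n * f (φ^[n] s) := by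
  simp [orbProd, List.range_succ]

theorem orbProd_add {G K : Type*} [Group K] (φ : G → G) (f : G → K) (s : G) (n m : ℕ) :
    orbProd φ f s (n + m) = orbProd φ f s n * orbProd φ f (φ^[n] s) m := by
  induction m with
  | zero => simp [orbProd_zero]
  | succ m ih => rw [← add_assoc, orbProd_succ, ih, orbProd_succ, mul_assoc, add_comm n m,
      Function.iterate_add_apply]

theorem orbProd_mod {G K : Type*} [Group K] (φ : G → G) (f : G → K) (s : G) (n m : ℕ)
    (hn : φ^[n] s = s) (h : orbProd φ f s n = 1) :
    orbProd φ f s m = orbProd φ f s (m % n) := by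
  have key : ∀ q r, orbProd φ f s (n * q + r) = orbProd φ f s r := by
    intro q r
    induction q with
    | zero => simp
    | succ q ih =>
      rw [show n * (q + 1) + r = n + (n * q + r) by ring, orbProd_add, h, hn, ih, one_mul]
  conv_lhs => rw [← Nat.div_add_mod m n, key]

namespace Sys
variable {G : Type} [Group G] (σ : Sys G)

def S : Set G := {s | σ.Edge 1 s}
def Del : Set G := {s | ∃ x, σ.SuccV x 1 s}

theorem edge_iff {g h : G} : σ.Edge g h ↔ g⁻¹ * h ∈ σ.S := by
  constructor
  · intro he
    have := Edge.act σ g⁻¹ he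
    simp only [inv_mul_cancel] at this
    exact this
  · intro he
    have he : σ.Edge 1 (g⁻¹ * h) := he
    have := Edge.act σ g he
    simpa using this

theorem S_inv {s : G} (hs : s ∈ σ.S) : s⁻¹ ∈ σ.S := by
  have h : σ.Edge s 1 := Edge.symm σ hs
  rw [edge_iff] at h
  simpa using h

theorem S_inv_ne {s : G} (hs : s ∈ σ.S) : s⁻¹ ≠ s := by
  intro e
  obtain ⟨x, -, -, h⟩ := hs
  exact h (σ.tf s 2 (by norm_num) (by rw [pow_two]; nth_rewrite 1 [← e]; simp)).symm

theorem succV_act (k : G) {x : V3} {g h : G} (hs : σ.SuccV x g h) :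
    σ.SuccV (σ.act k x) (k * g) (k * h) := by
  obtain ⟨h1, h2, j, h3, h4, h5⟩ := hs
  exact ⟨σ.act_cone _ _ h1, (σ.succ_act k).mpr h2, k * j, (σ.mn_act _ _ _).mpr h3,
    by simpa using h4, by simpa using h5⟩

theorem succV_act_inv {x : V3} {g h : G} (hs : σ.SuccV x g h) :
    σ.SuccV (σ.act g⁻¹ x) 1 (g⁻¹ * h) := by
  have := σ.succV_act g⁻¹ hs
  simpa using this

theorem Del_sub : σ.Del ⊆ σ.S := by
  rintro s ⟨x, h1, h2, -⟩
  exact Succ.edge σ h1 h2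

/-- SuccV from Succ, given some SuccV at the same point. -/
theorem SuccV.of_succ {x : V3} {g h a b : G} (hs : σ.SuccV x g h) (h2 : σ.Succ x a b) :
    σ.SuccV x a b := by
  obtain ⟨h1, h3, j, h4, h5, h6⟩ := hs
  refine ⟨h1, h2, ?_⟩
  by_contra hcon
  push Not at hcon
  have hg := hcon g h3.1
  have hh := hcon h h3.2.1
  have hj := hcon j h4
  have hne := h3.2.2.1
  clear hcon h3 h4 h2 h1
  by_cases e1 : g = a
  · by_cases e2 : h = a
    · exact hne (e1.trans e2.symm)
    · by_cases e3 : j = a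
      · exact h5 (e3.trans e1.symm)
      · exact h6 ((hj e3).trans (hh e2).symm)
  · by_cases e2 : h = a
    · by_cases e3 : j = a
      · exact h6 (e3.trans e2.symm)
      · exact h5 ((hj e3).trans (hg e1).symm)
    · exact hne ((hg e1).trans (hh e2).symm)

theorem exists_phi (s : G) : ∃ k, ∀ x, σ.SuccV x 1 s → σ.Succ x s (s * k) := by
  by_cases hs : s ∈ σ.Del
  · obtain ⟨x, hx⟩ := hs
    obtain ⟨k, hk⟩ := σ.exists_succ hx.1 hx.2.1.2.1 hx.2.1.1 hx.2.1.2.2.1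
    refine ⟨s⁻¹ * k, fun y hy => ?_⟩
    obtain ⟨c, hc, rfl⟩ := σ.vtx_unique hx hy
    rw [σ.succ_smul hc]; simpa using hk
  · exact ⟨1, fun x hx => (hs ⟨x, hx⟩).elim⟩

noncomputable def phi (s : G) : G := (σ.exists_phi s).choose

theorem phi_spec {x : V3} {g s : G} (h : σ.SuccV x g (g * s)) :
    σ.SuccV x (g * s) (g * s * σ.phi s) := by
  have h1 := σ.succV_act_inv h
  rw [inv_mul_cancel_left] at h1
  have h2 := SuccV.of_succ σ h1 ((σ.exists_phi s).choose_spec _ h1)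
  have h3 := σ.succV_act g h2
  have e : σ.act g (σ.act g⁻¹ x) = x := by
    have := σ.act_inv g⁻¹ x
    simpa using this
  rw [e] at h3
  rw [mul_assoc]
  exact h3

theorem phi_mem {s : G} (hs : s ∈ σ.Del) : σ.phi s ∈ σ.Del := by
  obtain ⟨x, hx⟩ := hs
  have h := σ.phi_spec (x := x) (g := 1) (s := s) (by simpa using hx)
  have := σ.succV_act_inv h
  rw [inv_mul_cancel_left] at this
  exact ⟨_, this⟩

/-- the vertex seen from `phi s`. -/
theorem phi_vtx {s : G} (hs : s ∈ σ.Del) : ∃ y, σ.SuccV y 1 (σ.phi s) ∧ σ.Succ y s⁻¹ 1 := by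
  obtain ⟨x, hx⟩ := hs
  have h := σ.phi_spec (x := x) (g := 1) (s := s) (by simpa using hx)
  have h2 := σ.succV_act_inv h
  rw [inv_mul_cancel_left] at h2
  refine ⟨_, h2, ?_⟩
  have := (σ.succV_act s⁻¹ hx).2.1
  simpa using this

theorem pred_phi {s r : G} {y : V3} (hs : σ.SuccV y 1 s) (hr : r ∈ σ.Del) (e : σ.phi r = s) :
    σ.Succ y r⁻¹ 1 := by
  obtain ⟨z, hz1, hz2⟩ := σ.phi_vtx hr
  rw [e] at hz1
  obtain ⟨c, hc, rfl⟩ := σ.vtx_unique hz1 hs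
  rwa [σ.succ_smul hc]

theorem phi_inj : Set.InjOn σ.phi σ.Del := by
  intro s hs s' hs' e
  obtain ⟨y, hy1, hy2⟩ := σ.phi_vtx hs
  have := σ.pred_phi hy1 hs' e.symm
  have := σ.pred_unique hy2 this
  simpa using this

theorem orb_succV {x : V3} {g s : G} (h : σ.SuccV x g (g * s)) (i : ℕ) :
    σ.SuccV x (g * orbProd σ.phi id s i) (g * orbProd σ.phi id s (i + 1)) := by
  induction i with
  | zero => simpa [orbProd_zero, orbProd_succ] using h
  | succ i ih =>
    rw [orbProd_succ, ← mul_assoc] at ih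
    have := σ.phi_spec ih
    simp only [id] at this
    simpa only [orbProd_succ _ _ _ (i + 1), orbProd_succ, ← mul_assoc,
      Function.iterate_succ_apply', id] using this

theorem iter_mem {s : G} (hs : s ∈ σ.Del) (i : ℕ) : σ.phi^[i] s ∈ σ.Del := by
  induction i with
  | zero => exact hs
  | succ i ih => rw [Function.iterate_succ_apply']; exact σ.phi_mem ih

theorem phi_per {s : G} (hs : s ∈ σ.Del) : ∃ n, 0 < n ∧ σ.phi^[n] s = s := by
  have hs' := hs
  obtain ⟨x, hx⟩ := hs'
  have hfin := σ.mn_finite hx.1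
  have hfin2 : (Set.image2 (fun a b : G => a⁻¹ * b) (σ.Mn x) (σ.Mn x)).Finite :=
    hfin.image2 _ hfin
  have hm : ∀ i, σ.phi^[i] s ∈ Set.image2 (fun a b : G => a⁻¹ * b) (σ.Mn x) (σ.Mn x) := by
    intro i
    have h := σ.orb_succV (x := x) (g := 1) (s := s) (by simpa using hx) i
    refine ⟨_, h.2.1.1, _, h.2.1.2.1, ?_⟩
    simp [orbProd_succ]
  obtain ⟨i, -, j, -, hij, e⟩ := Set.infinite_univ.exists_ne_map_eq_of_mapsTo
    (f := fun i : ℕ => σ.phi^[i] s) (fun i _ => hm i) hfin2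
  have key : ∀ i j, σ.phi^[i] s = σ.phi^[i + j] s → σ.phi^[j] s = s := by
    intro i j
    induction i with
    | zero => intro h; simpa using h.symm
    | succ i ih =>
      intro h
      apply ih
      apply σ.phi_inj (σ.iter_mem hs _) (σ.iter_mem hs _)
      rw [← Function.iterate_succ_apply' σ.phi, ← Function.iterate_succ_apply' σ.phi, Nat.succ_eq_add_one, h]
      congr 2; omega
  rcases lt_or_gt_of_ne hij with h | h
  · exact ⟨j - i, by omega, key i (j - i) (by rw [show i + (j - i) = j by omega]; exact e)⟩
  · exact ⟨i - j, by omega, key j (i - j) (by rw [show j + (i - j) = i by omega]; exact e.symm)⟩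

theorem orb_closed {s : G} (hs : s ∈ σ.Del) {n : ℕ} (hn : σ.phi^[n] s = s) :
    orbProd σ.phi id s n = 1 := by
  obtain ⟨x, hx⟩ := hs
  have h := σ.orb_succV (x := x) (g := 1) (s := s) (by simpa using hx) n
  rw [one_mul, one_mul, orbProd_succ, hn] at h
  set g := orbProd σ.phi id s n
  have h2 := σ.succV_act_inv h
  rw [inv_mul_cancel_left] at h2
  obtain ⟨c, hc, e⟩ := σ.vtx_unique hx h2
  have hmem : ∀ i : ℕ, (g⁻¹) ^ i ∈ σ.Mn x := by
    intro i
    induction i with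
    | zero => simpa using hx.2.1.1
    | succ i ih =>
      rw [← σ.mn_smul hc, ← e, pow_succ', σ.mn_act]
      exact ih
  obtain ⟨i, -, j, -, hij, e⟩ := Set.infinite_univ.exists_ne_map_eq_of_mapsTo
    (f := fun i : ℕ => (g⁻¹) ^ i) (fun i _ => hmem i) (σ.mn_finite hx.1)
  have key : ∀ i j, i < j → (g⁻¹) ^ i = (g⁻¹) ^ j → g⁻¹ = 1 := by
    intro i j hij e
    apply σ.tf _ (j - i) (by omega)
    have : (g⁻¹) ^ i * (g⁻¹) ^ (j - i) = (g⁻¹) ^ i * 1 := by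
      rw [← pow_add, mul_one, e]; congr 1; omega
    exact mul_left_cancel this
  have : g⁻¹ = 1 := by
    rcases lt_or_gt_of_ne hij with h | h
    · exact key i j h e
    · exact key j i h e.symm
  simpa using this

theorem conn_edge {α : Type*} (f : G → α) (hf : ∀ g, ∀ s ∈ σ.S, f (g * s) = f g) (g h : G) :
    f g = f h := by
  apply σ.conn f
  intro x hx g hg h hh
  have := σ.succ_trans hx {k | k ∈ σ.Mn x ∧ f g = f k} (fun k hk => hk.1) ⟨g, hg, rfl⟩
    (fun a ha b hb => ⟨hb.2.1, by
      have h1 := Succ.edge σ hx hb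
      rw [edge_iff] at h1
      have h2 := hf a _ h1
      rw [mul_inv_cancel_left] at h2
      rw [ha.2, h2]⟩)
  rw [← this] at hh
  exact hh.2

theorem gen : Subgroup.closure σ.S = ⊤ := by
  rw [eq_top_iff]
  intro g _
  have := σ.conn_edge (fun g => (g : G ⧸ Subgroup.closure σ.S)) (fun g s hs => by
    rw [QuotientGroup.eq]
    have : s⁻¹ ∈ Subgroup.closure σ.S := inv_mem (Subgroup.subset_closure hs)
    simpa using this) 1 g
  rw [QuotientGroup.eq] at this
  simpa using this

/-- Local potentials. -/
def Pot {K : Type*} [Group K] (f : G → K) (x : V3) (b : G → K) : Prop :=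
  ∀ g h, σ.Succ x g h → b h = b g * f (g⁻¹ * h)

theorem exists_pot {K : Type*} [Group K] (f : G → K) (hf : ∀ s ∈ σ.S, f s⁻¹ = (f s)⁻¹)
    (hw : ∀ s ∈ σ.Del, ∃ i, orbProd σ.phi f (σ.phi^[i] s)
      (Function.minimalPeriod σ.phi (σ.phi^[i] s)) = 1)
    {x : V3} (hx : Cone x) : ∃ b, σ.Pot f x b := by
  classical
  by_cases h0 : ∃ g h, σ.Succ x g h
  swap
  · push Not at h0
    exact ⟨fun _ => 1, fun g h hs => (h0 g h hs).elim⟩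
  obtain ⟨g, h, hs⟩ := h0
  by_cases h3 : ∃ k ∈ σ.Mn x, k ≠ g ∧ k ≠ h
  · -- vertex
    have hV : σ.SuccV x g (g * (g⁻¹ * h)) := ⟨hx, by simpa using hs, by simpa using h3⟩
    have hD : g⁻¹ * h ∈ σ.Del := by
      have := σ.succV_act_inv hV
      rw [inv_mul_cancel_left] at this
      exact ⟨_, this⟩
    obtain ⟨i, hi⟩ := hw _ hD
    set r := σ.phi^[i] (g⁻¹ * h) with hr
    have hrD : r ∈ σ.Del := σ.iter_mem hD i
    have hV' := σ.orb_succV hV i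
    set g0 := g * orbProd σ.phi id (g⁻¹ * h) i
    rw [orbProd_succ, ← hr, id, ← mul_assoc] at hV'
    have hall := σ.orb_succV hV'
    set n := Function.minimalPeriod σ.phi r with hn
    have hper : σ.phi^[n] r = r := Function.isPeriodicPt_minimalPeriod _ _
    have hcov : {k | ∃ i, k = g0 * orbProd σ.phi id r i} = σ.Mn x := by
      apply σ.succ_trans hx
      · rintro k ⟨i, rfl⟩
        exact (hall i).2.1.1
      · exact ⟨_, 0, rfl⟩
      · rintro k ⟨i, rfl⟩ l hl
        exact ⟨i + 1, σ.succ_unique hl (hall i).2.1⟩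
    have hwd : ∀ i j, g0 * orbProd σ.phi id r i = g0 * orbProd σ.phi id r j →
        orbProd σ.phi f r i = orbProd σ.phi f r j := by
      intro i j e
      have e1 := (hall i).2.1
      rw [e] at e1
      have e2 := σ.succ_unique e1 (hall j).2.1
      have e' := mul_left_cancel e
      have e2' := mul_left_cancel e2
      rw [orbProd_succ, orbProd_succ, e'] at e2'
      have e3 : σ.phi^[i] r = σ.phi^[j] r := mul_left_cancel e2'
      have hpp : r ∈ Function.periodicPts σ.phi := σ.phi_per hrD
      have e4 : i % n = j % n :=
        Function.iterate_eq_iterate_iff_of_lt_minimalPeriod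
          (Nat.mod_lt _ (Function.minimalPeriod_pos_of_mem_periodicPts hpp))
          (Nat.mod_lt _ (Function.minimalPeriod_pos_of_mem_periodicPts hpp)) |>.mp (by
            rw [Function.iterate_mod_minimalPeriod_eq, Function.iterate_mod_minimalPeriod_eq, e3])
      rw [orbProd_mod _ _ _ n i hper hi, orbProd_mod _ _ _ n j hper hi, e4]
    refine ⟨fun k => if hk : ∃ i, k = g0 * orbProd σ.phi id r i then
      orbProd σ.phi f r hk.choose else 1, fun a b hab => ?_⟩
    have ha : ∃ i, a = g0 * orbProd σ.phi id r i := by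
      have := hab.1; rw [← hcov] at this; exact this
    have hb : ∃ i, b = g0 * orbProd σ.phi id r i := by
      have := hab.2.1; rw [← hcov] at this; exact this
    dsimp only
    rw [dif_pos ha, dif_pos hb]
    have e1 := ha.choose_spec
    have e2 := hb.choose_spec
    generalize ha.choose = i at *
    generalize hb.choose = j at *
    have e3 : b = g0 * orbProd σ.phi id r (i + 1) := by
      apply σ.succ_unique hab
      rw [e1]; exact (hall i).2.1
    rw [hwd j (i + 1) (by rw [← e2, e3]), orbProd_succ, e1, e3, orbProd_succ]
    simp
  · push Not at h3
    have hS := Succ.edge σ hx hs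
    rw [edge_iff] at hS
    refine ⟨fun k => if k = g then 1 else f (g⁻¹ * h), fun a b hab => ?_⟩
    have hgh := hs.2.2.1
    by_cases ha : a = g
    · subst ha
      have : b = h := h3 b hab.2.1 hab.2.2.1.symm
      subst this
      simp [hgh.symm]
    · have ha' : a = h := h3 a hab.1 ha
      have hb : b = g := by
        by_contra hb
        exact hab.2.2.1 (ha'.trans (h3 b hab.2.1 hb).symm)
      subst ha' hb
      have := hf _ hS
      simp only [mul_inv_rev, inv_inv] at this
      simp [ha, this]

theorem pot_unique {K : Type*} [Group K] {f : G → K} (hf : ∀ s ∈ σ.S, f s⁻¹ = (f s)⁻¹)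
    {x x' : V3} (hx : Cone x) (hx' : Cone x') {b b' : G → K} (hb : σ.Pot f x b)
    (hb' : σ.Pot f x' b') {g h : G} (hg : g ∈ σ.Mn x) (hh : h ∈ σ.Mn x) (hg' : g ∈ σ.Mn x')
    (hh' : h ∈ σ.Mn x') : (b g)⁻¹ * b h = (b' g)⁻¹ * b' h := by
  by_cases hgh : g = h
  · subst hgh; simp
  have aux : ∀ a c, a * f (g⁻¹ * h) = c → a⁻¹ * c = f (g⁻¹ * h) := by
    rintro a c rfl; simp
  have key : ∀ (y : V3) (d : G → K), Cone y → σ.Pot f y d → (σ.Succ y g h ∨ σ.Succ y h g) →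
      (d g)⁻¹ * d h = f (g⁻¹ * h) := by
    intro y d hy hd hs
    rcases hs with hs | hs
    · rw [hd g h hs]; simp
    · have hS := Succ.edge σ hy hs
      rw [edge_iff] at hS
      have := hf _ hS
      simp only [mul_inv_rev, inv_inv] at this
      rw [hd h g hs, this]; simp
  rcases σ.two_pts hx hx' hgh hg hh hg' hh' with h1 | h1 | h1
  · obtain ⟨c, hc, rfl⟩ := h1
    have := σ.succ_trans hx {k | k ∈ σ.Mn x ∧ (b g)⁻¹ * b k = (b' g)⁻¹ * b' k}
      (fun k hk => hk.1) ⟨g, hg, by simp⟩ (fun u hu v hv => ⟨hv.2.1, by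
        have h2 := hb u v hv
        have h3 := hb' u v ((σ.succ_smul hc).mpr hv)
        rw [h2, h3, ← mul_assoc, ← mul_assoc, hu.2]⟩)
    rw [← this] at hh
    exact hh.2
  · rw [key x b hx hb (Or.inl h1.1), key x' b' hx' hb' (Or.inr h1.2)]
  · rw [key x b hx hb (Or.inr h1.1), key x' b' hx' hb' (Or.inl h1.2)]

theorem univ {K : Type*} [Group K] (f : G → K) (hf : ∀ s ∈ σ.S, f s⁻¹ = (f s)⁻¹)
    (hw : ∀ s ∈ σ.Del, ∃ i, orbProd σ.phi f (σ.phi^[i] s)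
      (Function.minimalPeriod σ.phi (σ.phi^[i] s)) = 1) :
    ∃ F : G →* K, ∀ s ∈ σ.S, F s = f s := by
  classical
  let Val : G → G → K → Prop := fun g h κ => ∃ x b, Cone x ∧ σ.Pot f x b ∧ g ∈ σ.Mn x ∧
    h ∈ σ.Mn x ∧ κ = (b g)⁻¹ * b h
  let c : G → G → K := fun g h => if hκ : ∃ κ, Val g h κ then hκ.choose else 1
  have hc : ∀ x b, Cone x → σ.Pot f x b → ∀ g ∈ σ.Mn x, ∀ h ∈ σ.Mn x,
      c g h = (b g)⁻¹ * b h := by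
    intro x b hx hb g hg h hh
    have hκ : ∃ κ, Val g h κ := ⟨_, x, b, hx, hb, hg, hh, rfl⟩
    simp only [c]
    rw [dif_pos hκ]
    obtain ⟨x', b', hx', hb', hg', hh', e⟩ := hκ.choose_spec
    rw [e]
    exact σ.pot_unique hf hx' hx hb' hb hg' hh' hg hh
  obtain ⟨b, hb⟩ := σ.morse c (by
    intro x hx g hg h hh k hk
    obtain ⟨d, hd⟩ := σ.exists_pot f hf hw hx
    rw [hc x d hx hd g hg h hh, hc x d hx hd h hh k hk, hc x d hx hd g hg k hk]
    group)
  have hbs : ∀ g, ∀ s ∈ σ.S, b (g * s) = b g * f s := by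
    intro g s hs
    have he : σ.Edge g (g * s) := by rw [edge_iff]; simpa using hs
    obtain ⟨x, hx, hM, hne⟩ := he
    have hg : g ∈ σ.Mn x := by rw [hM]; simp
    have hgs : g * s ∈ σ.Mn x := by rw [hM]; simp
    obtain ⟨d, hd⟩ := σ.exists_pot f hf hw hx
    have hsucc : σ.Succ x g (g * s) := ⟨hg, hgs, hne, by
      intro k hk h1 h2
      rw [hM] at hk
      rcases hk with hk | hk
      · exact (h1 hk).elim
      · exact (h2 hk).elim⟩
    rw [hb x hx g hg _ hgs, hc x d hx hd g hg _ hgs, hd _ _ hsucc]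
    simp
  have hmul : ∀ k g, b (k * g) = b k * (b 1)⁻¹ * b g := by
    intro k g
    have := σ.conn_edge (fun g => b (k * g) * (b g)⁻¹) (by
      intro g s hs
      simp only [← mul_assoc]
      rw [hbs _ s hs, hbs _ s hs]
      group) g 1
    simp only [mul_one] at this
    rw [← this]; simp
  refine ⟨⟨⟨fun g => (b 1)⁻¹ * b g, by simp⟩, fun g h => ?_⟩, fun s hs => ?_⟩
  · simp only [hmul g h]; group
  · have := hbs 1 s hs
    simp only [one_mul] at this
    show (b 1)⁻¹ * b s = f s
    rw [this]; simp

end Sys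
end Hyp
end

section
open scoped Topology

namespace Hyp

def P (w : ℝ × ℝ) : V3 := (1 + w.1, w.2, 1 - w.1)

theorem P_zero : P 0 = I0 := by simp [P, I0]
theorem cont_P : Continuous P := by unfold P; fun_prop
theorem P_B_smul (u : ℝ) (w : ℝ × ℝ) (X : V3) :
    B (P (u • w)) X = (1 - u) * B I0 X + u * B (P w) X := by simp [P, B, I0]; ring
theorem P_tr (w : ℝ × ℝ) : B I0 (P w) = 2 := by simp [P, B, I0]; ring
theorem P_comb (a b : ℝ) (h : a + b = 1) (w w' : ℝ × ℝ) :
    P (a • w + b • w') = a • P w + b • P w' := by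
  have : a = 1 - b := by linarith
  subst this
  refine Prod.ext ?_ (Prod.ext ?_ ?_) <;> simp [P] <;> ring
theorem P_inj {w w' : ℝ × ℝ} (h : P w = P w') : w = w' := by
  have h1 := congrArg (fun x : V3 => x.1) h
  have h2 := congrArg (fun x : V3 => x.2.1) h
  simp only [P] at h1 h2
  exact Prod.ext (by linarith) h2
theorem exists_P {X : V3} (hX : Cone X) : ∃ w : ℝ × ℝ, X = (B I0 X / 2) • P w := by
  have h1 := hX.1
  have h2 := hX.z_pos
  refine ⟨((X.1 - X.2.2) / (X.1 + X.2.2), 2 * X.2.1 / (X.1 + X.2.2)), ?_⟩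
  have : X.1 + X.2.2 ≠ 0 := by positivity
  refine Prod.ext ?_ (Prod.ext ?_ ?_) <;> simp [P, B, I0] <;> field_simp <;> ring

namespace Sys
variable {G : Type} [Group G] (σ : Sys G)

theorem d_pos {k : G} (hk : k ≠ 1) : B I0 I0 < B I0 (σ.v k) := by
  have := B_gt_two (σ.v_cone 1) (σ.v_cone k) (σ.v_Q 1) (σ.v_Q k) (σ.v_inj.ne hk.symm)
  rw [σ.v_one] at this
  have e : B I0 I0 = 2 := by simp [B, I0]; norm_num
  rw [e]; exact this

/-- the side of the Dirichlet domain shared with `s`. -/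
def Kd (s : G) : Set (ℝ × ℝ) := {w | Cone (P w) ∧ 1 ∈ σ.Mn (P w) ∧ s ∈ σ.Mn (P w)}

theorem between {s : G} {x y z : V3} (hx : σ.SuccV x 1 s) (hy : σ.SuccV y s 1) (hz : Cone z)
    (h1 : 1 ∈ σ.Mn z) (hs : s ∈ σ.Mn z) : ∃ a b : ℝ, 0 ≤ a ∧ 0 ≤ b ∧ z = a • x + b • y := by
  obtain ⟨cx, sx, k, hk, hk1, hks⟩ := hx
  obtain ⟨cy, sy, j, hj, hjs, hj1⟩ := hy
  have hne := sx.2.2.1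
  obtain ⟨c, t, hc, ez⟩ := σ.bisector cx hz hne (σ.mn_eq sx.1 sx.2.1) (σ.mn_eq h1 hs)
  obtain ⟨c', t', hc', ey⟩ := σ.bisector cx cy hne (σ.mn_eq sx.1 sx.2.1) (σ.mn_eq sy.2.1 sy.1)
  have dk := sx.2.2.2 k hk hk1 hks
  have dj := sy.2.2.2 j hj hjs hj1
  rw [D3_swap12] at dj
  have hz1 : ∀ l, B x (σ.v 1) ≤ B x (σ.v l) + t * D3 (σ.v 1) (σ.v s) (σ.v l) := by
    intro l
    have := h1
    rw [ez, σ.mn_smul hc] at this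
    have := this l
    rw [B_add, B_smul, B_dv, B_add, B_smul, B_dv] at this
    have e : D3 (σ.v 1) (σ.v s) (σ.v 1) = 0 := by simp [D3]; ring
    rw [e] at this
    linarith
  have hyj : B x (σ.v j) + t' * D3 (σ.v 1) (σ.v s) (σ.v j) = B x (σ.v 1) := by
    have a1 := hj
    have a2 := sy.2.1
    rw [ey, σ.mn_smul hc'] at a1 a2
    have := σ.mn_eq a1 a2
    rw [B_add, B_smul, B_dv, B_add, B_smul, B_dv] at this
    have e : D3 (σ.v 1) (σ.v s) (σ.v 1) = 0 := by simp [D3]; ring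
    rw [e] at this
    linarith
  have ht : 0 ≤ t := by
    have a := hz1 k
    have b := σ.mn_eq hk sx.1
    rw [b] at a
    by_contra hn; push Not at hn; nlinarith
  have htt : t ≤ t' := by
    have a := hz1 j
    by_contra hn; push Not at hn; nlinarith
  by_cases ht' : t' = 0
  · have : t = 0 := by linarith
    exact ⟨c, 0, hc.le, le_refl _, by rw [ez, this]; simp⟩
  have hp : 0 < t' := lt_of_le_of_ne (ht.trans htt) (Ne.symm ht')
  refine ⟨c * (1 - t / t'), c * (t / t') * c'⁻¹, ?_, by positivity, ?_⟩
  · have : t / t' ≤ 1 := (div_le_one hp).mpr htt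
    exact mul_nonneg hc.le (by linarith)
  · rw [ey, ez, smul_smul, mul_assoc _ c'⁻¹ c', inv_mul_cancel₀ hc'.ne', mul_one, smul_add,
      smul_smul, smul_add, smul_smul, ← add_assoc, ← add_smul]
    congr 2
    · ring
    · field_simp

theorem Kd_convex (s : G) : Convex ℝ (σ.Kd s) := by
  rintro w ⟨h1, h2, h3⟩ w' ⟨h1', h2', h3'⟩ a b ha hb hab
  have hc : Cone (P (a • w + b • w')) := by
    rw [P_comb a b hab]
    rcases ha.eq_or_lt with e | e
    · rw [← e] at hab ⊢
      have : b = 1 := by linarith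
      simpa [this] using h1'
    rcases hb.eq_or_lt with e' | e'
    · rw [← e'] at hab ⊢
      have : a = 1 := by linarith
      simpa [this] using h1
    exact (h1.smul e).add (h1'.smul e')
  have key : ∀ k, k ∈ σ.Mn (P w) → k ∈ σ.Mn (P w') → k ∈ σ.Mn (P (a • w + b • w')) := by
    intro k hk hk' j
    rw [P_comb a b hab, B_add, B_add, B_smul, B_smul, B_smul, B_smul]
    have := mul_le_mul_of_nonneg_left (hk j) ha
    have := mul_le_mul_of_nonneg_left (hk' j) hb
    linarith
  exact ⟨hc, key 1 h2 h2', key s h3 h3'⟩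

theorem succV_smul {c : ℝ} (hc : 0 < c) {x : V3} {g h : G} (hs : σ.SuccV (c • x) g h) :
    σ.SuccV x g h := by
  obtain ⟨h1, h2, h3⟩ := hs
  rw [σ.succ_smul hc] at h2
  rw [σ.mn_smul hc] at h3
  refine ⟨?_, h2, h3⟩
  have := h1.smul (inv_pos.mpr hc)
  rwa [smul_smul, inv_mul_cancel₀ hc.ne', one_smul] at this

theorem tr_pos {X : V3} (hX : Cone X) : 0 < B I0 X / 2 := by
  have := cone_B_pos cone_I0 hX
  linarith

theorem succV_P {x : V3} {g h : G} (hs : σ.SuccV x g h) : ∃ w, σ.SuccV (P w) g h := by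
  obtain ⟨w, hw⟩ := exists_P hs.1
  have hc := tr_pos hs.1
  rw [hw] at hs
  exact ⟨w, σ.succV_smul hc hs⟩

theorem Kd_compact {s : G} (hs : s ∈ σ.Del) (hs' : s⁻¹ ∈ σ.Del) : IsCompact (σ.Kd s) := by
  obtain ⟨x, hx⟩ := hs
  obtain ⟨y, hy⟩ := hs'
  have hy2 := σ.succV_act s hy
  rw [mul_one, mul_inv_cancel] at hy2
  obtain ⟨wx, hwx⟩ := σ.succV_P hx
  obtain ⟨wy, hwy⟩ := σ.succV_P hy2
  have : σ.Kd s = segment ℝ wx wy := by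
    apply Set.Subset.antisymm
    · rintro w ⟨h1, h2, h3⟩
      obtain ⟨a, b, ha, hb, e⟩ := σ.between hwx hwy h1 h2 h3
      have hab : a + b = 1 := by
        have := P_tr w
        rw [e, B_add', B_smul', B_smul', P_tr, P_tr] at this
        linarith
      rw [← P_comb a b hab] at e
      exact ⟨a, b, ha, hb, hab, (P_inj e).symm⟩
    · apply (σ.Kd_convex s).segment_subset
      · exact ⟨hwx.1, hwx.2.1.1, hwx.2.1.2.1⟩
      · exact ⟨hwy.1, hwy.2.1.2.1, hwy.2.1.1⟩
  rw [this, segment_eq_image_lineMap]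
  exact isCompact_Icc.image (AffineMap.lineMap_continuous)

theorem Kd_ne {s : G} (hs : s ≠ 1) {w : ℝ × ℝ} (hw : w ∈ σ.Kd s) : w ≠ 0 := by
  rintro rfl
  have h := σ.mn_eq hw.2.1 hw.2.2
  rw [P_zero, σ.v_one] at h
  exact (σ.d_pos hs).ne h

def Uset (C : Set G) : Set (ℝ × ℝ) := {w | ∃ u : ℝ, 0 < u ∧ ∃ s ∈ C, u • w ∈ σ.Kd s}

theorem cone_closed {K : Set (ℝ × ℝ)} (hK : IsCompact K) :
    IsClosed {w : ℝ × ℝ | ∃ k ∈ K, ‖k‖ • w = ‖w‖ • k} := by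
  have : CompactSpace K := isCompact_iff_compactSpace.mp hK
  have h1 : IsClosed {q : (ℝ × ℝ) × K | ‖(q.2 : ℝ × ℝ)‖ • q.1 = ‖q.1‖ • (q.2 : ℝ × ℝ)} := by
    apply isClosed_eq <;> fun_prop
  have h2 := isClosedMap_fst_of_compactSpace (X := ℝ × ℝ) (Y := K) _ h1
  convert h2 using 1
  ext w
  constructor
  · rintro ⟨k, hk, e⟩
    exact ⟨(w, ⟨k, hk⟩), e, rfl⟩
  · rintro ⟨⟨w', k⟩, e, rfl⟩
    exact ⟨k, k.2, e⟩

theorem Uset_eq {C : Set G} (hC1 : ∀ s ∈ C, s ≠ 1) {w : ℝ × ℝ} (hw : w ≠ 0) :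
    w ∈ σ.Uset C ↔ w ∈ ⋃ s ∈ C, {w : ℝ × ℝ | ∃ k ∈ σ.Kd s, ‖k‖ • w = ‖w‖ • k} := by
  simp only [Set.mem_iUnion]
  have hwn : 0 < ‖w‖ := norm_pos_iff.mpr hw
  constructor
  · rintro ⟨u, hu, s, hs, hk⟩
    refine ⟨s, hs, u • w, hk, ?_⟩
    rw [norm_smul, Real.norm_of_nonneg hu.le, smul_smul, mul_comm]
  · rintro ⟨s, hs, k, hk, e⟩
    refine ⟨‖k‖ / ‖w‖, div_pos (norm_pos_iff.mpr (σ.Kd_ne (hC1 s hs) hk)) hwn, s, hs, ?_⟩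
    rw [div_eq_inv_mul, ← smul_smul, e, smul_smul, inv_mul_cancel₀ hwn.ne', one_smul]
    exact hk

theorem local_adj {C : Set G} (hCD : C ⊆ σ.Del) (hCi : ∀ s ∈ C, s⁻¹ ∈ σ.Del)
    (hn : ∀ r ∈ σ.Del, σ.phi r ∈ C → r⁻¹ ∈ C) (hm : ∀ s ∈ C, σ.phi s⁻¹ ∈ C)
    {e : V3} (he : Cone e) {s k : G} (hs : s ∈ C) (h1 : 1 ∈ σ.Mn e) (hse : s ∈ σ.Mn e)
    (hk : σ.Succ e 1 k ∨ σ.Succ e k 1) : k ∈ C := by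
  obtain ⟨x, hx⟩ := hCD hs
  have hne := hx.2.1.2.2.1
  have hs2 : σ.Succ e 1 s ∨ σ.Succ e s 1 := by
    rcases σ.two_pts hx.1 he hne hx.2.1.1 hx.2.1.2.1 h1 hse with h | h | h
    · obtain ⟨c, hc, rfl⟩ := h
      left; rw [σ.succ_smul hc]; exact hx.2.1
    · exact Or.inr h.2
    · exact Or.inl h.2
  by_cases h3 : ∃ j ∈ σ.Mn e, j ≠ 1 ∧ j ≠ s
  swap
  · push Not at h3
    have : k = s := by
      rcases hk with hk | hk
      · exact h3 k hk.2.1 hk.2.2.1.symm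
      · exact h3 k hk.1 hk.2.2.1
    rw [this]; exact hs
  obtain ⟨j, hj, hj1, hjs⟩ := h3
  rcases hs2 with hs2 | hs2
  · have hV : σ.SuccV e 1 s := ⟨he, hs2, j, hj, hj1, hjs⟩
    rcases hk with hk | hk
    · rw [σ.succ_unique hk hs2]; exact hs
    · have hkV := SuccV.of_succ σ hV hk
      have h4 := σ.succV_act_inv hkV
      rw [mul_one] at h4
      have hD : k⁻¹ ∈ σ.Del := ⟨_, h4⟩
      have h5 := σ.phi_spec (x := e) (g := k) (s := k⁻¹) (by simpa using hkV)
      rw [mul_inv_cancel, one_mul] at h5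
      have h6 := σ.succ_unique h5.2.1 hs2
      have := hn k⁻¹ hD (by rw [h6]; exact hs)
      simpa using this
  · have hV : σ.SuccV e s 1 := ⟨he, hs2, j, hj, hjs, hj1⟩
    rcases hk with hk | hk
    · have h5 := σ.phi_spec (x := e) (g := s) (s := s⁻¹) (by simpa using hV)
      rw [mul_inv_cancel, one_mul] at h5
      rw [σ.succ_unique hk h5.2.1]
      exact hm s hs
    · rw [σ.pred_unique hk hs2]; exact hs

theorem Uset_nhds {C : Set G} (hCD : C ⊆ σ.Del) (hCi : ∀ s ∈ C, s⁻¹ ∈ σ.Del)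
    (hn : ∀ r ∈ σ.Del, σ.phi r ∈ C → r⁻¹ ∈ C) (hm : ∀ s ∈ C, σ.phi s⁻¹ ∈ C)
    {q : ℝ × ℝ} {s : G} (hs : s ∈ C) (hq : q ∈ σ.Kd s) : ∀ᶠ w in 𝓝 q, w ∈ σ.Uset C := by
  obtain ⟨hqc, hq1, hqs⟩ := hq
  have hs1 : s ≠ 1 := by
    obtain ⟨x, hx⟩ := hCD hs
    exact hx.2.1.2.2.1.symm
  have hfin : (σ.Mn (P q) \ {1}).Finite := (σ.mn_finite hqc).subset Set.sdiff_subset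
  let d : G → ℝ := fun k => B I0 (σ.v k) - B I0 I0
  let ee : G → ℝ × ℝ → ℝ := fun k w => B (P w) (σ.v k) - B (P w) I0
  have eec : ∀ k, Continuous (ee k) := fun k =>
    ((cont_B _).comp cont_P).sub ((cont_B _).comp cont_P)
  have ees : ∀ k u w, ee k (u • w) = d k - u * (d k - ee k w) := by
    intro k u w
    simp only [ee, d, P_B_smul]; ring
  let lam : G → ℝ × ℝ → ℝ := fun k w => d k / (d k - ee k w)
  have hall : ∀ᶠ w in 𝓝 q, ∀ k ∈ σ.Mn (P q) \ {1}, 0 < lam k w ∧ 0 < d k - ee k w ∧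
      Cone (P (lam k w • w)) ∧ σ.Mn (P (lam k w • w)) ⊆ σ.Mn (P q) := by
    rw [Filter.eventually_all_finite hfin]
    rintro k ⟨hk, hk1⟩
    have hd : 0 < d k := by have := σ.d_pos hk1; simp only [d]; linarith
    have e0 : ee k q = 0 := by
      have := σ.mn_eq hk hq1
      rw [σ.v_one] at this
      simp only [ee]; linarith
    have l1 : lam k q = 1 := by simp only [lam, e0, sub_zero]; exact div_self hd.ne'
    have c1 : ContinuousAt (fun w => d k - ee k w) q := (continuous_const.sub (eec k)).continuousAt
    have c2 : ContinuousAt (lam k) q :=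
      continuousAt_const.div c1 (by rw [e0]; linarith)
    have c3 : ContinuousAt (fun w => P (lam k w • w)) q :=
      cont_P.continuousAt.comp (c2.smul continuousAt_id)
    have t3 := c3.tendsto
    simp only [l1, one_smul] at t3
    have t2 := c2.tendsto
    rw [l1] at t2
    have t1 := c1.tendsto
    simp only [e0, sub_zero] at t1
    filter_upwards [t3.eventually (σ.ev_sub hqc), t2.eventually (lt_mem_nhds one_pos),
      t1.eventually (lt_mem_nhds hd)] with w a1 a2 a3
    exact ⟨a2, a3, a1⟩
  filter_upwards [hall] with w hw
  obtain ⟨k, hk, hmin⟩ := Set.exists_min_image _ (fun k => lam k w) hfin ⟨s, hqs, hs1⟩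
  obtain ⟨p1, p2, p3, p4⟩ := hw k hk
  have h1 : 1 ∈ σ.Mn (P (lam k w • w)) := by
    obtain ⟨j, hj⟩ := σ.mn_nonempty p3
    by_cases hj1 : j = 1
    · rw [← hj1]; exact hj
    have hjm : j ∈ σ.Mn (P q) \ {1} := ⟨p4 hj, hj1⟩
    have a1 := hmin j hjm
    have a2 := (hw j hjm).2.1
    have a3 : 0 ≤ ee j (lam k w • w) := by
      rw [ees]
      have : lam k w * (d j - ee j w) ≤ d j := by
        have a1 : lam k w ≤ d j / (d j - ee j w) := a1
        rwa [le_div_iff₀ a2] at a1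
      linarith
    apply σ.mn_of_eq hj
    rw [σ.v_one]
    have a4 := hj 1
    rw [σ.v_one] at a4
    simp only [ee] at a3
    linarith
  have hkm : k ∈ σ.Mn (P (lam k w • w)) := by
    apply σ.mn_of_eq h1
    have a3 : ee k (lam k w • w) = 0 := by
      rw [ees]
      have : lam k w * (d k - ee k w) = d k := div_mul_cancel₀ _ p2.ne'
      linarith
    rw [σ.v_one]
    simp only [ee] at a3
    linarith
  rcases σ.two_pts hqc p3 (Ne.symm hk.2) hq1 hk.1 h1 hkm with h | h | h
  · obtain ⟨c, hc, e⟩ := h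
    have : c = 1 := by
      have h1 := P_tr (lam k w • w)
      rw [e, B_smul', P_tr] at h1
      linarith
    rw [this, one_smul] at e
    exact ⟨lam k w, p1, s, hs, by rw [P_inj e]; exact ⟨hqc, hq1, hqs⟩⟩
  · exact ⟨lam k w, p1, k, σ.local_adj hCD hCi hn hm hqc hs hq1 hqs (Or.inl h.1), p3, h1, hkm⟩
  · exact ⟨lam k w, p1, k, σ.local_adj hCD hCi hn hm hqc hs hq1 hqs (Or.inr h.1), p3, h1, hkm⟩

theorem dich_cover {C : Set G} (hfin : C.Finite) (hne : C.Nonempty) (hCD : C ⊆ σ.Del)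
    (hCi : ∀ s ∈ C, s⁻¹ ∈ σ.Del)
    (hn : ∀ r ∈ σ.Del, σ.phi r ∈ C → r⁻¹ ∈ C) (hm : ∀ s ∈ C, σ.phi s⁻¹ ∈ C)
    (w : ℝ × ℝ) (hw : w ≠ 0) : w ∈ σ.Uset C := by
  have hs1 : ∀ s ∈ C, s ≠ 1 := by
    intro s hs
    obtain ⟨x, hx⟩ := hCD hs
    exact hx.2.1.2.2.1.symm
  have hopen : IsOpen (σ.Uset C) := by
    rw [isOpen_iff_mem_nhds]
    rintro w ⟨u, hu, s, hs, hk⟩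
    have h1 := σ.Uset_nhds hCD hCi hn hm hs hk
    have hc : Continuous fun w : ℝ × ℝ => u • w := by fun_prop
    have h2 := hc.continuousAt.tendsto.eventually h1
    filter_upwards [h2] with w' hw'
    obtain ⟨u', hu', s', hs', hk'⟩ := hw'
    rw [smul_smul] at hk'
    exact ⟨u' * u, mul_pos hu' hu, s', hs', hk'⟩
  have hclosed : IsClosed (⋃ s ∈ C, {w : ℝ × ℝ | ∃ k ∈ σ.Kd s, ‖k‖ • w = ‖w‖ • k}) :=
    hfin.isClosed_biUnion fun s hs => cone_closed (σ.Kd_compact (hCD hs) (hCi s hs))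
  have hconn : IsPreconnected ({0}ᶜ : Set (ℝ × ℝ)) :=
    (isConnected_compl_singleton_of_one_lt_rank (by
      rw [← Module.finrank_eq_rank]; simp) 0).isPreconnected
  have := isPreconnected_iff_subset_of_disjoint.mp hconn _ _ hopen hclosed.isOpen_compl
    (by
      intro w hw
      by_cases h : w ∈ σ.Uset C
      · exact Or.inl h
      · exact Or.inr fun h' => h ((σ.Uset_eq hs1 hw).mpr h'))
    (by
      rw [Set.eq_empty_iff_forall_notMem]
      rintro w ⟨h1, h2, h3⟩
      exact h3 ((σ.Uset_eq hs1 h1).mp h2))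
  rcases this with h | h
  · exact h hw
  · exfalso
    obtain ⟨s, hs⟩ := hne
    obtain ⟨x, hx⟩ := hCD hs
    obtain ⟨q, hq⟩ := σ.succV_P hx
    have hqK : q ∈ σ.Kd s := ⟨hq.1, hq.2.1.1, hq.2.1.2.1⟩
    have hq0 := σ.Kd_ne (hs1 s hs) hqK
    apply h hq0
    rw [← σ.Uset_eq hs1 hq0]
    exact ⟨1, one_pos, s, hs, by simpa using hqK⟩

theorem exit_ge {w : ℝ × ℝ} {u : ℝ} (hu0 : 0 < u) {s : G} (hs : s ≠ 1) (h : u • w ∈ σ.Kd s)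
    (h1 : 1 ∈ σ.Mn (P w)) : 1 ≤ u := by
  have a := σ.mn_eq h.2.1 h.2.2
  have b := h1 s
  have d := σ.d_pos hs
  rw [P_B_smul, P_B_smul] at a
  rw [σ.v_one] at a b
  by_contra hu
  push Not at hu
  nlinarith [mul_pos (sub_pos.mpr hu) (sub_pos.mpr d), mul_nonneg hu0.le (sub_nonneg.mpr b)]

theorem exit_le {w : ℝ × ℝ} {u : ℝ} {k : G} (hk : k ≠ 1) (h : w ∈ σ.Kd k)
    (h1 : 1 ∈ σ.Mn (P (u • w))) : u ≤ 1 := by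
  have a := σ.mn_eq h.2.1 h.2.2
  have b := h1 k
  have d := σ.d_pos hk
  rw [P_B_smul, P_B_smul] at b
  rw [σ.v_one] at a b
  by_contra hu
  push Not at hu
  nlinarith

theorem dich {C : Set G} (hfin : C.Finite) (hne : C.Nonempty) (hCD : C ⊆ σ.Del)
    (hCi : ∀ s ∈ C, s⁻¹ ∈ σ.Del)
    (hn : ∀ r ∈ σ.Del, σ.phi r ∈ C → r⁻¹ ∈ C) (hm : ∀ s ∈ C, σ.phi s⁻¹ ∈ C) :
    C = σ.S := by
  apply Set.Subset.antisymm (hCD.trans σ.Del_sub)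
  rintro k ⟨z, hz, hM, hk1⟩
  obtain ⟨w, hw⟩ := exists_P hz
  have hc := tr_pos hz
  rw [hw, σ.mn_smul hc] at hM
  have hwc : Cone (P w) := by
    have := hz.smul (inv_pos.mpr hc)
    rwa [hw, smul_smul, ← hw, inv_mul_cancel₀ hc.ne', one_smul] at this
  have hK : w ∈ σ.Kd k := ⟨hwc, by rw [hM]; simp, by rw [hM]; simp⟩
  obtain ⟨u, hu, s, hs, hsK⟩ := σ.dich_cover hfin hne hCD hCi hn hm w (σ.Kd_ne hk1.symm hK)
  have hs1 : s ≠ 1 := by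
    obtain ⟨x, hx⟩ := hCD hs
    exact hx.2.1.2.2.1.symm
  have h1 := σ.exit_ge hu hs1 hsK hK.2.1
  have h2 := σ.exit_le hk1.symm hK hsK.2.1
  have : u = 1 := le_antisymm h2 h1
  rw [this, one_smul] at hsK
  have h3 := hsK.2.2
  rw [hM] at h3
  rcases h3 with h3 | h3
  · exact (hs1 h3).elim
  · rw [Set.mem_singleton_iff] at h3
    rw [← h3]; exact hs

theorem Q_P (w : ℝ × ℝ) : Q (P w) = 1 - (w.1 ^ 2 + w.2 ^ 2) := by simp [Q, P]; ring

theorem dich_bdd {C : Set G} (hfin : C.Finite) (hne : C.Nonempty) (hCD : C ⊆ σ.Del)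
    (hCi : ∀ s ∈ C, s⁻¹ ∈ σ.Del)
    (hn : ∀ r ∈ σ.Del, σ.phi r ∈ C → r⁻¹ ∈ C) (hm : ∀ s ∈ C, σ.phi s⁻¹ ∈ C) :
    ∃ δ : ℝ, 0 < δ ∧ ∀ X, Cone X → 1 ∈ σ.Mn X → δ * (B I0 X) ^ 2 ≤ Q X := by
  have hK : IsCompact (⋃ s ∈ C, σ.Kd s) :=
    hfin.isCompact_biUnion fun s hs => σ.Kd_compact (hCD hs) (hCi s hs)
  have hKne : (⋃ s ∈ C, σ.Kd s).Nonempty := by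
    obtain ⟨s, hs⟩ := hne
    obtain ⟨x, hx⟩ := hCD hs
    obtain ⟨q, hq⟩ := σ.succV_P hx
    exact ⟨q, Set.mem_biUnion hs ⟨hq.1, hq.2.1.1, hq.2.1.2.1⟩⟩
  obtain ⟨m, hmK, hmin⟩ := hK.exists_isMinOn hKne (cont_Q.comp cont_P).continuousOn
  have hm0 : 0 < Q (P m) := by
    simp only [Set.mem_iUnion] at hmK
    obtain ⟨s, _, hs⟩ := hmK
    exact hs.1.2
  have hm1 : Q (P m) ≤ 1 := by rw [Q_P]; nlinarith [sq_nonneg m.1, sq_nonneg m.2]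
  refine ⟨Q (P m) / 4, by linarith, fun X hX h1 => ?_⟩
  obtain ⟨w, hw⟩ := exists_P hX
  have hc := tr_pos hX
  have key : Q (P m) ≤ Q (P w) := by
    by_cases hw0 : w = 0
    · rw [hw0, Q_P 0]; simpa using hm1
    rw [hw, σ.mn_smul hc] at h1
    obtain ⟨u, hu, s, hs, hsK⟩ := σ.dich_cover hfin hne hCD hCi hn hm w hw0
    have hs1 : s ≠ 1 := by
      obtain ⟨x, hx⟩ := hCD hs
      exact hx.2.1.2.2.1.symm
    have h2 := σ.exit_ge hu hs1 hsK h1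
    have h3 : Q (P m) ≤ Q (P (u • w)) := hmin (Set.mem_biUnion hs hsK)
    rw [Q_P w]
    rw [Q_P (u • w)] at h3
    simp only [Prod.smul_fst, Prod.smul_snd, smul_eq_mul] at h3
    have : w.1 ^ 2 + w.2 ^ 2 ≤ (u * w.1) ^ 2 + (u * w.2) ^ 2 := by
      have : 1 ≤ u ^ 2 := by nlinarith
      nlinarith [sq_nonneg w.1, sq_nonneg w.2]
    linarith
  have e : Q X = (B I0 X / 2) ^ 2 * Q (P w) := by
    conv_lhs => rw [hw, Q_smul]
  rw [e]
  nlinarith [sq_nonneg (B I0 X)]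

end Sys
end Hyp
end

section
open scoped Topology

namespace Hyp
namespace Sys
variable {G : Type} [Group G] (σ : Sys G)

theorem quad_bound (A : V3 →ₗ[ℝ] V3) :
    ∃ M : ℝ, 0 ≤ M ∧ ∀ Y, Cone Y → B (A Y) Y ≤ M * (B I0 Y) ^ 2 := by
  have hA : Continuous A := A.continuous_of_finiteDimensional
  have hc : Continuous fun w : ℝ × ℝ => B (A (P w)) (P w) := by
    have h1 : Continuous fun w => A (P w) := hA.comp cont_P
    have h2 := cont_P
    unfold B
    fun_prop
  obtain ⟨M, hM⟩ := (isCompact_closedBall (0 : ℝ × ℝ) 1).exists_bound_of_continuousOn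
    hc.continuousOn
  have hM0 : 0 ≤ M := le_trans (norm_nonneg _) (hM 0 (by simp))
  refine ⟨M / 4, by positivity, fun Y hY => ?_⟩
  obtain ⟨w, hw⟩ := exists_P hY
  have ht := tr_pos hY
  have hq : 0 < Q (P w) := by
    have h1 := hY.2
    rw [hw, Q_smul] at h1
    exact (pos_iff_pos_of_mul_pos h1).mp (by positivity)
  rw [Q_P] at hq
  have hwb : w ∈ Metric.closedBall (0 : ℝ × ℝ) 1 := by
    rw [mem_closedBall_zero_iff, Prod.norm_def, max_le_iff]
    constructor
    · rw [Real.norm_eq_abs, ← sq_le_one_iff_abs_le_one]; nlinarith [sq_nonneg w.2]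
    · rw [Real.norm_eq_abs, ← sq_le_one_iff_abs_le_one]; nlinarith [sq_nonneg w.1]
  have h1 := (abs_le.mp (hM w hwb)).2
  have e : B (A Y) Y = (B I0 Y / 2) ^ 2 * B (A (P w)) (P w) := by
    conv_lhs => rw [hw]
    rw [map_smul, B_smul, B_smul']; ring
  rw [e]
  nlinarith [sq_nonneg (B I0 Y)]

theorem null_eig (A : V3 →ₗ[ℝ] V3) (hB : ∀ X Y, B (A X) (A Y) = B X Y)
    (hcone : ∀ X, Cone X → Cone (A X)) {M : ℝ} (hM : ∀ X, Cone X → B (A X) X ≤ M * Q X) (t : ℝ) :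
    ∃ α : ℝ, A (1, t, t ^ 2) = α • ((1, t, t ^ 2) : V3) := by
  have hA : Continuous A := A.continuous_of_finiteDimensional
  let X : ℝ → V3 := fun ε => (1, t, t ^ 2 + ε)
  have hX : Continuous X := by fun_prop
  have hXc : ∀ ε, 0 < ε → Cone (X ε) := fun ε h => ⟨by simp [X], by simp [X, Q, h]⟩
  have hc : Continuous fun ε => B (A (X ε)) (X ε) := by
    have h1 : Continuous fun w => A (X w) := hA.comp hX
    unfold B
    fun_prop
  have hc2 : Continuous fun ε => M * Q (X ε) := continuous_const.mul (cont_Q.comp hX)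
  have e0 : X 0 = (1, t, t ^ 2) := by simp [X]
  have h1 : B (A (X 0)) (X 0) ≤ M * Q (X 0) := by
    apply le_of_tendsto_of_tendsto ((hc.tendsto 0).mono_left (nhdsWithin_le_nhds (s := Set.Ioi 0)))
      ((hc2.tendsto 0).mono_left nhdsWithin_le_nhds)
    filter_upwards [self_mem_nhdsWithin] with ε hε using hM _ (hXc ε hε)
  have h2 : 0 ≤ B (A (X 0)) (X 0) := by
    apply ge_of_tendsto ((hc.tendsto 0).mono_left (nhdsWithin_le_nhds (s := Set.Ioi 0)))
    filter_upwards [self_mem_nhdsWithin] with ε hε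
    exact (cone_B_pos (hcone _ (hXc ε hε)) (hXc ε hε)).le
  rw [e0] at h1 h2
  have hq : Q ((1, t, t ^ 2) : V3) = 0 := by simp [Q]
  rw [hq, mul_zero] at h1
  have h3 : B (A (1, t, t ^ 2)) (1, t, t ^ 2) = 0 := le_antisymm h1 h2
  have h4 : Q (A (1, t, t ^ 2)) = 0 := by
    have := hB (1, t, t ^ 2) (1, t, t ^ 2)
    rw [B_self, B_self, hq] at this
    linarith
  generalize A (1, t, t ^ 2) = m at *
  obtain ⟨p, q, r⟩ := m
  simp only [B, Q] at h3 h4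
  refine ⟨p, ?_⟩
  have hqp : q = p * t := by
    by_cases hp : p = 0
    · subst hp
      have : q ^ 2 = 0 := by linarith
      simpa using this
    · have : (q - p * t) ^ 2 = 0 := by
        linear_combination p * h3 - h4
      have := pow_eq_zero_iff (two_ne_zero) |>.mp this
      linarith
  have hr : r = p * t ^ 2 := by rw [hqp] at h3; linear_combination h3
  simp [hqp, hr]

theorem comm_trivial (hcomm : ∀ g h : G, g * h = h * g) {δ : ℝ} (hδ : 0 < δ)
    (hb : ∀ X, Cone X → 1 ∈ σ.Mn X → δ * (B I0 X) ^ 2 ≤ Q X) (g : G) : g = 1 := by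
  set A := σ.act g with hA
  obtain ⟨M, hM0, hM⟩ := quad_bound A
  have hbd : ∀ X, Cone X → B (A X) X ≤ (M / δ) * Q X := by
    intro X hX
    obtain ⟨h, hh⟩ := σ.mn_nonempty hX
    have h1 : 1 ∈ σ.Mn (σ.act h⁻¹ X) := by
      have := (σ.mn_act h⁻¹ h X).mpr hh
      simpa using this
    have hY := σ.act_cone h⁻¹ X hX
    have h2 := hM _ hY
    have h3 := hb _ hY h1
    have e1 : B (A (σ.act h⁻¹ X)) (σ.act h⁻¹ X) = B (A X) X := by
      rw [hA, ← σ.act_mul, hcomm, σ.act_mul, σ.act_B]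
    have e2 : Q (σ.act h⁻¹ X) = Q X := by
      have := σ.act_B h⁻¹ X X
      rw [B_self, B_self] at this; linarith
    rw [e1] at h2; rw [e2] at h3
    calc _ ≤ _ := h2
      _ = (M / δ) * (δ * B I0 (σ.act h⁻¹ X) ^ 2) := by field_simp
      _ ≤ _ := mul_le_mul_of_nonneg_left h3 (by positivity)
  have key := null_eig A (σ.act_B g) (σ.act_cone g) hbd
  obtain ⟨a, ha⟩ := key 0
  obtain ⟨b, hb'⟩ := key 1
  obtain ⟨c, hc⟩ := key (-1)
  obtain ⟨d, hd⟩ := key 2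
  have e1 : A (1, 2, 2 ^ 2) = (-3 : ℝ) • A (1, 0, 0 ^ 2) + (3 : ℝ) • A (1, 1, 1 ^ 2)
      + A (1, -1, (-1) ^ 2) := by
    rw [← map_smul, ← map_smul, ← map_add, ← map_add]
    congr 1
    refine Prod.ext ?_ (Prod.ext ?_ ?_) <;> simp <;> norm_num
  rw [ha, hb', hc, hd] at e1
  have e2 := congrArg (fun w : V3 => w.1) e1
  have e3 := congrArg (fun w : V3 => w.2.1) e1
  have e4 := congrArg (fun w : V3 => w.2.2) e1
  simp at e2 e3 e4
  have hbc : b = c := by linarith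
  have e5 : A I0 = b • I0 := by
    have : (I0 : V3) = (1 / 2 : ℝ) • ((1, 1, 1 ^ 2) : V3) + (1 / 2 : ℝ) • ((1, -1, (-1) ^ 2) : V3) := by
      refine Prod.ext ?_ (Prod.ext ?_ ?_) <;> simp [I0] <;> norm_num
    rw [this, map_add, map_smul, map_smul, hb', hc, ← hbc, smul_add, smul_comm b (1/2 : ℝ), smul_comm b (1/2 : ℝ)]
  have e6 : σ.v g = b • I0 := by
    have := σ.v_mul g 1
    rw [mul_one, σ.v_one] at this
    rw [this, ← hA, e5]
  have h1 := (σ.v_cone g).1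
  have h2 := σ.v_Q g
  rw [e6] at h1
  rw [e6, Q_smul] at h2
  simp [I0, Q] at h1 h2
  have : b = 1 := by
    rcases h2 with h | h
    · exact h
    · linarith
  apply σ.v_inj
  rw [e6, this, one_smul, σ.v_one]

end Sys
end Hyp
end

section
/-- A presentation-like structure: symmetric generating set `S`, relators `w t` in which every
letter occurs at most once. -/
structure WPres (G : Type) [Group G] where
  S : Set G
  T : Type
  w : T → List G
  inv_mem : ∀ s ∈ S, s⁻¹ ∈ S
  inv_ne : ∀ s ∈ S, s⁻¹ ≠ s
  w_sub : ∀ t, ∀ s ∈ w t, s ∈ S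
  nodup : ∀ t, (w t).Nodup
  disj : ∀ t t' s, s ∈ w t → s ∈ w t' → t = t'
  gen : Subgroup.closure S = ⊤
  rel : ∀ t, (w t).prod = 1
  univ : ∀ (K : Type) [Group K] (f : G → K), (∀ s ∈ S, f s⁻¹ = (f s)⁻¹) →
    (∀ t, ((w t).map f).prod = 1) → ∃ F : G →* K, ∀ s ∈ S, F s = f s

namespace WPres
variable {G : Type} [Group G] (σ : WPres G)

theorem free_of_wf (e : σ.T → G) (he : ∀ t, e t ∈ σ.w t)
    (hwf : WellFounded fun t' t => (e t')⁻¹ ∈ σ.w t) : IsFreeGroup G := by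
  classical
  let r : σ.T → σ.T → Prop := fun t' t => (e t')⁻¹ ∈ σ.w t
  have heinj : ∀ t t', e t = e t' → t = t' := fun t t' h =>
    σ.disj t t' (e t) (he t) (h ▸ he t')
  have hei : ∀ t t', e t ≠ (e t')⁻¹ := by
    intro t t' h
    have h1 : r t' t := by
      show (e t')⁻¹ ∈ σ.w t
      rw [← h]; exact he t
    have h2 : r t t' := by
      show (e t)⁻¹ ∈ σ.w t'
      rw [h, inv_inv]; exact he t'
    exact hwf.asymmetric t t' h2 h1
  let E : G → Prop := fun s => ∃ t, e t = s
  let X : Set G := {s | s ∈ σ.S ∧ ¬ E s ∧ ¬ E s⁻¹ ∧ WellOrderingRel s s⁻¹}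
  have hXinv : ∀ s ∈ X, s⁻¹ ∉ X := by
    intro s hs h
    have h1 := hs.2.2.2
    have h2 := h.2.2.2
    rw [inv_inv] at h2
    exact (asymm_of WellOrderingRel h1) h2
  have hXor : ∀ s ∈ σ.S, ¬ E s → ¬ E s⁻¹ → s ∈ X ∨ s⁻¹ ∈ X := by
    intro s hs h1 h2
    rcases trichotomous_of WellOrderingRel s s⁻¹ with h | h | h
    · exact Or.inl ⟨hs, h1, h2, h⟩
    · exact absurd h.symm (σ.inv_ne s hs)
    · exact Or.inr ⟨σ.inv_mem s hs, h2, by rwa [inv_inv], by rwa [inv_inv]⟩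
  have hsplit : ∀ t, ∃ P R, σ.w t = P ++ e t :: R := fun t => List.append_of_mem (he t)
  choose P R hPR using hsplit
  have hnE : ∀ t s, s ∈ P t ∨ s ∈ R t → ¬ E s := by
    rintro t s h ⟨t', rfl⟩
    have hm : e t' ∈ σ.w t := by
      rw [hPR]; simp; tauto
    have : t' = t := σ.disj _ _ _ (he t') hm
    subst this
    have hn := σ.nodup t'
    rw [hPR] at hn
    rw [List.nodup_append] at hn
    obtain ⟨_, h2, h3⟩ := hn
    rw [List.nodup_cons] at h2
    rcases h with h | h
    · exact h3 _ h _ (by simp) rfl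
    · exact h2.1 h
  have hPR_mem : ∀ t s, s ∈ P t ∨ s ∈ R t → s ∈ σ.w t := by
    intro t s h; rw [hPR]; simp; tauto
  refine IsFreeGroup.ofUniqueLift X (fun x => x.1) ?_
  intro H _ f
  let f0 : G → H := fun s => if h : s ∈ X then f ⟨s, h⟩ else
    if h : s⁻¹ ∈ X then (f ⟨s⁻¹, h⟩)⁻¹ else 1
  let ext : (σ.T → H) → G → H := fun c s =>
    if h : E s then c h.choose else if h : E s⁻¹ then (c h.choose)⁻¹ else f0 s
  have ext_e : ∀ c t, ext c (e t) = c t := by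
    intro c t
    have h : E (e t) := ⟨t, rfl⟩
    simp only [ext, dif_pos h]
    rw [heinj _ _ h.choose_spec]
  have f0_inv : ∀ s ∈ σ.S, f0 s⁻¹ = (f0 s)⁻¹ := by
    intro s hs
    simp only [f0, inv_inv]
    by_cases h1 : s ∈ X
    · simp [h1, hXinv s h1]
    · by_cases h2 : s⁻¹ ∈ X <;> simp [h1, h2]
  have ext_inv : ∀ c, ∀ s ∈ σ.S, ext c s⁻¹ = (ext c s)⁻¹ := by
    intro c s hs
    by_cases h1 : E s
    · have h2 : ¬ E s⁻¹ := by
        rintro ⟨t', h'⟩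
        obtain ⟨t, rfl⟩ := h1
        exact hei _ _ h'
      simp [ext, h1, h2]
    · by_cases h2 : E s⁻¹
      · simp [ext, h1, h2]
      · simp [ext, h1, h2, f0_inv s hs]
  let Φ : σ.T → (σ.T → H) → H := fun t c =>
    (((P t).map (ext c)).prod)⁻¹ * (((R t).map (ext c)).prod)⁻¹
  have hloc : ∀ t c c', (∀ t', r t' t → c t' = c' t') → Φ t c = Φ t c' := by
    intro t c c' h
    have key : ∀ s, s ∈ P t ∨ s ∈ R t → ext c s = ext c' s := by
      intro s hs
      have h1 := hnE t s hs
      by_cases h2 : E s⁻¹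
      · simp only [ext, dif_neg h1, dif_pos h2]
        rw [h]
        show (e _)⁻¹ ∈ σ.w t
        rw [h2.choose_spec, inv_inv]
        exact hPR_mem t s hs
      · simp only [ext, dif_neg h1, dif_neg h2]
    simp only [Φ]
    rw [List.map_congr_left (fun s hs => key s (Or.inl hs)),
      List.map_congr_left (fun s hs => key s (Or.inr hs))]
  let c : σ.T → H := hwf.fix fun t ih => Φ t fun t' => if h : r t' t then ih t' h else 1
  have hc : ∀ t, c t = Φ t c := by
    intro t
    have h1 : c t = Φ t fun t' => if h : r t' t then c t' else 1 := by
      simp only [c]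
      rw [hwf.fix_eq]
    rw [h1]
    refine hloc t (fun t' => if h : r t' t then c t' else 1) c ?_
    intro t' h
    simp only [dif_pos h]
  obtain ⟨F, hF⟩ := σ.univ H (ext c) (ext_inv c) (by
    intro t
    rw [hPR, List.map_append, List.prod_append, List.map_cons, List.prod_cons, ext_e, hc]
    simp only [Φ]
    group)
  refine ⟨F, ?_, ?_⟩
  · rintro ⟨s, hs⟩
    show F s = f ⟨s, hs⟩
    rw [hF s hs.1]
    simp only [ext, dif_neg hs.2.1, dif_neg hs.2.2.1, f0, dif_pos hs]
  · intro F' hF'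
    have hX' : ∀ s (h : s ∈ X), F' s = F s := by
      intro s h
      rw [hF' ⟨s, h⟩, hF s h.1]
      simp only [ext, dif_neg h.2.1, dif_neg h.2.2.1, f0, dif_pos h]
    have hnEq : ∀ s ∈ σ.S, ¬ E s → ¬ E s⁻¹ → F' s = F s := by
      intro s hs h1 h2
      rcases hXor s hs h1 h2 with h | h
      · exact hX' s h
      · have := hX' _ h
        simpa using this
    have hrel : ∀ (F : G →* H) t, F (e t) = (((P t).map F).prod)⁻¹ * (((R t).map F).prod)⁻¹ := by
      intro F t
      have := congrArg F (σ.rel t)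
      rw [hPR, map_list_prod, List.map_append, List.prod_append, List.map_cons, List.prod_cons,
        map_one] at this
      rw [eq_comm, inv_mul_eq_iff_eq_mul, eq_comm, ← mul_eq_one_iff_eq_inv, mul_assoc, this]
    have heq : ∀ t, F' (e t) = F (e t) := by
      intro t
      induction t using hwf.induction with
      | _ t ih =>
        have key : ∀ s, s ∈ P t ∨ s ∈ R t → F' s = F s := by
          intro s hs
          have h1 := hnE t s hs
          have hw := hPR_mem t s hs
          by_cases h2 : E s⁻¹
          · obtain ⟨t', ht'⟩ := h2
            have := ih t' (by rw [ht', inv_inv]; exact hw)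
            rw [ht'] at this
            simpa using this
          · exact hnEq s (σ.w_sub t s hw) h1 h2
        rw [hrel, hrel, List.map_congr_left (fun s hs => key s (Or.inl hs)),
          List.map_congr_left (fun s hs => key s (Or.inr hs))]
    refine MonoidHom.eq_of_eqOn_dense σ.gen ?_
    intro s hs
    by_cases h1 : E s
    · obtain ⟨t, rfl⟩ := h1
      exact heq t
    · by_cases h2 : E s⁻¹
      · obtain ⟨t, ht⟩ := h2
        have := heq t
        rw [ht] at this
        simpa using this
      · exact hnEq s hs h1 h2

/-- graph lemma: a rank function with no local maxima -/
theorem exists_rank {T : Type} (Gr : SimpleGraph T) (hlf : ∀ t, (Gr.neighborSet t).Finite)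
    (O : Set T) (hO : ∀ t, {u | Gr.Reachable t u}.Finite → ∃ u ∈ O, Gr.Reachable t u) :
    ∃ ρ : T → ℕ ×ₗ ℕ, ∀ t, t ∈ O ∨ ∃ t', Gr.Adj t t' ∧ ρ t < ρ t' := by
  classical
  have hroot : ∀ K : Gr.ConnectedComponent, ∃ o, Gr.connectedComponentMk o = K ∧
      ({u | Gr.Reachable o u}.Finite → o ∈ O) := by
    intro K
    induction K using SimpleGraph.ConnectedComponent.ind with
    | _ t =>
      by_cases h : {u | Gr.Reachable t u}.Finite
      · obtain ⟨u, hu, htu⟩ := hO t h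
        exact ⟨u, SimpleGraph.ConnectedComponent.sound htu.symm, fun _ => hu⟩
      · exact ⟨t, rfl, fun h' => absurd h' h⟩
  choose root hr1 hr2 using hroot
  let o : T → T := fun t => root (Gr.connectedComponentMk t)
  have ho : ∀ t, Gr.Reachable (o t) t := fun t => SimpleGraph.ConnectedComponent.exact (hr1 _)
  have ho' : ∀ t t', Gr.Reachable t t' → o t = o t' := fun t t' h => by
    simp only [o]; rw [SimpleGraph.ConnectedComponent.sound h]
  let d : T → ℕ := fun t => Gr.dist (o t) t
  let D : T → Set T := fun t => {u | Gr.Reachable t u ∧ d u = d t + Gr.dist t u}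
  let ρ : T → ℕ ×ₗ ℕ := fun t => if (D t).Finite then toLex (0, (D t).ncard) else toLex (1, d t)
  have htri : ∀ a b c, Gr.Reachable a b → Gr.Reachable b c → Gr.dist a c ≤ Gr.dist a b + Gr.dist b c := by
    intro a b c h1 h2
    obtain ⟨p, hp⟩ := h1.exists_walk_length_eq_dist
    obtain ⟨q, hq⟩ := h2.exists_walk_length_eq_dist
    rw [← hp, ← hq, ← SimpleGraph.Walk.length_append]
    exact SimpleGraph.dist_le _
  refine ⟨ρ, fun t => ?_⟩
  by_cases hI : (D t).Finite
  · by_cases hto : o t = t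
    · left
      have : {u | Gr.Reachable t u}.Finite := by
        refine hI.subset fun u hu => ?_
        refine ⟨hu, ?_⟩
        have hu' : Gr.Reachable t u := hu
        simp only [d]
        rw [← ho' t u hu', hto, SimpleGraph.dist_self, zero_add]
      have h3 := hr2 (Gr.connectedComponentMk t)
      change {u | Gr.Reachable (o t) u}.Finite → o t ∈ O at h3
      rw [hto] at h3
      exact h3 this
    · right
      obtain ⟨p, hp⟩ := (ho t).symm.exists_walk_length_eq_dist
      generalize hot : o t = ot at p hp hto
      cases p with
      | nil => exact absurd rfl hto
      | @cons _ t' _ hadj q =>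
        subst hot
        have hd : d t = d t' + 1 := by
          have e1 : o t' = o t := (ho' _ _ hadj.reachable).symm
          have h1 : Gr.dist t (o t) = q.length + 1 := by rw [← hp]; simp
          have h2 : Gr.dist t' (o t) ≤ q.length := SimpleGraph.dist_le q
          have h3 := htri (o t) t' t q.reachable.symm hadj.symm.reachable
          rw [SimpleGraph.dist_comm (u := t') (v := t), SimpleGraph.dist_eq_one_iff_adj.mpr hadj] at h3
          simp only [d]
          rw [e1]
          rw [SimpleGraph.dist_comm] at h1 h2
          omega
        refine ⟨t', hadj, ?_⟩
        have hsub : D t ⊆ D t' := by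
          intro u hu
          have hu1 : Gr.Reachable t u := hu.1
          have hu2 : d u = d t + Gr.dist t u := hu.2
          refine ⟨hadj.symm.reachable.trans hu1, ?_⟩
          have h1 := htri t' t u hadj.symm.reachable hu1
          rw [SimpleGraph.dist_comm (u := t') (v := t), SimpleGraph.dist_eq_one_iff_adj.mpr hadj] at h1
          have e1 : o t' = o u := ho' _ _ (hadj.symm.reachable.trans hu1)
          have h2 := htri (o t') t' u (ho t') (hadj.symm.reachable.trans hu1)
          have h3 : d u = Gr.dist (o t') u := by simp only [d]; rw [e1]
          have h4 : d t' = Gr.dist (o t') t' := rfl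
          omega
        have hnot : t' ∉ D t := by
          intro h
          have : d t' = d t + Gr.dist t t' := h.2
          omega
        have hin : t' ∈ D t' := ⟨SimpleGraph.Reachable.refl _, by simp⟩
        by_cases hI' : (D t').Finite
        · simp only [ρ, if_pos hI, if_pos hI']
          rw [Prod.Lex.toLex_lt_toLex]
          right
          refine ⟨rfl, Set.ncard_lt_ncard ⟨hsub, fun h => hnot (h hin)⟩ hI'⟩
        · simp only [ρ, if_pos hI, if_neg hI']
          rw [Prod.Lex.toLex_lt_toLex]
          left; simp
  · right
    by_contra hcon
    push Not at hcon
    apply hI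
    have hfin : ∀ t' ∈ Gr.neighborSet t, d t' = d t + 1 → (D t').Finite := by
      intro t' h hd
      by_contra hI'
      have := hcon t' h
      simp only [ρ, if_neg hI, if_neg hI'] at this
      rw [Prod.Lex.toLex_le_toLex] at this
      simp at this
      omega
    have hcov : D t ⊆ {t} ∪ ⋃ t' ∈ {t' ∈ Gr.neighborSet t | d t' = d t + 1}, D t' := by
      intro u hu
      have hu1 : Gr.Reachable t u := hu.1
      have hu2 : d u = d t + Gr.dist t u := hu.2
      obtain ⟨p, hp⟩ := hu1.exists_walk_length_eq_dist
      cases p with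
      | nil => left; rfl
      | @cons _ t' _ hadj q =>
        right
        simp only [Set.mem_iUnion]
        have h1 : Gr.dist t u = q.length + 1 := by rw [← hp]; simp
        have h2 : Gr.dist t' u ≤ q.length := SimpleGraph.dist_le q
        have e1 : o t' = o t := (ho' _ _ hadj.reachable).symm
        have e2 : o u = o t := (ho' _ _ hu1).symm
        have h3 := htri (o t) t' u (e1 ▸ ho t') q.reachable
        have h4 := htri (o t) t t' (ho t) hadj.reachable
        rw [SimpleGraph.dist_eq_one_iff_adj.mpr hadj] at h4
        have d1 : d t' = Gr.dist (o t) t' := by simp only [d]; rw [e1]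
        have d2 : d u = Gr.dist (o t) u := by simp only [d]; rw [e2]
        have d3 : d t = Gr.dist (o t) t := rfl
        refine ⟨t', ⟨hadj, by omega⟩, q.reachable, by omega⟩
    refine Set.Finite.subset ?_ hcov
    refine (Set.finite_singleton t).union (Set.Finite.biUnion ((hlf t).subset fun x hx => hx.1) ?_)
    intro t' ht'
    exact hfin t' ht'.1 ht'.2

/-- no finite closed component ⇒ free -/
theorem free_of_no_closed
    (h : ∀ C : Set σ.T, C.Finite → C.Nonempty →
      (∀ t ∈ C, ∀ s ∈ σ.w t, ∀ t', s⁻¹ ∈ σ.w t' → t' ∈ C) →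
      ∃ t ∈ C, ∃ s ∈ σ.w t, ∀ t', s⁻¹ ∉ σ.w t') : IsFreeGroup G := by
  classical
  let Gr : SimpleGraph σ.T := 
    { Adj := fun t t' => t ≠ t' ∧ ∃ s ∈ σ.w t, s⁻¹ ∈ σ.w t'
      symm := ⟨fun t t' ⟨h1, s, h2, h3⟩ => ⟨h1.symm, s⁻¹, h3, by rwa [inv_inv]⟩⟩
      loopless := ⟨fun t h => h.1 rfl⟩ }
  let O : Set σ.T := {t | ∃ s ∈ σ.w t, ∀ t', s⁻¹ ∉ σ.w t'}
  have hlf : ∀ t, (Gr.neighborSet t).Finite := by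
    intro t
    refine Set.Finite.subset (s := ⋃ s ∈ {s | s ∈ σ.w t}, {t' | s⁻¹ ∈ σ.w t'}) ?_ ?_
    · refine Set.Finite.biUnion (List.finite_toSet _) fun s _ => ?_
      refine Set.Subsingleton.finite fun a ha b hb => σ.disj a b s⁻¹ ha hb
    · rintro t' ⟨_, s, h1, h2⟩
      simp only [Set.mem_iUnion]
      exact ⟨s, h1, h2⟩
  obtain ⟨ρ, hρ⟩ := exists_rank Gr hlf O (by
    intro t hfin
    obtain ⟨u, hu, s, h1, h2⟩ := h _ hfin ⟨t, SimpleGraph.Reachable.refl _⟩ (by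
      intro u hu s hs u' hs'
      have hu' : Gr.Reachable t u := hu
      by_cases e : u = u'
      · subst e; exact hu
      · have : Gr.Adj u u' := ⟨e, s, hs, hs'⟩
        exact hu'.trans this.reachable)
    exact ⟨u, ⟨s, h1, h2⟩, hu⟩)
  have hch : ∀ t, ∃ s ∈ σ.w t, ∀ t', s⁻¹ ∈ σ.w t' → ρ t < ρ t' := by
    intro t
    rcases hρ t with ⟨s, h1, h2⟩ | ⟨t', ⟨_, s, h1, h2⟩, h3⟩
    · exact ⟨s, h1, fun t' h => absurd h (h2 t')⟩
    · refine ⟨s, h1, fun t'' h => ?_⟩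
      rw [σ.disj t'' t' _ h h2]; exact h3
  choose e he1 he2 using hch
  refine σ.free_of_wf e he1 ?_
  exact Subrelation.wf (fun {t' t} h => he2 t' t h) (InvImage.wf ρ wellFounded_lt)

end WPres
end

section
namespace Words
variable {L : Type} [InvolutiveInv L]

/-- `Path src p w q`: `w` is an edge path from `p` to `q` where `l` goes from `src l` to
`src l⁻¹`. -/
def Path {V : Type} (src : L → V) : V → List L → V → Prop
  | p, [], q => p = q
  | p, l :: w, q => src l = p ∧ Path src (src l⁻¹) w q

theorem path_append {V : Type} {src : L → V} {u v : List L} {p q : V} :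
    Path src p (u ++ v) q ↔ ∃ r, Path src p u r ∧ Path src r v q := by
  induction u generalizing p with
  | nil => simp [Path]
  | cons l u ih => simp [Path, ih, and_assoc]

theorem path_congr {V : Type} {src src' : L → V} {w : List L} {p q : V}
    (h : ∀ l ∈ w, src l = src' l ∧ src l⁻¹ = src' l⁻¹) :
    Path src p w q → Path src' p w q := by
  induction w generalizing p with
  | nil => exact id
  | cons l w ih =>
    rintro ⟨h1, h2⟩
    have h3 := h l (by simp)
    refine ⟨h3.1 ▸ h1, ?_⟩
    rw [← h3.2]
    exact ih (fun l hl => h l (by simp [hl])) h2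

theorem path_const {V : Type} {src : L → V} {w : List L} {p : V}
    (h : ∀ l ∈ w, src l = p ∧ src l⁻¹ = p) : Path src p w p := by
  induction w with
  | nil => rfl
  | cons l w ih =>
    have h3 := h l (by simp)
    refine ⟨h3.1, ?_⟩
    rw [h3.2]
    exact ih (fun l hl => h l (by simp [hl]))

def OV (ws : List (List L)) : Prop :=
  ∀ src : L → Bool, (∀ w ∈ ws, ∃ p, Path src p w p) →
    ∀ l ∈ ws.flatten, ∀ l' ∈ ws.flatten, src l = src l'

structure Good {G : Type} [Group G] (ws : List (List L)) (ev : L → G) : Prop where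
  nodup : ws.flatten.Nodup
  inv_mem : ∀ l ∈ ws.flatten, l⁻¹ ∈ ws.flatten
  inv_ne : ∀ l ∈ ws.flatten, l⁻¹ ≠ l
  ev_inv : ∀ l ∈ ws.flatten, ev l⁻¹ = (ev l)⁻¹
  rel : ∀ w ∈ ws, (w.map ev).prod = 1
  gen : ∀ H : Subgroup G, (∀ l ∈ ws.flatten, ev l ∈ H) → H = ⊤
  univ : ∀ (K : Type) [Group K] (f : L → K), (∀ l ∈ ws.flatten, f l⁻¹ = (f l)⁻¹) →
    (∀ w ∈ ws, (w.map f).prod = 1) → ∃ F : G →* K, ∀ l ∈ ws.flatten, F (ev l) = f l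

variable {G : Type} [Group G]

theorem OV.congr {A B : List (List L)} (h : OV A) (hf : A.flatten.Perm B.flatten)
    (h1 : ∀ w ∈ A, w ∈ B ∨ w = []) : OV B := by
  intro src hs l hl l' hl'
  refine h src ?_ l (hf.mem_iff.mpr hl) l' (hf.mem_iff.mpr hl')
  intro w hw
  rcases h1 w hw with h | rfl
  · exact hs w h
  · exact ⟨true, rfl⟩

theorem Good.congr {A B : List (List L)} {ev : L → G} (h : Good A ev)
    (hf : A.flatten.Perm B.flatten) (h1 : ∀ w ∈ A, w ∈ B ∨ w = [])
    (h2 : ∀ w ∈ B, w ∈ A ∨ w = []) : Good B ev where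
  nodup := hf.nodup_iff.mp h.nodup
  inv_mem l hl := hf.mem_iff.mp (h.inv_mem l (hf.mem_iff.mpr hl))
  inv_ne l hl := h.inv_ne l (hf.mem_iff.mpr hl)
  ev_inv l hl := h.ev_inv l (hf.mem_iff.mpr hl)
  rel w hw := by
    rcases h2 w hw with h' | rfl
    · exact h.rel w h'
    · simp
  gen H hH := h.gen H fun l hl => hH l (hf.mem_iff.mp hl)
  univ K _ f hi hr := by
    obtain ⟨F, hF⟩ := h.univ K f (fun l hl => hi l (hf.mem_iff.mp hl)) (by
      intro w hw
      rcases h1 w hw with h' | rfl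
      · exact hr w h'
      · simp)
    exact ⟨F, fun l hl => hF l (hf.mem_iff.mpr hl)⟩

theorem merge {P R P' R' : List L} {l : L} {rest : List (List L)} {ev : L → G}
    (h : Good ((P ++ l :: R) :: (P' ++ l⁻¹ :: R') :: rest) ev)
    (ho : OV ((P ++ l :: R) :: (P' ++ l⁻¹ :: R') :: rest)) :
    Good ((P ++ R' ++ P' ++ R) :: rest) ev ∧ OV ((P ++ R' ++ P' ++ R) :: rest) := by
  classical
  set A := (P ++ l :: R) :: (P' ++ l⁻¹ :: R') :: rest with hA
  set Bw := (P ++ R' ++ P' ++ R) :: rest with hB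
  have hperm : A.flatten.Perm (l :: l⁻¹ :: Bw.flatten) := by
    rw [List.perm_iff_count]
    intro x
    simp only [hA, hB, List.flatten_cons, List.count_append, List.count_cons]
    omega
  have hnd := hperm.nodup_iff.mp h.nodup
  rw [List.nodup_cons, List.nodup_cons] at hnd
  obtain ⟨hl1, hl2, hnd⟩ := hnd
  have hl3 : l ∉ Bw.flatten := fun h' => hl1 (by simp [h'])
  have hmem : ∀ x ∈ Bw.flatten, x ∈ A.flatten := fun x hx => hperm.mem_iff.mpr (by simp [hx])
  have hlA : l ∈ A.flatten := hperm.mem_iff.mpr (by simp)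
  have hliA : l⁻¹ ∈ A.flatten := hperm.mem_iff.mpr (by simp)
  have hne : ∀ x ∈ Bw.flatten, x ≠ l ∧ x ≠ l⁻¹ ∧ x⁻¹ ≠ l ∧ x⁻¹ ≠ l⁻¹ := by
    intro x hx
    refine ⟨?_, ?_, ?_, ?_⟩
    · rintro rfl; exact hl3 hx
    · rintro rfl; exact hl2 hx
    · rintro rfl; exact hl2 (by simpa using hx)
    · intro e; rw [inv_inj] at e; subst e; exact hl3 hx
  have hsub : ∀ x, x ∈ P ∨ x ∈ R ∨ x ∈ P' ∨ x ∈ R' → x ∈ Bw.flatten := by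
    intro x hx; simp only [hB, List.flatten_cons, List.mem_append]; tauto
  have hsub2 : ∀ w ∈ rest, ∀ x ∈ w, x ∈ Bw.flatten := by
    intro w hw x hx
    simp only [hB, List.flatten_cons, List.mem_append, List.mem_flatten]
    right; exact ⟨w, hw, hx⟩
  have r1 := h.rel (P ++ l :: R) (by simp [hA])
  have r2 := h.rel (P' ++ l⁻¹ :: R') (by simp [hA])
  simp only [List.map_append, List.map_cons, List.prod_append, List.prod_cons,
    h.ev_inv l hlA] at r1 r2
  have r3 : ev l = (R'.map ev).prod * (P'.map ev).prod := by
    have : (P'.map ev).prod = (R'.map ev).prod⁻¹ * ev l := by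
      rw [← mul_inv_eq_one]
      rw [mul_inv_rev, inv_inv]; exact r2
    rw [this, mul_inv_cancel_left]
  constructor
  · refine ⟨hnd, ?_, fun x hx => h.inv_ne x (hmem x hx), fun x hx => h.ev_inv x (hmem x hx),
      ?_, ?_, ?_⟩
    · intro x hx
      have h1 := hperm.mem_iff.mp (h.inv_mem x (hmem x hx))
      have h2 := hne x hx
      simp only [List.mem_cons] at h1
      tauto
    · intro w hw
      rcases List.mem_cons.mp hw with rfl | hw
      · simp only [List.map_append, List.prod_append]
        rw [r3] at r1
        rw [← r1]; group
      · exact h.rel w (by simp [hA, hw])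
    · intro H hH
      apply h.gen
      have hlH : ev l ∈ H := by
        rw [r3]
        refine H.mul_mem (H.list_prod_mem ?_) (H.list_prod_mem ?_)
        · intro x hx
          obtain ⟨y, hy, rfl⟩ := List.mem_map.mp hx
          exact hH y (hsub y (by tauto))
        · intro x hx
          obtain ⟨y, hy, rfl⟩ := List.mem_map.mp hx
          exact hH y (hsub y (by tauto))
      intro x hx
      rcases List.mem_cons.mp (hperm.mem_iff.mp hx) with rfl | hx
      · exact hlH
      rcases List.mem_cons.mp hx with rfl | hx
      · rw [h.ev_inv l hlA]; exact H.inv_mem hlH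
      · exact hH x hx
    · intro K _ f hi hr
      let v : K := (R'.map f).prod * (P'.map f).prod
      let f' : L → K := fun x => if x = l then v else if x = l⁻¹ then v⁻¹ else f x
      have hf'l : f' l = v := by simp [f']
      have hf'li : f' l⁻¹ = v⁻¹ := by simp [f', h.inv_ne l hlA]
      have hf' : ∀ x ∈ Bw.flatten, f' x = f x := by
        intro x hx
        have := hne x hx
        simp [f', this.1, this.2.1]
      have hf'i : ∀ x ∈ Bw.flatten, f' x⁻¹ = f x⁻¹ := by
        intro x hx
        have := hne x hx
        simp [f', this.2.2.1, this.1]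
      have hmap : ∀ w : List L, (∀ x ∈ w, x ∈ Bw.flatten) → w.map f' = w.map f :=
        fun w hw => List.map_congr_left fun x hx => hf' x (hw x hx)
      have hfr := hr (P ++ R' ++ P' ++ R) (by simp [hB])
      simp only [List.map_append, List.prod_append] at hfr
      obtain ⟨F, hF⟩ := h.univ K f' (by
        intro x hx
        rcases List.mem_cons.mp (hperm.mem_iff.mp hx) with rfl | hx
        · rw [hf'l, hf'li]
        rcases List.mem_cons.mp hx with rfl | hx
        · rw [inv_inv, hf'l, hf'li, inv_inv]
        · rw [hf' x hx, hf'i x hx, hi x hx]) (by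
        intro w hw
        rcases List.mem_cons.mp hw with rfl | hw
        · rw [List.map_append, List.map_cons, List.prod_append, List.prod_cons, hf'l,
            hmap P fun x hx => hsub x (by tauto), hmap R fun x hx => hsub x (by tauto)]
          rw [← hfr]; simp only [v]; group
        rcases List.mem_cons.mp hw with rfl | hw
        · rw [List.map_append, List.map_cons, List.prod_append, List.prod_cons, hf'li,
            hmap P' fun x hx => hsub x (by tauto), hmap R' fun x hx => hsub x (by tauto)]
          simp only [v]; group
        · rw [hmap w (hsub2 w hw)]
          exact hr w (by simp [hB, hw]))
      exact ⟨F, fun x hx => by rw [hF x (hmem x hx), hf' x hx]⟩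
  · intro src hs
    obtain ⟨p, hp⟩ := hs (P ++ R' ++ P' ++ R) (by simp [hB])
    simp only [path_append] at hp
    obtain ⟨s, ⟨t, ⟨q, h1, h2⟩, h3⟩, h4⟩ := hp
    let src' : L → Bool := fun x => if x = l then q else if x = l⁻¹ then s else src x
    have e1 : src' l = q := by simp [src']
    have e2 : src' l⁻¹ = s := by simp [src', h.inv_ne l hlA]
    have e3 : ∀ x ∈ Bw.flatten, src x = src' x ∧ src x⁻¹ = src' x⁻¹ := by
      intro x hx
      have := hne x hx
      simp [src', this.1, this.2.1, this.2.2.1]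
    have hk := ho src' (by
      intro w hw
      rcases List.mem_cons.mp hw with rfl | hw
      · refine ⟨p, path_append.mpr ⟨q, path_congr (fun x hx => e3 x (hsub x (by tauto))) h1, e1, ?_⟩⟩
        rw [e2]
        exact path_congr (fun x hx => e3 x (hsub x (by tauto))) h4
      rcases List.mem_cons.mp hw with rfl | hw
      · refine ⟨t, path_append.mpr ⟨s, path_congr (fun x hx => e3 x (hsub x (by tauto))) h3, e2, ?_⟩⟩
        rw [inv_inv, e1]
        exact path_congr (fun x hx => e3 x (hsub x (by tauto))) h2
      · obtain ⟨p, hp⟩ := hs w (by simp [hB, hw])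
        exact ⟨p, path_congr (fun x hx => e3 x (hsub2 w hw x hx)) hp⟩)
    intro x hx y hy
    rw [(e3 x hx).1, (e3 y hy).1]
    exact hk x (hmem x hx) y (hmem y hy)

theorem merge_all (n : ℕ) : ∀ (ws : List (List L)) (ev : L → G), ws.length = n → Good ws ev → OV ws →
    ∃ w, Good [w] ev ∧ OV [w] := by
  classical
  induction n using Nat.strong_induction_on with
  | _ n ih =>
    intro ws ev hn hg ho
    match ws, hn, hg, ho with
    | [], _, hg, ho => exact ⟨[], hg.congr (by simp) (by simp) (by simp), ho.congr (by simp) (by simp)⟩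
    | [w], _, hg, ho => exact ⟨w, hg, ho⟩
    | w1 :: w2 :: rest, hn, hg, ho =>
      by_cases hc : ∃ l ∈ w1, l⁻¹ ∉ w1
      · obtain ⟨l, hl, hl'⟩ := hc
        have h1 := hg.inv_mem l (by simp [hl])
        have h2 : ∃ w ∈ w2 :: rest, l⁻¹ ∈ w := by
          rw [List.flatten_cons, List.mem_append] at h1
          exact List.mem_flatten.mp (h1.resolve_left hl')
        obtain ⟨w', hw', hlw'⟩ := h2
        obtain ⟨P, R, rfl⟩ := List.append_of_mem hl
        obtain ⟨P', R', rfl⟩ := List.append_of_mem hlw'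
        obtain ⟨U, V, hUV⟩ := List.append_of_mem hw'
        rw [hUV] at hg ho
        have hp : (List.flatten ((P ++ l :: R) :: (U ++ (P' ++ l⁻¹ :: R') :: V))).Perm
            (List.flatten ((P ++ l :: R) :: (P' ++ l⁻¹ :: R') :: (U ++ V))) :=
          List.Perm.flatten (List.Perm.cons _ List.perm_middle)
        obtain ⟨g1, o1⟩ := merge (hg.congr hp (by simp; tauto) (by simp; tauto)) (ho.congr hp (by simp; tauto))
        refine ih _ ?_ _ ev rfl g1 o1
        have := congrArg List.length hUV
        simp at this hn ⊢
        omega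
      · push Not at hc
        by_cases h1 : w1 = []
        · subst h1
          exact ih _ (by simp at hn ⊢; omega) (w2 :: rest) ev rfl
            (hg.congr (by simp) (by simp; tauto) (by simp; tauto)) (ho.congr (by simp) (by simp; tauto))
        · obtain ⟨a, ha⟩ := List.exists_mem_of_ne_nil _ h1
          have hnd := hg.nodup
          rw [List.flatten_cons, List.nodup_append] at hnd
          have hk := ho (fun x => decide (x ∈ w1)) (by
            intro w hw
            rcases List.mem_cons.mp hw with rfl | hw
            · exact ⟨true, path_const fun l hl => by simp [hl, hc l hl]⟩
            · refine ⟨false, path_const fun l hl => ?_⟩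
              have hl2 : l ∈ List.flatten (w2 :: rest) := List.mem_flatten.mpr ⟨w, hw, hl⟩
              have h3 : l ∉ w1 := fun h' => hnd.2.2 _ h' _ hl2 rfl
              have h4 : l⁻¹ ∉ w1 := fun h' => h3 (by simpa using hc _ h')
              simp [h3, h4])
          have hw2 : w2 = [] := by
            rw [List.eq_nil_iff_forall_not_mem]
            intro b hb
            have := hk a (by simp [ha]) b (by simp [hb])
            have h3 : b ∉ w1 := fun h' => hnd.2.2 _ h' _ (by simp [hb]) rfl
            simp [ha, h3] at this
          subst hw2
          exact ih _ (by simp at hn ⊢; omega) (w1 :: rest) ev rfl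
            (hg.congr (by simp) (by simp; tauto) (by simp; tauto)) (ho.congr (by simp) (by simp; tauto))

end Words
end

section
namespace Words
variable {L : Type} [InvolutiveInv L] {G : Type} [Group G]

open Classical in
/-- override the values at `a, a⁻¹, b, b⁻¹` -/
noncomputable def upd {K : Type} [Group K] (f : L → K) (a b : L) (x y : K) : L → K := fun l =>
  if l = a then x else if l = a⁻¹ then x⁻¹ else if l = b then y else if l = b⁻¹ then y⁻¹ else f l

theorem handle {H X Y Z W : List L} {a b : L} {ev : L → G}
    (h : Good [H ++ (a :: X ++ b :: Y ++ a⁻¹ :: Z ++ b⁻¹ :: W)] ev)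
    (ho : OV [a :: X ++ b :: Y ++ a⁻¹ :: Z ++ b⁻¹ :: W]) :
    ∃ ev' : L → G, Good [(H ++ [a, b, a⁻¹, b⁻¹]) ++ (Z ++ Y ++ X ++ W)] ev' ∧
      OV [Z ++ Y ++ X ++ W] := by
  classical
  set A := H ++ (a :: X ++ b :: Y ++ a⁻¹ :: Z ++ b⁻¹ :: W) with hA
  set B := (H ++ [a, b, a⁻¹, b⁻¹]) ++ (Z ++ Y ++ X ++ W) with hB
  obtain ⟨nodup, inv_mem, inv_ne, ev_inv, rel, gen, univ⟩ := h
  simp only [List.flatten_cons, List.flatten_nil, List.append_nil] at nodup inv_mem inv_ne ev_inv gen univ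
  have hperm : A.Perm B := by
    rw [List.perm_iff_count]
    intro x
    simp only [hA, hB, List.count_append, List.count_cons, List.count_nil]
    omega
  have hperm2 : A.Perm (a :: a⁻¹ :: b :: b⁻¹ :: (H ++ X ++ Y ++ Z ++ W)) := by
    rw [List.perm_iff_count]
    intro x
    simp only [hA, List.count_append, List.count_cons]
    omega
  have hnd := hperm2.nodup_iff.mp nodup
  simp only [List.nodup_cons, List.mem_cons, not_or] at hnd
  obtain ⟨⟨ha1, ha2, ha3, ha4⟩, ⟨ha5, ha6, ha7⟩, ⟨hb1, hb2⟩, hb3, hnd⟩ := hnd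
  have hmA : ∀ x, x ∈ A ↔ x = a ∨ x = a⁻¹ ∨ x = b ∨ x = b⁻¹ ∨ x ∈ H ++ X ++ Y ++ Z ++ W := by
    intro x; rw [hperm2.mem_iff]; simp only [List.mem_cons]
  have haA : a ∈ A := (hmA a).mpr (by tauto)
  have hbA : b ∈ A := (hmA b).mpr (by tauto)
  have hne : ∀ x ∈ H ++ X ++ Y ++ Z ++ W, x ≠ a ∧ x ≠ a⁻¹ ∧ x ≠ b ∧ x ≠ b⁻¹ := by
    intro x hx
    refine ⟨?_, ?_, ?_, ?_⟩ <;> rintro rfl <;> contradiction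
  have hne' : ∀ x ∈ H ++ X ++ Y ++ Z ++ W, x⁻¹ ≠ a ∧ x⁻¹ ≠ a⁻¹ ∧ x⁻¹ ≠ b ∧ x⁻¹ ≠ b⁻¹ := by
    intro x hx
    obtain ⟨h1, h2, h3, h4⟩ := hne x hx
    simp only [ne_eq, inv_inj]
    refine ⟨fun h => h2 ?_, h1, fun h => h4 ?_, h3⟩ <;> rw [← h, inv_inv]
  have hab : b ≠ a⁻¹ := fun e => ha5 e.symm
  have hba : b ≠ a := fun e => ha2 e.symm
  have hbia : b⁻¹ ≠ a := fun e => ha3 e.symm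
  have ua : ∀ {K : Type} [Group K] (f : L → K) (x y : K), upd f a b x y a = x := by
    intro K _ f x y; simp [upd]
  have uai : ∀ {K : Type} [Group K] (f : L → K) (x y : K), upd f a b x y a⁻¹ = x⁻¹ := by
    intro K _ f x y; simp [upd, inv_ne a haA]
  have ub : ∀ {K : Type} [Group K] (f : L → K) (x y : K), upd f a b x y b = y := by
    intro K _ f x y; simp [upd, hab, hba]
  have ubi : ∀ {K : Type} [Group K] (f : L → K) (x y : K), upd f a b x y b⁻¹ = y⁻¹ := by
    intro K _ f x y; simp [upd, hbia, hba, inv_ne b hbA]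
  have uo : ∀ {K : Type} [Group K] (f : L → K) (x y : K), ∀ z ∈ H ++ X ++ Y ++ Z ++ W,
      upd f a b x y z = f z := by
    intro K _ f x y z hz
    obtain ⟨h1, h2, h3, h4⟩ := hne z hz
    simp [upd, h1, h2, h3, h4]
  have uoi : ∀ {K : Type} [Group K] (f : L → K) (x y : K), ∀ z ∈ H ++ X ++ Y ++ Z ++ W,
      upd f a b x y z⁻¹ = f z⁻¹ := by
    intro K _ f x y z hz
    obtain ⟨h1, h2, h3, h4⟩ := hne' z hz
    simp only [upd, if_neg h1, if_neg h2, if_neg h3, if_neg h4]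
  have uinv : ∀ {K : Type} [Group K] (f : L → K) (x y : K), (∀ l ∈ A, f l⁻¹ = (f l)⁻¹) →
      ∀ l ∈ A, upd f a b x y l⁻¹ = (upd f a b x y l)⁻¹ := by
    intro K _ f x y hf l hl
    rcases (hmA l).mp hl with rfl | rfl | rfl | rfl | hl'
    · rw [ua, uai]
    · rw [inv_inv, ua, uai, inv_inv]
    · rw [ub, ubi]
    · rw [inv_inv, ub, ubi, inv_inv]
    · rw [uo _ _ _ l hl', uoi _ _ _ l hl', hf l hl]
  have um : ∀ {K : Type} [Group K] (f : L → K) (x y : K) (u : List L),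
      (∀ z ∈ u, z ∈ H ++ X ++ Y ++ Z ++ W) → u.map (upd f a b x y) = u.map f := by
    intro K _ f x y u hu
    exact List.map_congr_left fun z hz => uo f x y z (hu z hz)
  have mH : ∀ z ∈ H, z ∈ H ++ X ++ Y ++ Z ++ W := by intro z; simp only [List.mem_append]; tauto
  have mX : ∀ z ∈ X, z ∈ H ++ X ++ Y ++ Z ++ W := by intro z; simp only [List.mem_append]; tauto
  have mY : ∀ z ∈ Y, z ∈ H ++ X ++ Y ++ Z ++ W := by intro z; simp only [List.mem_append]; tauto
  have mZ : ∀ z ∈ Z, z ∈ H ++ X ++ Y ++ Z ++ W := by intro z; simp only [List.mem_append]; tauto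
  have mW : ∀ z ∈ W, z ∈ H ++ X ++ Y ++ Z ++ W := by intro z; simp only [List.mem_append]; tauto
  have r1 := rel A (by simp)
  simp only [hA, List.map_append, List.map_cons, List.prod_append, List.prod_cons,
    ev_inv a haA, ev_inv b hbA] at r1
  let pr : {K : Type} → [Group K] → (L → K) → List L → K := fun f u => (u.map f).prod
  let ev' : L → G := upd ev a b (ev a * (pr ev Z * pr ev Y)⁻¹)
    (pr ev Z * pr ev Y * pr ev X * ev b * (pr ev Z)⁻¹)
  refine ⟨ev', ?_, ?_⟩
  · constructor <;> (try simp only [List.flatten_cons, List.flatten_nil, List.append_nil])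
    · exact hperm.nodup_iff.mp nodup
    · intro l hl; exact hperm.mem_iff.mp (inv_mem l (hperm.mem_iff.mpr hl))
    · intro l hl; exact inv_ne l (hperm.mem_iff.mpr hl)
    · intro l hl; exact uinv _ _ _ ev_inv l (hperm.mem_iff.mpr hl)
    · intro w hw
      rw [List.mem_singleton] at hw
      subst hw
      simp only [hB, List.map_append, List.map_cons, List.map_nil, List.prod_append, List.prod_cons,
        List.prod_nil, mul_one, ev']
      rw [ua, uai, ub, ubi, um _ _ _ H mH, um _ _ _ X mX, um _ _ _ Y mY, um _ _ _ Z mZ, um _ _ _ W mW,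
        ← r1]
      simp only [pr]
      group
    · intro S hS
      apply gen
      have hS' : ∀ u : List L, (∀ z ∈ u, z ∈ H ++ X ++ Y ++ Z ++ W) → pr ev u ∈ S := by
        intro u hu
        apply S.list_prod_mem
        intro x hx
        obtain ⟨y, hy, rfl⟩ := List.mem_map.mp hx
        have := hS y (hperm.mem_iff.mp ((hmA y).mpr (by have := hu y hy; tauto)))
        rwa [show ev' y = ev y from uo _ _ _ y (hu y hy)] at this
      have hSX := hS' X mX
      have hSY := hS' Y mY
      have hSZ := hS' Z mZ
      have hSa : ev a ∈ S := by
        have := hS a (hperm.mem_iff.mp haA)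
        rw [show ev' a = _ from ua _ _ _] at this
        have h2 := S.mul_mem this (S.mul_mem hSZ hSY)
        rwa [inv_mul_cancel_right] at h2
      have hSb : ev b ∈ S := by
        have := hS b (hperm.mem_iff.mp hbA)
        rw [show ev' b = _ from ub _ _ _] at this
        have h2 := S.mul_mem (S.mul_mem (S.inv_mem (S.mul_mem (S.mul_mem hSZ hSY) hSX)) this) hSZ
        convert h2 using 1
        group
      intro l hl
      rcases (hmA l).mp hl with rfl | rfl | rfl | rfl | hl'
      · exact hSa
      · rw [ev_inv a haA]; exact S.inv_mem hSa
      · exact hSb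
      · rw [ev_inv b hbA]; exact S.inv_mem hSb
      · have := hS l (hperm.mem_iff.mp hl)
        rwa [show ev' l = ev l from uo _ _ _ l hl'] at this
    · intro K _ f hi hr
      have hiA : ∀ l ∈ A, f l⁻¹ = (f l)⁻¹ := fun l hl => hi l (hperm.mem_iff.mp hl)
      have hfr := hr B (by simp)
      simp only [hB, List.map_append, List.map_cons, List.map_nil, List.prod_append, List.prod_cons,
        List.prod_nil, hiA a haA, hiA b hbA] at hfr
      let f' : L → K := upd f a b (f a * (pr f Z * pr f Y))
        ((pr f Z * pr f Y * pr f X)⁻¹ * f b * pr f Z)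
      obtain ⟨F, hF⟩ := univ K f' (fun l hl => uinv _ _ _ hiA l hl) (by
        intro w hw
        rw [List.mem_singleton] at hw
        subst hw
        simp only [hA, List.map_append, List.map_cons, List.prod_append, List.prod_cons, f']
        rw [ua, uai, ub, ubi, um _ _ _ H mH, um _ _ _ X mX, um _ _ _ Y mY, um _ _ _ Z mZ, um _ _ _ W mW,
          ← hfr]
        simp only [pr]
        group)
      have hFm : ∀ u : List L, (∀ z ∈ u, z ∈ H ++ X ++ Y ++ Z ++ W) → F (pr ev u) = pr f u := by
        intro u hu
        simp only [pr]
        rw [map_list_prod, List.map_map]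
        congr 1
        apply List.map_congr_left
        intro z hz
        show F (ev z) = f z
        rw [hF z ((hmA z).mpr (by have := hu z hz; tauto))]
        exact uo _ _ _ z (hu z hz)
      have hFa : F (ev' a) = f a := by
        rw [show ev' a = _ from ua _ _ _]
        simp only [map_mul, map_inv, hFm X mX, hFm Y mY, hFm Z mZ, hF a haA]
        rw [show f' a = _ from ua _ _ _]
        group
      have hFb : F (ev' b) = f b := by
        rw [show ev' b = _ from ub _ _ _]
        simp only [map_mul, map_inv, hFm X mX, hFm Y mY, hFm Z mZ, hF b hbA]
        rw [show f' b = _ from ub _ _ _]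
        group
      refine ⟨F, fun l hl => ?_⟩
      have hl := hperm.mem_iff.mpr hl
      rcases (hmA l).mp hl with rfl | rfl | rfl | rfl | hl'
      · exact hFa
      · rw [hiA a haA, ← hFa, ← map_inv]; congr 1; rw [show ev' a = _ from ua _ _ _]; exact uai _ _ _
      · exact hFb
      · rw [hiA b hbA, ← hFb, ← map_inv]; congr 1; rw [show ev' b = _ from ub _ _ _]; exact ubi _ _ _
      · rw [show ev' l = ev l from uo _ _ _ l hl', hF l hl]
        exact uo _ _ _ l hl'
  · intro src hs
    simp only [List.flatten_cons, List.flatten_nil, List.append_nil]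
    obtain ⟨p, hp⟩ := hs _ (List.mem_singleton.mpr rfl)
    simp only [path_append] at hp
    obtain ⟨t, ⟨r, ⟨q, h1, h2⟩, h3⟩, h4⟩ := hp
    let src' : L → Bool := fun l =>
      if l = a then p else if l = a⁻¹ then r else if l = b then t else if l = b⁻¹ then q else src l
    have ea : src' a = p := by simp [src']
    have eai : src' a⁻¹ = r := by simp [src', inv_ne a haA]
    have eb : src' b = t := by simp [src', hab, hba]
    have ebi : src' b⁻¹ = q := by simp [src', hbia, hba, inv_ne b hbA]
    have eo : ∀ x ∈ H ++ X ++ Y ++ Z ++ W, src x = src' x ∧ src x⁻¹ = src' x⁻¹ := by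
      intro x hx
      obtain ⟨h1, h2, h3, h4⟩ := hne x hx
      obtain ⟨h1', h2', h3', h4'⟩ := hne' x hx
      constructor
      · simp [src', h1, h2, h3, h4]
      · simp only [src', if_neg h1', if_neg h2', if_neg h3', if_neg h4']
    have hk := ho src' (by
      intro w hw
      rw [List.mem_singleton] at hw
      subst hw
      refine ⟨p, ?_⟩
      simp only [path_append]
      refine ⟨q, ⟨r, ⟨t, ⟨ea, ?_⟩, eb, ?_⟩, eai, ?_⟩, ebi, ?_⟩
      · rw [eai]; exact path_congr (fun x hx => eo x (mX x hx)) h3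
      · rw [ebi]; exact path_congr (fun x hx => eo x (mY x hx)) h2
      · rw [inv_inv, ea]; exact path_congr (fun x hx => eo x (mZ x hx)) h1
      · rw [inv_inv, eb]; exact path_congr (fun x hx => eo x (mW x hx)) h4)
    have hm : ∀ x ∈ Z ++ Y ++ X ++ W, x ∈ H ++ X ++ Y ++ Z ++ W := by
      intro x; simp only [List.mem_append]; tauto
    have hm' : ∀ x ∈ Z ++ Y ++ X ++ W, x ∈ a :: X ++ b :: Y ++ a⁻¹ :: Z ++ b⁻¹ :: W := by
      intro x; simp only [List.mem_append, List.mem_cons]; tauto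
    simp only [List.flatten_cons, List.flatten_nil, List.append_nil] at hk
    intro x hx y hy
    rw [(eo x (hm x hx)).1, (eo y (hm y hy)).1]
    exact hk x (hm' x hx) y (hm' y hy)

/-- the standard word -/
def std (hs : List (L × L)) : List L := hs.flatMap fun p => [p.1, p.2, p.1⁻¹, p.2⁻¹]

theorem std_inv {hs : List (L × L)} {l : L} (h : l ∈ std hs) : l⁻¹ ∈ std hs := by
  simp only [std, List.mem_flatMap, List.mem_cons, List.not_mem_nil, or_false] at h ⊢
  obtain ⟨p, hp, h⟩ := h
  refine ⟨p, hp, ?_⟩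
  rcases h with rfl | rfl | rfl | rfl <;> simp

theorem normalize (n : ℕ) : ∀ (hs : List (L × L)) (u : List L) (ev : L → G), u.length = n →
    Good [std hs ++ u] ev → OV [u] → ∃ (hs : List (L × L)) (ev : L → G), Good [std hs] ev := by
  classical
  induction n using Nat.strong_induction_on with
  | _ n ih =>
    intro hs u ev hn hg ho
    match u, hn, hg, ho with
    | [], _, hg, _ => exact ⟨hs, ev, by simpa using hg⟩
    | a :: u, hn, hg, ho =>
      have hnd := hg.nodup
      have hinv := hg.inv_mem
      have hine := hg.inv_ne
      simp only [List.flatten_cons, List.flatten_nil, List.append_nil] at hnd hinv hine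
      rw [List.nodup_append] at hnd
      obtain ⟨_, hnd, hdis⟩ := hnd
      have hinv' : ∀ l ∈ a :: u, l⁻¹ ∈ a :: u := by
        intro l hl
        rcases List.mem_append.mp (hinv l (List.mem_append_right _ hl)) with h | h
        · have h2 := std_inv h
          rw [inv_inv] at h2
          exact absurd rfl (hdis l h2 l hl)
        · exact h
      have hai : a⁻¹ ∈ u := by
        rcases List.mem_cons.mp (hinv' a (by simp)) with h | h
        · exact absurd h (hine a (by simp))
        · exact h
      obtain ⟨M, N, rfl⟩ := List.append_of_mem hai
      rw [List.nodup_cons, List.nodup_append, List.nodup_cons] at hnd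
      obtain ⟨hnd1, hnd2, ⟨hnd3, hnd4⟩, hnd5⟩ := hnd
      simp only [List.mem_append, List.mem_cons, not_or] at hnd1
      by_cases hc : ∃ b ∈ M, b⁻¹ ∈ N
      · obtain ⟨b, hb, hb'⟩ := hc
        obtain ⟨X, Y, rfl⟩ := List.append_of_mem hb
        obtain ⟨Z, W, rfl⟩ := List.append_of_mem hb'
        have e : a :: (X ++ b :: Y ++ a⁻¹ :: (Z ++ b⁻¹ :: W)) =
          a :: X ++ b :: Y ++ a⁻¹ :: Z ++ b⁻¹ :: W := by simp
        rw [e] at hg ho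
        obtain ⟨ev', hg', ho'⟩ := handle hg ho
        refine ih (Z ++ Y ++ X ++ W).length ?_ (hs ++ [(a, b)]) _ ev' rfl ?_ ho'
        · simp at hn ⊢; omega
        · convert hg' using 3
          simp [std]
      · push Not at hc
        exfalso
        have hMinv : ∀ x ∈ M, x⁻¹ ∈ M := by
          intro x hx
          have h1 := hinv' x (by simp [hx])
          simp only [List.mem_append, List.mem_cons] at h1
          rcases h1 with h | h | h | h
          · exfalso
            have : x = a⁻¹ := by rw [← h, inv_inv]
            exact hnd5 x hx _ (by simp) this
          · exact h
          · rw [inv_inj] at h; subst h; exact absurd hx hnd1.1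
          · exact absurd h (hc x hx)
        have hMn : a⁻¹ ∉ M := fun h => hnd5 _ h _ (by simp) rfl
        have hane : a ≠ a⁻¹ := hnd1.2.1
        have hk := ho (fun x => decide (x ∈ M ∨ x = a⁻¹)) (by
          intro w hw
          rw [List.mem_singleton] at hw
          subst hw
          refine ⟨false, by simp [hnd1.1, hane], ?_⟩
          rw [path_append]
          refine ⟨true, ?_, by simp, ?_⟩
          · beta_reduce
            rw [show decide (a⁻¹ ∈ M ∨ a⁻¹ = a⁻¹) = true by simp]
            exact path_const fun l hl => by simp [hl, hMinv l hl]
          · beta_reduce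
            rw [show decide (a⁻¹⁻¹ ∈ M ∨ a⁻¹⁻¹ = a⁻¹) = false by simp [hnd1.1, hane]]
            refine path_const fun l hl => ?_
            have h1 : l ∉ M := fun h => hnd5 _ h _ (by simp [hl]) rfl
            have h2 : l⁻¹ ∉ M := fun h => h1 (by simpa using hMinv _ h)
            have h3 : l ≠ a⁻¹ := by rintro rfl; exact hnd3 hl
            have h4 : l ≠ a := by rintro rfl; exact hnd1.2.2 hl
            simp [h1, h2, h3, h4])
        have := hk a (by simp) a⁻¹ (by simp)
        simp [hnd1.1, hane] at this

end Words
end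

section
namespace Words
variable {L : Type} [InvolutiveInv L] {G : Type} [Group G]

theorem std_prod {K : Type} [Group K] (f : L → K) (hs : List (L × L)) :
    ((std hs).map f).prod = (hs.map fun p => f p.1 * f p.2 * f p.1⁻¹ * f p.2⁻¹).prod := by
  induction hs with
  | nil => simp [std]
  | cons p hs ih =>
    have : std (p :: hs) = [p.1, p.2, p.1⁻¹, p.2⁻¹] ++ std hs := by simp [std]
    rw [this, List.map_append, List.prod_append, ih]
    simp [mul_assoc]

theorem surface_of_good {hs : List (L × L)} {ev : L → G} (h : Good [std hs] ev) :
    Nonempty (G ≃* SurfaceGroup hs.length) := by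
  classical
  obtain ⟨nodup, inv_mem, inv_ne, ev_inv, rel, gen, univ⟩ := h
  simp only [List.flatten_cons, List.flatten_nil, List.append_nil] at nodup inv_mem inv_ne ev_inv gen univ
  let n := hs.length
  let lab : Fin n × Fin 2 → L := fun x => if x.2 = 0 then (hs.get x.1).1 else (hs.get x.1).2
  have hlab0 : ∀ i, lab (i, 0) = (hs.get i).1 := fun i => rfl
  have hlab1 : ∀ i, lab (i, 1) = (hs.get i).2 := fun i => rfl
  let blk : Fin n → List L := fun i => [(hs.get i).1, (hs.get i).2, (hs.get i).1⁻¹, (hs.get i).2⁻¹]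
  have hblk : ∀ x, lab x ∈ blk x.1 ∧ (lab x)⁻¹ ∈ blk x.1 := by
    rintro ⟨i, e⟩
    fin_cases e
    · simp [blk, lab]
    · simp [blk, lab]
  have hstd : ∀ l, l ∈ std hs ↔ ∃ i, l ∈ blk i := by
    intro l
    simp only [std, List.mem_flatMap, blk]
    constructor
    · rintro ⟨p, hp, hl⟩
      obtain ⟨i, rfl⟩ := List.get_of_mem hp
      exact ⟨i, hl⟩
    · rintro ⟨i, hl⟩
      exact ⟨_, List.get_mem hs i, hl⟩
  have hstd2 : ∀ l, l ∈ std hs ↔ ∃ x, l = lab x ∨ l = (lab x)⁻¹ := by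
    intro l
    rw [hstd]
    constructor
    · rintro ⟨i, hl⟩
      simp only [blk, List.mem_cons, List.not_mem_nil, or_false] at hl
      rcases hl with rfl | rfl | rfl | rfl
      · exact ⟨(i, 0), Or.inl rfl⟩
      · exact ⟨(i, 1), Or.inl rfl⟩
      · exact ⟨(i, 0), Or.inr rfl⟩
      · exact ⟨(i, 1), Or.inr rfl⟩
    · rintro ⟨x, rfl | rfl⟩
      · exact ⟨_, (hblk x).1⟩
      · exact ⟨_, (hblk x).2⟩
  have hnd := List.nodup_flatMap.mp nodup
  have hdis : ∀ i j l, l ∈ blk i → l ∈ blk j → i = j := by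
    have hp := List.pairwise_iff_getElem.mp hnd.2
    have key : ∀ i j : Fin n, i < j → ∀ l, l ∈ blk i → l ∈ blk j → False := by
      intro i j hij l h1 h2
      have := hp i.1 j.1 i.2 j.2 hij
      exact this h1 h2
    intro i j l h1 h2
    rcases lt_trichotomy i j with h | h | h
    · exact (key i j h l h1 h2).elim
    · exact h
    · exact (key j i h l h2 h1).elim
  have hbn : ∀ i, (blk i).Nodup := fun i => hnd.1 _ (List.get_mem hs i)
  have hinj : ∀ x y, lab x = lab y → x = y := by
    rintro ⟨i, e⟩ ⟨j, e'⟩ he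
    have : i = j := hdis i j _ (hblk (i, e)).1 (he ▸ (hblk (j, e')).1)
    subst this
    have hb := hbn i
    simp only [blk, List.nodup_cons, List.mem_cons, not_or] at hb
    fin_cases e <;> fin_cases e'
    · rfl
    · exact absurd he hb.1.1
    · exact absurd he.symm hb.1.1
    · rfl
  have hnei : ∀ x y, lab x ≠ (lab y)⁻¹ := by
    rintro ⟨i, e⟩ ⟨j, e'⟩ he
    have : i = j := hdis i j _ (hblk (i, e)).1 (he ▸ (hblk (j, e')).2)
    subst this
    have hb := hbn i
    simp only [blk, List.nodup_cons, List.mem_cons, not_or] at hb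
    fin_cases e <;> fin_cases e'
    · exact hb.1.2.1 he
    · exact hb.1.2.2.1 he
    · exact hb.2.1.1 he
    · exact hb.2.1.2.1 he
  let gn : Fin n × Fin 2 → SurfaceGroup n := PresentedGroup.of
  let f : L → SurfaceGroup n := fun l => if h : ∃ x, lab x = l then gn h.choose else
    if h : ∃ x, lab x = l⁻¹ then (gn h.choose)⁻¹ else 1
  have hf : ∀ x, f (lab x) = gn x := by
    intro x
    have h : ∃ y, lab y = lab x := ⟨x, rfl⟩
    simp only [f, dif_pos h]
    rw [hinj _ _ h.choose_spec]
  have hfi : ∀ x, f (lab x)⁻¹ = (gn x)⁻¹ := by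
    intro x
    have h1 : ¬ ∃ y, lab y = (lab x)⁻¹ := by rintro ⟨y, hy⟩; exact hnei _ _ hy
    have h : ∃ y, lab y = (lab x)⁻¹⁻¹ := ⟨x, by rw [inv_inv]⟩
    simp only [f, dif_neg h1, dif_pos h]
    rw [hinj _ _ (h.choose_spec.trans (inv_inv _))]
  have hev : ∀ x, ev (lab x)⁻¹ = (ev (lab x))⁻¹ := fun x => ev_inv _ ((hstd2 _).mpr ⟨x, Or.inl rfl⟩)
  have hofn : ∀ {K : Type} [Group K] (q : L → K),
      (hs.map fun p => q p.1 * q p.2 * q p.1⁻¹ * q p.2⁻¹) = List.ofFn fun i : Fin n =>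
        q (lab (i, 0)) * q (lab (i, 1)) * q (lab (i, 0))⁻¹ * q (lab (i, 1))⁻¹ := by
    intro K _ q
    apply List.ext_getElem
    · simp [n]
    · intro i h1 h2
      simp [lab]
  obtain ⟨F, hF⟩ := univ (SurfaceGroup n) f (by
    intro l hl
    obtain ⟨x, rfl | rfl⟩ := (hstd2 l).mp hl
    · rw [hf, hfi]
    · rw [inv_inv, hf, hfi, inv_inv]) (by
    intro w hw
    rw [List.mem_singleton] at hw
    subst hw
    rw [std_prod, hofn]
    simp only [hf, hfi]
    have h1 : (PresentedGroup.mk {surfaceRelator n} (surfaceRelator n)) = 1 :=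
      PresentedGroup.one_of_mem rfl
    have h3 : PresentedGroup.mk {surfaceRelator n} (List.ofFn fun i : Fin n =>
      FreeGroup.of (i, 0) * FreeGroup.of (i, 1) *
      (FreeGroup.of (i, 0))⁻¹ * (FreeGroup.of (i, 1))⁻¹).prod = 1 := h1
    rw [map_list_prod, List.map_ofFn] at h3
    rw [← h3]
    congr 2)
  have hker : ∀ r ∈ ({surfaceRelator n} : Set (FreeGroup (Fin n × Fin 2))),
      FreeGroup.lift (fun x => ev (lab x)) r = 1 := by
    rintro r rfl
    rw [surfaceRelator, map_list_prod, List.map_ofFn]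
    have := rel _ (List.mem_singleton.mpr rfl)
    rw [std_prod, hofn] at this
    rw [← this]
    congr 2
    funext i
    simp [hev]
  let Fi : SurfaceGroup n →* G := PresentedGroup.toGroup hker
  have hFi : ∀ x, Fi (gn x) = ev (lab x) := fun x => PresentedGroup.toGroup.of hker
  refine ⟨MonoidHom.toMulEquiv F Fi ?_ ?_⟩
  · have := gen ((Fi.comp F).eqLocus (MonoidHom.id G)) (by
      intro l hl
      show Fi (F (ev l)) = ev l
      rw [hF l hl]
      obtain ⟨x, rfl | rfl⟩ := (hstd2 l).mp hl
      · rw [hf, hFi]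
      · rw [hfi, map_inv, hFi, hev])
    ext g
    have hg : g ∈ (Fi.comp F).eqLocus (MonoidHom.id G) := by rw [this]; trivial
    exact hg
  · apply PresentedGroup.ext
    intro x
    show F (Fi (gn x)) = gn x
    rw [hFi, hF _ ((hstd2 _).mpr ⟨x, Or.inl rfl⟩), hf]

theorem comm_of_good {p : L × L} {ev : L → G} (h : Good [std [p]] ev) (x y : G) : x * y = y * x := by
  obtain ⟨nodup, inv_mem, inv_ne, ev_inv, rel, gen, univ⟩ := h
  simp only [List.flatten_cons, List.flatten_nil, List.append_nil] at nodup inv_mem inv_ne ev_inv gen univ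
  have e : std [p] = [p.1, p.2, p.1⁻¹, p.2⁻¹] := by simp [std]
  rw [e] at ev_inv rel gen
  have h1 := ev_inv p.1 (by simp)
  have h2 := ev_inv p.2 (by simp)
  have hr := rel _ (List.mem_singleton.mpr rfl)
  simp only [List.map_cons, List.map_nil, List.prod_cons, List.prod_nil, h1, h2, mul_one] at hr
  have hc : Commute (ev p.1) (ev p.2) := by
    show ev p.1 * ev p.2 = ev p.2 * ev p.1
    rw [← mul_inv_eq_one, mul_inv_rev, ← hr]; group
  have hpw : ∀ l ∈ [p.1, p.2, p.1⁻¹, p.2⁻¹], ∀ l' ∈ [p.1, p.2, p.1⁻¹, p.2⁻¹],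
      Commute (ev l) (ev l') := by
    intro l hl l' hl'
    simp only [List.mem_cons, List.not_mem_nil, or_false] at hl hl'
    rcases hl with rfl | rfl | rfl | rfl <;> rcases hl' with rfl | rfl | rfl | rfl <;>
      simp [h1, h2, hc, hc.symm]
  have hA : ∀ l ∈ [p.1, p.2, p.1⁻¹, p.2⁻¹], ∀ y, Commute (ev l) y := by
    intro l hl y
    have := gen (Subgroup.centralizer {ev l}) (by
      intro l' hl'
      rw [Subgroup.mem_centralizer_singleton_iff]
      exact (hpw l hl l' hl').symm)
    have hy : y ∈ Subgroup.centralizer {ev l} := by rw [this]; trivial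
    rw [Subgroup.mem_centralizer_singleton_iff] at hy
    exact hy.symm
  have := gen (Subgroup.centralizer {y}) (by
      intro l' hl'
      rw [Subgroup.mem_centralizer_singleton_iff]
      exact hA l' hl' y)
  have hx : x ∈ Subgroup.centralizer {y} := by rw [this]; trivial
  rw [Subgroup.mem_centralizer_singleton_iff] at hx
  exact hx

theorem triv_of_good {ev : L → G} (h : Good [std []] ev) (x : G) : x = 1 := by
  have := h.gen ⊥ (by simp [std])
  have hx : x ∈ (⊥ : Subgroup G) := by rw [this]; trivial
  simpa using hx

end Words

theorem isFree_of_trivial {G : Type} [Group G] (h : ∀ x : G, x = 1) : IsFreeGroupOn G := by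
  refine ⟨Empty, ⟨?_⟩⟩
  exact
    { toFun := fun _ => 1
      invFun := fun _ => 1
      left_inv := fun x => (h x).symm
      right_inv := fun x => Subsingleton.elim _ _
      map_mul' := fun _ _ => by simp }
end

section
namespace Hyp
namespace Sys
variable {G : Type} [Group G] (σ : Sys G)

def orbSetoid (σ : Sys G) : Setoid σ.Del where
  r s s' := ∃ n, σ.phi^[n] s.1 = s'.1
  iseqv := by
    refine ⟨fun s => ⟨0, rfl⟩, ?_, ?_⟩
    · rintro s s' ⟨n, hn⟩
      obtain ⟨m, hm, hm'⟩ := σ.phi_per s.2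
      refine ⟨n * (m - 1), ?_⟩
      rw [← hn, ← Function.iterate_add_apply]
      have : n * (m - 1) + n = m * n := by
        obtain ⟨k, rfl⟩ : ∃ k, m = k + 1 := ⟨m - 1, by omega⟩
        simp; ring
      rw [this, Function.iterate_mul]
      exact Function.iterate_fixed hm' n
    · rintro a b c ⟨n, hn⟩ ⟨m, hm⟩
      exact ⟨m + n, by rw [Function.iterate_add_apply, hn, hm]⟩

def OT (σ : Sys G) : Type := Quotient σ.orbSetoid

noncomputable def ot (σ : Sys G) (t : OT σ) : G := (Quotient.out t).1

theorem ot_mem (t : OT σ) : σ.ot t ∈ σ.Del := (Quotient.out t).2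

noncomputable def ow (σ : Sys G) (t : OT σ) : List G :=
  (List.range (Function.minimalPeriod σ.phi (σ.ot t))).map fun i => σ.phi^[i] (σ.ot t)

def cls (σ : Sys G) (s : G) (h : s ∈ σ.Del) : OT σ := Quotient.mk σ.orbSetoid ⟨s, h⟩

theorem cls_spec (s : G) (h : s ∈ σ.Del) : ∃ n, σ.phi^[n] s = σ.ot (σ.cls s h) := by
  have : σ.orbSetoid.r ⟨s, h⟩ (Quotient.out (σ.cls s h)) :=
    Quotient.exact (Quotient.out_eq (σ.cls s h)).symm
  exact this

theorem cls_spec' (s : G) (h : s ∈ σ.Del) : ∃ n, σ.phi^[n] (σ.ot (σ.cls s h)) = s := by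
  have : σ.orbSetoid.r (Quotient.out (σ.cls s h)) ⟨s, h⟩ :=
    Quotient.exact (Quotient.out_eq (σ.cls s h))
  exact this

theorem cls_ot (t : OT σ) (n : ℕ) (h : σ.phi^[n] (σ.ot t) ∈ σ.Del) :
    σ.cls (σ.phi^[n] (σ.ot t)) h = t := by
  have : σ.orbSetoid.r (Quotient.out t) ⟨_, h⟩ := ⟨n, rfl⟩
  have h2 := Quotient.sound (s := σ.orbSetoid) this
  exact h2.symm.trans (Quotient.out_eq (s := σ.orbSetoid) t)

theorem per_pos {s : G} (hs : s ∈ σ.Del) : 0 < Function.minimalPeriod σ.phi s := by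
  obtain ⟨n, hn, hn'⟩ := σ.phi_per hs
  exact Function.IsPeriodicPt.minimalPeriod_pos hn hn'

theorem mem_ow {s : G} {t : OT σ} : s ∈ σ.ow t ↔ ∃ h : s ∈ σ.Del, σ.cls s h = t := by
  constructor
  · intro h
    obtain ⟨i, _, rfl⟩ := List.mem_map.mp h
    exact ⟨σ.iter_mem (σ.ot_mem t) i, σ.cls_ot t i _⟩
  · rintro ⟨h, rfl⟩
    obtain ⟨n, hn⟩ := σ.cls_spec' s h
    refine List.mem_map.mpr ⟨n % Function.minimalPeriod σ.phi (σ.ot (σ.cls s h)), ?_, ?_⟩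
    · exact List.mem_range.mpr (Nat.mod_lt _ (σ.per_pos (σ.ot_mem _)))
    · rw [Function.iterate_mod_minimalPeriod_eq, hn]

noncomputable def wpres (σ : Sys G) : WPres G where
  S := σ.S
  T := OT σ
  w := σ.ow
  inv_mem := fun s hs => σ.S_inv hs
  inv_ne := fun s hs => σ.S_inv_ne hs
  w_sub := fun t s hs => σ.Del_sub (σ.mem_ow.mp hs).1
  nodup := fun t => by
    refine List.Nodup.map_on ?_ List.nodup_range
    intro i hi j hj h
    exact Function.iterate_injOn_Iio_minimalPeriod (List.mem_range.mp hi) (List.mem_range.mp hj) h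
  disj := fun t t' s h h' => by
    obtain ⟨_, h1⟩ := σ.mem_ow.mp h
    obtain ⟨_, h2⟩ := σ.mem_ow.mp h'
    rw [← h1, ← h2]
  gen := σ.gen
  rel := fun t => by
    have := σ.orb_closed (σ.ot_mem t) (Function.iterate_minimalPeriod (f := σ.phi) (x := σ.ot t))
    exact this
  univ := fun K _ f hf hw => by
    refine σ.univ f hf fun s hs => ?_
    obtain ⟨n, hn⟩ := σ.cls_spec s hs
    refine ⟨n, ?_⟩
    rw [hn]
    have := hw (σ.cls s hs)
    rw [ow, List.map_map] at this
    exact this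

open Words in
theorem path_range {V : Type} {src : G → V} {f : ℕ → G} {n : ℕ} {p q : V}
    (h : Words.Path src p ((List.range (n + 1)).map f) q) :
    src (f 0) = p ∧ (∀ i < n, src (f (i + 1)) = src (f i)⁻¹) ∧ src (f n)⁻¹ = q := by
  induction n generalizing q with
  | zero =>
    simp [Words.Path] at h
    exact ⟨h.1, by simp, h.2⟩
  | succ n ih =>
    rw [List.range_succ, List.map_append, Words.path_append] at h
    obtain ⟨r, h1, h2, h3⟩ := h
    obtain ⟨a, b, c⟩ := ih h1
    refine ⟨a, ?_, h3⟩
    intro i hi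
    rcases Nat.lt_succ_iff_lt_or_eq.mp hi with h | rfl
    · exact b i h
    · rw [h2, c]

open Words in
theorem path_ow {V : Type} {src : G → V} {t : OT σ} {p : V} (h : Words.Path src p (σ.ow t) p)
    {r : G} (hr : r ∈ σ.ow t) : src (σ.phi r) = src r⁻¹ := by
  obtain ⟨n, hn⟩ : ∃ n, Function.minimalPeriod σ.phi (σ.ot t) = n + 1 :=
    ⟨_, (Nat.succ_pred_eq_of_pos (σ.per_pos (σ.ot_mem t))).symm⟩
  have hw : σ.ow t = (List.range (n + 1)).map fun i => σ.phi^[i] (σ.ot t) := by rw [ow, hn]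
  rw [hw] at h hr
  obtain ⟨a, b, c⟩ := path_range h
  obtain ⟨i, hi, rfl⟩ := List.mem_map.mp hr
  rw [← Function.iterate_succ_apply' σ.phi i]
  rcases Nat.lt_succ_iff_lt_or_eq.mp (List.mem_range.mp hi) with h' | rfl
  · exact b i h'
  · have : σ.phi^[i + 1] (σ.ot t) = σ.ot t := by rw [← hn]; exact Function.iterate_minimalPeriod
    rw [Nat.succ_eq_add_one, this, c]
    exact a

open Words in
theorem main (σ : Sys G) : IsFreeGroupOn G ∨ IsSurfaceGroup G := by
  classical
  by_cases hcl : ∀ C : Set σ.wpres.T, C.Finite → C.Nonempty →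
      (∀ t ∈ C, ∀ s ∈ σ.wpres.w t, ∀ t', s⁻¹ ∈ σ.wpres.w t' → t' ∈ C) →
      ∃ t ∈ C, ∃ s ∈ σ.wpres.w t, ∀ t', s⁻¹ ∉ σ.wpres.w t'
  · have := σ.wpres.free_of_no_closed hcl
    exact Or.inl ⟨IsFreeGroup.Generators G, ⟨IsFreeGroup.toFreeGroup G⟩⟩
  push Not at hcl
  obtain ⟨C, hfin, hne, hclos, hop⟩ := hcl
  change Set (OT σ) at C
  change ∀ t ∈ C, ∀ s ∈ σ.ow t, ∀ t', s⁻¹ ∈ σ.ow t' → t' ∈ C at hclos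
  change ∀ t ∈ C, ∀ s ∈ σ.ow t, ∃ t', s⁻¹ ∈ σ.ow t' at hop
  let C' : Set G := {s | ∃ t ∈ C, s ∈ σ.ow t}
  have hphi : ∀ t s, s ∈ σ.Del → (σ.phi s ∈ σ.ow t ↔ s ∈ σ.ow t) := by
    intro t s hs
    have key : σ.cls (σ.phi s) (σ.phi_mem hs) = σ.cls s hs := by
      refine (Quotient.sound (s := σ.orbSetoid) ?_).symm
      exact ⟨1, rfl⟩
    rw [mem_ow, mem_ow]
    constructor
    · rintro ⟨h, rfl⟩; exact ⟨hs, key.symm⟩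
    · rintro ⟨h, rfl⟩; exact ⟨σ.phi_mem hs, key⟩
  have h1 : C'.Finite := by
    have : C' = ⋃ t ∈ C, {s | s ∈ σ.ow t} := by
      ext s
      simp only [Set.mem_iUnion]
      constructor
      · rintro ⟨t, h1, h2⟩; exact ⟨t, h1, h2⟩
      · rintro ⟨t, h1, h2⟩; exact ⟨t, h1, h2⟩
    rw [this]
    exact hfin.biUnion fun t _ => List.finite_toSet _
  have h2 : C'.Nonempty := by
    obtain ⟨t, ht⟩ := hne
    refine ⟨σ.ot t, t, ht, σ.mem_ow.mpr ⟨σ.ot_mem t, σ.cls_ot t 0 _⟩⟩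
  have h3 : C' ⊆ σ.Del := by
    rintro s ⟨t, _, h⟩; exact (σ.mem_ow.mp h).1
  have h4 : ∀ s ∈ C', s⁻¹ ∈ σ.Del := by
    rintro s ⟨t, ht, h⟩
    obtain ⟨t', h'⟩ := hop t ht s h
    exact (σ.mem_ow.mp h').1
  have h5 : ∀ s ∈ C', s⁻¹ ∈ C' := by
    rintro s ⟨t, ht, h⟩
    obtain ⟨t', h'⟩ := hop t ht s h
    exact ⟨t', hclos t ht s h t' h', h'⟩
  have hn : ∀ r ∈ σ.Del, σ.phi r ∈ C' → r⁻¹ ∈ C' := by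
    rintro r hr ⟨t, ht, h⟩
    exact h5 r ⟨t, ht, (hphi t r hr).mp h⟩
  have hm : ∀ s ∈ C', σ.phi s⁻¹ ∈ C' := by
    intro s hs
    obtain ⟨t, ht, h⟩ := h5 s hs
    exact ⟨t, ht, (hphi t _ (h4 s hs)).mpr h⟩
  have hS : C' = σ.S := σ.dich h1 h2 h3 h4 hn hm
  obtain ⟨δ, hδ, hbd⟩ := σ.dich_bdd h1 h2 h3 h4 hn hm
  have hDS : σ.Del = σ.S := Set.Subset.antisymm σ.Del_sub (hS ▸ h3)
  have hCall : ∀ t, t ∈ C := by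
    intro t
    have : σ.ot t ∈ C' := by rw [hS]; exact σ.Del_sub (σ.ot_mem t)
    obtain ⟨t', ht', h⟩ := this
    obtain ⟨h, e⟩ := σ.mem_ow.mp h
    have := σ.cls_ot t 0 h
    rw [← this]
    exact e ▸ ht'
  let ts : List (OT σ) := hfin.toFinset.toList
  have hts : ∀ t, t ∈ ts := fun t => Finset.mem_toList.mpr (hfin.mem_toFinset.mpr (hCall t))
  let ws : List (List G) := ts.map σ.ow
  have hfl : ∀ s, s ∈ ws.flatten ↔ s ∈ σ.S := by
    intro s
    rw [List.mem_flatten]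
    constructor
    · rintro ⟨w, hw, hs⟩
      obtain ⟨t, _, rfl⟩ := List.mem_map.mp hw
      exact σ.Del_sub (σ.mem_ow.mp hs).1
    · intro hs
      rw [← hDS] at hs
      exact ⟨_, List.mem_map.mpr ⟨σ.cls s hs, hts _, rfl⟩, σ.mem_ow.mpr ⟨hs, rfl⟩⟩
  have hgood : Good ws (id : G → G) := by
    refine ⟨?_, ?_, ?_, ?_, ?_, ?_, ?_⟩
    · rw [List.nodup_flatten]
      constructor
      · intro w hw
        obtain ⟨t, _, rfl⟩ := List.mem_map.mp hw
        exact σ.wpres.nodup t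
      · rw [List.pairwise_map]
        refine List.Pairwise.imp ?_ (Finset.nodup_toList _)
        intro t t' hne s hs hs'
        exact hne (σ.wpres.disj t t' s hs hs')
    · intro l hl; rw [hfl] at hl ⊢; exact σ.S_inv hl
    · intro l hl; rw [hfl] at hl; exact σ.S_inv_ne hl
    · intro l _; rfl
    · intro w hw
      obtain ⟨t, _, rfl⟩ := List.mem_map.mp hw
      rw [List.map_id]
      exact σ.wpres.rel t
    · intro H hH
      rw [eq_top_iff, ← σ.gen, Subgroup.closure_le]
      intro s hs
      exact hH s ((hfl s).mpr hs)
    · intro K _ f hi hr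
      obtain ⟨F, hF⟩ := σ.wpres.univ K f (fun s hs => hi s ((hfl s).mpr hs))
        (fun t => hr _ (List.mem_map.mpr ⟨t, hts t, rfl⟩))
      exact ⟨F, fun l hl => hF l ((hfl l).mp hl)⟩
  have hov : OV ws := by
    intro src hp l hl l' hl'
    have hsrc : ∀ r ∈ σ.S, src (σ.phi r) = src r⁻¹ := by
      intro r hr
      rw [← hDS] at hr
      obtain ⟨p, hp⟩ := hp _ (List.mem_map.mpr ⟨σ.cls r hr, hts _, rfl⟩)
      exact σ.path_ow hp (σ.mem_ow.mpr ⟨hr, rfl⟩)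
    rw [hfl] at hl hl'
    have hSfin : σ.S.Finite := hS ▸ h1
    have := σ.dich (C := {s | s ∈ σ.S ∧ src s = src l}) (hSfin.subset fun s hs => hs.1)
      ⟨l, hl, rfl⟩ (fun s hs => hDS ▸ hs.1) (fun s hs => hDS ▸ σ.S_inv hs.1)
      (by
        rintro r hr ⟨h1, h2⟩
        rw [hDS] at hr
        exact ⟨σ.S_inv hr, by rw [← hsrc r hr, h2]⟩)
      (by
        rintro s ⟨h1, h2⟩
        have h3 := σ.S_inv h1
        refine ⟨σ.Del_sub (σ.phi_mem (hDS ▸ h3)), ?_⟩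
        rw [hsrc _ h3, inv_inv, h2])
    rw [← this] at hl'
    exact hl'.2.symm
  obtain ⟨w, hg1, ho1⟩ := merge_all _ ws id rfl hgood hov
  obtain ⟨hs, ev, hg2⟩ := normalize _ [] w id rfl (by simpa [std] using hg1) ho1
  match hs, hg2 with
  | [], hg2 => exact Or.inl (isFree_of_trivial (triv_of_good hg2))
  | [p], hg2 => exact Or.inl (isFree_of_trivial (σ.comm_trivial (comm_of_good hg2) hδ hbd))
  | p :: q :: hs, hg2 => exact Or.inr ⟨_, by simp, surface_of_good hg2⟩

end Sys
end Hyp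
end

section
open scoped Topology MatrixGroups

namespace Hyp

/-- The action `X ↦ A X Aᵀ` on symmetric matrices. -/
def actM (A : Matrix (Fin 2) (Fin 2) ℝ) : V3 →ₗ[ℝ] V3 where
  toFun X := (A 0 0 ^ 2 * X.1 + 2 * A 0 0 * A 0 1 * X.2.1 + A 0 1 ^ 2 * X.2.2,
    A 0 0 * A 1 0 * X.1 + (A 0 0 * A 1 1 + A 0 1 * A 1 0) * X.2.1 + A 0 1 * A 1 1 * X.2.2,
    A 1 0 ^ 2 * X.1 + 2 * A 1 0 * A 1 1 * X.2.1 + A 1 1 ^ 2 * X.2.2)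
  map_add' X Y := by
    refine Prod.ext ?_ (Prod.ext ?_ ?_) <;> simp <;> ring
  map_smul' c X := by
    refine Prod.ext ?_ (Prod.ext ?_ ?_) <;> simp <;> ring

theorem actM_apply (A : Matrix (Fin 2) (Fin 2) ℝ) (X : V3) : actM A X =
    (A 0 0 ^ 2 * X.1 + 2 * A 0 0 * A 0 1 * X.2.1 + A 0 1 ^ 2 * X.2.2,
    A 0 0 * A 1 0 * X.1 + (A 0 0 * A 1 1 + A 0 1 * A 1 0) * X.2.1 + A 0 1 * A 1 1 * X.2.2,
    A 1 0 ^ 2 * X.1 + 2 * A 1 0 * A 1 1 * X.2.1 + A 1 1 ^ 2 * X.2.2) := rfl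

theorem actM_mul (A B : Matrix (Fin 2) (Fin 2) ℝ) (X : V3) :
    actM (A * B) X = actM A (actM B X) := by
  simp only [actM_apply, Matrix.mul_apply, Fin.sum_univ_two]
  refine Prod.ext ?_ (Prod.ext ?_ ?_) <;> simp <;> ring

theorem actM_neg (A : Matrix (Fin 2) (Fin 2) ℝ) : actM (-A) = actM A := by
  ext <;> simp [actM_apply]

theorem actM_one (X : V3) : actM 1 X = X := by
  simp [actM_apply]

theorem actM_Q (A : Matrix (Fin 2) (Fin 2) ℝ) (h : A.det = 1) (X : V3) : Q (actM A X) = Q X := by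
  rw [Matrix.det_fin_two] at h
  have : Q (actM A X) = (A 0 0 * A 1 1 - A 0 1 * A 1 0) ^ 2 * Q X := by
    simp only [actM_apply, Q]; ring
  rw [this, h]; ring

theorem actM_B (A : Matrix (Fin 2) (Fin 2) ℝ) (h : A.det = 1) (X Y : V3) :
    B (actM A X) (actM A Y) = B X Y := by
  rw [Matrix.det_fin_two] at h
  have : B (actM A X) (actM A Y) = (A 0 0 * A 1 1 - A 0 1 * A 1 0) ^ 2 * B X Y := by
    simp only [actM_apply, B]; ring
  rw [this, h]; ring

theorem actM_D3 (A : Matrix (Fin 2) (Fin 2) ℝ) (h : A.det = 1) (X Y Z : V3) :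
    D3 (actM A X) (actM A Y) (actM A Z) = D3 X Y Z := by
  rw [Matrix.det_fin_two] at h
  have : D3 (actM A X) (actM A Y) (actM A Z)
      = (A 0 0 * A 1 1 - A 0 1 * A 1 0) ^ 3 * D3 X Y Z := by
    simp only [actM_apply, D3]; ring
  rw [this, h]; ring

theorem actM_cone (A : Matrix (Fin 2) (Fin 2) ℝ) (h : A.det = 1) (X : V3) (hX : Cone X) :
    Cone (actM A X) := by
  refine ⟨?_, by rw [actM_Q A h]; exact hX.2⟩
  obtain ⟨h1, h2⟩ := hX
  rw [Matrix.det_fin_two] at h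
  unfold Q at h2
  simp only [actM_apply]
  have e : X.1 * (A 0 0 ^ 2 * X.1 + 2 * A 0 0 * A 0 1 * X.2.1 + A 0 1 ^ 2 * X.2.2)
      = (A 0 0 * X.1 + A 0 1 * X.2.1) ^ 2 + A 0 1 ^ 2 * (X.1 * X.2.2 - X.2.1 ^ 2) := by ring
  have : 0 < X.1 * (A 0 0 ^ 2 * X.1 + 2 * A 0 0 * A 0 1 * X.2.1 + A 0 1 ^ 2 * X.2.2) := by
    rw [e]
    by_cases hb : A 0 1 = 0
    · have ha : A 0 0 ≠ 0 := by
        rintro ha; rw [hb, ha] at h; simp at h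
      rw [hb]
      have : 0 < (A 0 0 * X.1) ^ 2 := by positivity
      simpa using this
    · have : 0 < A 0 1 ^ 2 * (X.1 * X.2.2 - X.2.1 ^ 2) := by positivity
      positivity
  exact pos_of_mul_pos_right this h1.le

theorem B_I0_actM (A : Matrix (Fin 2) (Fin 2) ℝ) :
    B I0 (actM A I0) = A 0 0 ^ 2 + A 0 1 ^ 2 + A 1 0 ^ 2 + A 1 1 ^ 2 := by
  simp [actM_apply, B, I0]; ring

abbrev mkP (A : SL(2, ℝ)) : PSL(2, ℝ) := QuotientGroup.mk A

theorem mkP_inv_mul (A A' : SL(2, ℝ)) : mkP (A⁻¹ * A') = (mkP A)⁻¹ * mkP A' := rfl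

theorem mkP_eq_one {A : SL(2, ℝ)} : mkP A = 1 ↔ A = 1 ∨ A = -1 := by
  rw [mkP, QuotientGroup.eq_one_iff, Matrix.SpecialLinearGroup.mem_center_iff]
  constructor
  · rintro ⟨r, hr, h⟩
    simp at hr
    rcases hr with rfl | rfl
    · left; ext i j; rw [← h]; simp
    · right; ext i j; rw [← h]; fin_cases i <;> fin_cases j <;> simp
  · rintro (rfl | rfl)
    · exact ⟨1, by simp, by simp⟩
    · exact ⟨-1, by simp, by ext i j; fin_cases i <;> fin_cases j <;> simp⟩


instance topGrpSL : IsTopologicalGroup SL(2, ℝ) :=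
  Matrix.SpecialLinearGroup.topologicalGroup

instance t1SL : T1Space SL(2, ℝ) := Matrix.SpecialLinearGroup.instT1Space

theorem embSL : Topology.IsClosedEmbedding (fun A : SL(2, ℝ) => A.1) :=
  Matrix.SpecialLinearGroup.isClosedEmbedding_val

theorem cont_mkP : Continuous mkP := continuous_quotient_mk'

theorem compactSL (C : ℝ) : IsCompact {A : SL(2, ℝ) | ∀ i j, |A.1 i j| ≤ C} := by
  have h : IsCompact (Set.univ.pi fun _ : Fin 2 => Set.univ.pi fun _ : Fin 2 => Set.Icc (-C) C) :=
    isCompact_univ_pi fun _ => isCompact_univ_pi fun _ => isCompact_Icc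
  have h2 := embSL.isCompact_preimage (K := Set.univ.pi fun _ : Fin 2 => Set.univ.pi fun _ : Fin 2 => Set.Icc (-C) C) h
  convert h2 using 1
  ext A
  constructor
  · intro hA i _ j _
    exact abs_le.mp (hA i j)
  · intro hA i j
    exact abs_le.mpr (hA i trivial j trivial)

theorem fin_of_discrete (P : Subgroup PSL(2, ℝ)) (hP : DiscreteTopology P) (C : ℝ) :
    {A : SL(2, ℝ) | mkP A ∈ P ∧ ∀ i j, |A.1 i j| ≤ C}.Finite := by
  obtain ⟨U, hU, hU1⟩ : ∃ U : Set PSL(2, ℝ), IsOpen U ∧ (Subtype.val : P → _) ⁻¹' U = {1} :=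
    isOpen_induced_iff.mp (isOpen_discrete ({1} : Set P))
  have h1U : (1 : PSL(2, ℝ)) ∈ U := by
    have : (1 : P) ∈ (Subtype.val : P → _) ⁻¹' U := by rw [hU1]; rfl
    exact this
  by_contra hinf
  obtain ⟨A0, -, hacc⟩ := Set.Infinite.exists_accPt_of_subset_isCompact hinf (compactSL C)
    (fun A hA => hA.2)
  have hc : Continuous fun q : SL(2, ℝ) × SL(2, ℝ) => mkP (q.1⁻¹ * q.2) := by
    refine cont_mkP.comp ?_
    fun_prop
  have hV : (fun q : SL(2, ℝ) × SL(2, ℝ) => mkP (q.1⁻¹ * q.2)) ⁻¹' U ∈ 𝓝 (A0, A0) := by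
    refine (hU.preimage hc).mem_nhds ?_
    show mkP (A0⁻¹ * A0) ∈ U
    rw [inv_mul_cancel]
    exact h1U
  rw [nhds_prod_eq, Filter.mem_prod_self_iff] at hV
  obtain ⟨W, hW, hWU⟩ := hV
  rw [accPt_iff_frequently] at hacc
  have hpair : ∀ A ∈ W, ∀ A' ∈ W, mkP A ∈ P → mkP A' ∈ P → A' = A ∨ A' = -A := by
    intro A hA A' hA' h h'
    have hu : mkP (A⁻¹ * A') ∈ U := by
      have := @hWU (A, A') (Set.mk_mem_prod hA hA')
      exact this
    have hp : mkP (A⁻¹ * A') ∈ P := by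
      rw [mkP_inv_mul]; exact P.mul_mem (P.inv_mem h) h'
    have : (⟨_, hp⟩ : P) ∈ (Subtype.val : P → _) ⁻¹' U := hu
    rw [hU1] at this
    have h1 : mkP (A⁻¹ * A') = 1 := congrArg Subtype.val this
    rcases mkP_eq_one.mp h1 with e | e
    · left; exact (inv_mul_eq_one.mp e).symm
    · right
      have := (inv_mul_eq_iff_eq_mul.mp e)
      rw [this]; simp
  -- pick two distinct points successively
  obtain ⟨A1, ⟨h1ne, h1⟩, h1W⟩ := (hacc.and_eventually hW).exists
  have hW2 : W ∩ {A1}ᶜ ∈ 𝓝 A0 :=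
    Filter.inter_mem hW (isOpen_compl_singleton.mem_nhds (Ne.symm h1ne))
  obtain ⟨A2, ⟨h2ne, h2⟩, h2W⟩ := (hacc.and_eventually hW2).exists
  have hW3 : (W ∩ {A1}ᶜ) ∩ {A2}ᶜ ∈ 𝓝 A0 :=
    Filter.inter_mem hW2 (isOpen_compl_singleton.mem_nhds (Ne.symm h2ne))
  obtain ⟨A3, ⟨h3ne, h3⟩, h3W⟩ := (hacc.and_eventually hW3).exists
  rcases hpair A1 h1W A2 h2W.1 h1.1 h2.1 with e | e
  · exact h2W.2 e
  rcases hpair A1 h1W A3 h3W.1.1 h1.1 h3.1 with e' | e'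
  · exact h3W.1.2 e'
  · exact h3W.2 (e'.trans e.symm)

section
variable {G : Type} [Group G] (ψ : G →* PSL(2, ℝ))

noncomputable def lft (ψ : G →* PSL(2, ℝ)) (g : G) : SL(2, ℝ) :=
  (QuotientGroup.mk_surjective (ψ g)).choose

theorem mk_lft (g : G) : mkP (lft ψ g) = ψ g := (QuotientGroup.mk_surjective (ψ g)).choose_spec

theorem act_eq_of_mk {A A' : SL(2, ℝ)} (h : mkP A = mkP A') : actM A.1 = actM A'.1 := by
  have h1 : mkP (A⁻¹ * A') = 1 := by
    show (mkP A)⁻¹ * mkP A' = 1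
    rw [h]; exact inv_mul_cancel _
  rcases mkP_eq_one.mp h1 with e | e
  · rw [inv_mul_eq_one.mp e]
  · rw [inv_mul_eq_iff_eq_mul.mp e]
    have : (A * -1).1 = -A.1 := by simp
    rw [this, actM_neg]

theorem act_lft_mul (g h : G) (X : V3) :
    actM (lft ψ (g * h)).1 X = actM (lft ψ g).1 (actM (lft ψ h).1 X) := by
  rw [← actM_mul]
  have : mkP (lft ψ (g * h)) = mkP (lft ψ g * lft ψ h) := by
    rw [mk_lft, map_mul, ← mk_lft ψ g, ← mk_lft ψ h]
    rfl
  rw [act_eq_of_mk this]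
  rfl

theorem act_lft_one (X : V3) : actM (lft ψ 1).1 X = X := by
  have : mkP (lft ψ 1) = mkP 1 := by
    rw [mk_lft, map_one]; rfl
  rw [act_eq_of_mk this]
  exact actM_one X

theorem fin_aux (hinj : Function.Injective ψ) (hd : DiscreteTopology ψ.range) (R : ℝ) :
    {g | B I0 (actM (lft ψ g).1 I0) ≤ R}.Finite := by
  have h := fin_of_discrete ψ.range hd (R + 1)
  refine Set.Finite.of_finite_image (f := lft ψ) (h.subset ?_) ?_
  · rintro _ ⟨g, hg, rfl⟩
    have hg' : B I0 (actM (lft ψ g).1 I0) ≤ R := hg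
    refine ⟨by rw [mk_lft]; exact ⟨g, rfl⟩, fun i j => ?_⟩
    rw [B_I0_actM] at hg'
    set A := (lft ψ g).1
    have key : ∀ x : ℝ, x ^ 2 ≤ R → |x| ≤ R + 1 := by
      intro x hx
      rw [abs_le]
      constructor <;> nlinarith [sq_nonneg (x - 1), sq_nonneg (x + 1), sq_nonneg x]
    apply key
    have := sq_nonneg (A 0 0)
    have := sq_nonneg (A 0 1)
    have := sq_nonneg (A 1 0)
    have := sq_nonneg (A 1 1)
    fin_cases i <;> fin_cases j <;> simp <;> linarith
  · intro g _ g' _ e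
    apply hinj
    rw [← mk_lft, ← mk_lft, e]

/-- The orbit system of a torsion-free discrete subgroup. -/
noncomputable def toSys (hinj : Function.Injective ψ) (hd : DiscreteTopology ψ.range)
    (htf : ∀ (g : G) (n : ℕ), 0 < n → g ^ n = 1 → g = 1) : Sys G where
  v g := actM (lft ψ g).1 I0
  act g := actM (lft ψ g).1
  v_mul g h := act_lft_mul ψ g h I0
  act_B g := actM_B _ (lft ψ g).2
  act_cone g := actM_cone _ (lft ψ g).2
  act_det g := actM_D3 _ (lft ψ g).2
  act_inv g X := by rw [← act_lft_mul, inv_mul_cancel, act_lft_one]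
  act_mul := act_lft_mul ψ
  v_cone g := actM_cone _ (lft ψ g).2 _ cone_I0
  v_Q g := by rw [actM_Q _ (lft ψ g).2]; simp [Q, I0]
  v_one := act_lft_one ψ I0
  v_inj := by
    intro g h e
    have e' : actM (lft ψ g).1 I0 = actM (lft ψ h).1 I0 := e
    have h1 : actM (lft ψ (g⁻¹ * h)).1 I0 = I0 := by
      rw [act_lft_mul, ← e', ← act_lft_mul, inv_mul_cancel, act_lft_one]
    have h2 : ∀ n : ℕ, actM (lft ψ ((g⁻¹ * h) ^ n)).1 I0 = I0 := by
      intro n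
      induction n with
      | zero => rw [pow_zero, act_lft_one]
      | succ n ih => rw [pow_succ, act_lft_mul, h1, ih]
    have hf := fin_aux ψ hinj hd (B I0 I0)
    have h3 : (Set.range fun n : ℕ => (g⁻¹ * h) ^ n).Finite := by
      refine hf.subset ?_
      rintro _ ⟨n, rfl⟩
      show B I0 (actM (lft ψ ((g⁻¹ * h) ^ n)).1 I0) ≤ _
      rw [h2]
    have h4 : ¬ Function.Injective fun n : ℕ => (g⁻¹ * h) ^ n := fun hi =>
      Set.infinite_range_of_injective hi h3
    have h5 : IsOfFinOrder (g⁻¹ * h) := by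
      by_contra hn
      exact h4 (injective_pow_iff_not_isOfFinOrder.mpr hn)
    obtain ⟨n, hn, hn'⟩ := isOfFinOrder_iff_pow_eq_one.mp h5
    exact inv_mul_eq_one.mp (htf _ n hn hn')
  fin := fin_aux ψ hinj hd
  tf := htf

theorem main_tf (hinj : Function.Injective ψ) (hd : DiscreteTopology ψ.range)
    (htf : ∀ (g : G) (n : ℕ), 0 < n → g ^ n = 1 → g = 1) :
    IsFreeGroupOn G ∨ IsSurfaceGroup G := (toSys ψ hinj hd htf).main
end

end Hyp
end

section
open scoped MatrixGroups

namespace Sel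

theorem int_jacobson : IsJacobsonRing ℤ := by
  rw [isJacobsonRing_iff_prime_eq]
  intro P hP
  by_cases h : P = ⊥
  · subst h
    rw [eq_bot_iff]
    intro x hx
    rw [Ideal.mem_jacobson_bot] at hx
    have := hx x
    rw [Int.isUnit_iff] at this
    have h0 : x * x = 0 := by
      rcases this with h | h
      · linarith
      · nlinarith [mul_self_nonneg x]
    exact mul_self_eq_zero.mp h0
  · have : P.IsMaximal := hP.isMaximal h
    exact Ideal.jacobson_eq_self_of_isMaximal

theorem field_fin (K : Type) [Field K] [alg : Algebra ℤ K] [Algebra.FiniteType ℤ K] :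
    Finite K := by
  obtain rfl : alg = Ring.toIntAlgebra K := Subsingleton.elim _ _
  have := int_jacobson
  have hf : Module.Finite ℤ K := finite_of_finite_type_of_isJacobsonRing ℤ K
  obtain ⟨p, hp⟩ := CharP.exists K
  by_cases h0 : p = 0
  · subst h0
    have : CharZero K := CharP.charP_to_charZero K
    have hi : Function.Injective (algebraMap ℤ K) := by
      intro a b h; simpa using h
    have : Algebra.IsIntegral ℤ K := inferInstance
    exact absurd (isField_of_isIntegral_of_isField hi (Field.toIsField K)) Int.not_isField
  · have ht : Module.IsTorsion ℤ K := by
      intro x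
      refine ⟨⟨(p : ℤ), ?_⟩, ?_⟩
      · rw [mem_nonZeroDivisors_iff_ne_zero]; exact_mod_cast h0
      · show (p : ℤ) • x = 0
        rw [zsmul_eq_mul]; simp
    exact Module.finite_of_fg_torsion K ht

theorem quot_fin {A : Type} [CommRing A] [Algebra.FiniteType ℤ A] (m : Ideal A) (hm : m.IsMaximal) :
    Finite (A ⧸ m) := by
  let := Ideal.Quotient.field m
  have : Algebra.FiniteType ℤ (A ⧸ m) :=
    Algebra.FiniteType.of_surjective (Ideal.Quotient.mkₐ ℤ m) (Ideal.Quotient.mkₐ_surjective ℤ m)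
  exact field_fin (A ⧸ m)

theorem pow_expand {R : Type} [Ring R] (X : R) (n : ℕ) :
    ∃ Y, (1 + X) ^ n = 1 + n * X + X * X * Y := by
  induction n with
  | zero => exact ⟨0, by simp⟩
  | succ n ih =>
    obtain ⟨Y, hY⟩ := ih
    refine ⟨Y + n + Y * X, ?_⟩
    rw [pow_succ, hY]
    have : (n : R) * X * X = X * X * n := by
      rw [mul_assoc]; exact (Nat.cast_commute n (X * X))
    push_cast
    calc (1 + n * X + X * X * Y) * (1 + X)
        = 1 + (n + 1) * X + X * X * (Y + Y * X) + n * X * X := by noncomm_ring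
      _ = _ := by rw [this]; noncomm_ring

theorem core {R : Type} [CommRing R] [IsDomain R] [IsNoetherianRing R] (m : Ideal R)
    (hm : m.IsMaximal) (r : ℕ) (hr : (r : R) ∉ m) (a : Matrix (Fin 2) (Fin 2) R)
    (ha : ∀ i j, (a - 1) i j ∈ m) (hp : a ^ r = 1) : a = 1 := by
  obtain ⟨X, rfl⟩ : ∃ X, a = 1 + X := ⟨a - 1, by simp⟩
  obtain ⟨Y, hY⟩ := pow_expand X r
  have e : (r : Matrix (Fin 2) (Fin 2) R) * X = - (X * X * Y) := by
    rw [hp] at hY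
    have : (r : Matrix (Fin 2) (Fin 2) R) * X + X * X * Y = 0 := by
      have := hY.symm
      rw [add_assoc] at this
      simpa using this
    exact eq_neg_of_add_eq_zero_left this
  have e' : ∀ i j, (r : R) * X i j = - (X * X * Y) i j := by
    intro i j
    have := congrFun (congrFun e i) j
    have h2 : ((r : Matrix (Fin 2) (Fin 2) R) * X) i j = (r : R) * X i j := by
      rw [← nsmul_eq_mul, Matrix.smul_apply, nsmul_eq_mul]
    rw [← h2]
    exact this
  have hX : ∀ i j, X i j ∈ m := by simpa using ha
  have hk : ∀ k : ℕ, ∀ i j, X i j ∈ m ^ (k + 1) := by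
    intro k
    induction k with
    | zero => simpa using hX
    | succ k ih =>
      intro i j
      have h1 : (r : R) * X i j ∈ m ^ (k + 1 + 1) := by
        rw [e' i j, neg_mem_iff, Matrix.mul_apply]
        refine Ideal.sum_mem _ fun c _ => Ideal.mul_mem_right _ _ ?_
        rw [Matrix.mul_apply]
        refine Ideal.sum_mem _ fun d _ => ?_
        rw [pow_succ]
        exact Ideal.mul_mem_mul (ih _ _) (hX _ _)
      obtain ⟨s, y, hy, hxy⟩ := Ideal.IsMaximal.exists_inv_pow m hr (k + 1 + 1)
      have : X i j = s * (r * X i j) + y * X i j := by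
        rw [← mul_assoc, ← add_mul, hxy, one_mul]
      rw [this]
      exact Ideal.add_mem _ (Ideal.mul_mem_left _ _ h1) (Ideal.mul_mem_right _ _ hy)
  have hz : ∀ i j, X i j = 0 := by
    intro i j
    have : X i j ∈ ⨅ k : ℕ, m ^ k := by
      rw [Ideal.mem_iInf]
      intro k
      exact Ideal.pow_le_pow_right (Nat.le_succ k) (hk k i j)
    rw [Ideal.iInf_pow_eq_bot_of_isDomain m hm.ne_top] at this
    exact this
  have : X = 0 := by ext i j; exact hz i j
  rw [this, add_zero]

end Sel
end

section
open scoped MatrixGroups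

namespace Sel

theorem core_SL {R R' : Type} [CommRing R] [CommRing R'] [IsDomain R'] [IsNoetherianRing R']
    (f : R →+* R') (hf : Function.Injective f) (m : Ideal R')
    (hm : m.IsMaximal) (r : ℕ) (hr : (r : R') ∉ m) (a : SL(2, R))
    (ha : Matrix.SpecialLinearGroup.map ((Ideal.Quotient.mk m).comp f) a = 1) (hp : a ^ r = 1) :
    a = 1 := by
  have h1 : (Matrix.SpecialLinearGroup.map f a).1 = 1 := by
    refine core m hm r hr _ ?_ ?_
    · intro i j
      rw [← Ideal.Quotient.eq_zero_iff_mem]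
      have := congrArg (fun b : SL(2, R' ⧸ m) => b.1 i j) ha
      have h2 : Ideal.Quotient.mk m (f (a.1 i j)) = (1 : Matrix (Fin 2) (Fin 2) (R' ⧸ m)) i j := this
      rw [Matrix.sub_apply, map_sub]
      have h3 : (Matrix.SpecialLinearGroup.map f a).1 i j = f (a.1 i j) := rfl
      rw [h3, h2, Matrix.one_apply, Matrix.one_apply]
      split_ifs <;> simp
    · have : Matrix.SpecialLinearGroup.map f a ^ r = 1 := by rw [← map_pow, hp, map_one]
      have := congrArg Subtype.val this
      simpa using this
  ext i j
  apply hf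
  have := congrFun (congrFun h1 i) j
  have h3 : (Matrix.SpecialLinearGroup.map f a).1 i j = f (a.1 i j) := rfl
  rw [h3] at this
  rw [this]
  simp only [Matrix.SpecialLinearGroup.coe_one, Matrix.one_apply]
  split_ifs <;> simp

theorem sel_ring {A A' : Type} [CommRing A] [IsDomain A] [Algebra.FiniteType ℤ A]
    [CommRing A'] [IsDomain A'] [Algebra.FiniteType ℤ A'] (f : A →+* A')
    (hf : Function.Injective f) (m1 : Ideal A) (m2 : Ideal A') (h1 : m1.IsMaximal)
    (h2 : m2.IsMaximal) (h : ∀ r : ℕ, r.Prime → (r : A) ∉ m1 ∨ (r : A') ∉ m2) :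
    ∃ K : Subgroup SL(2, A), K.FiniteIndex ∧ ∀ a ∈ K, ∀ n : ℕ, 0 < n → a ^ n = 1 → a = 1 := by
  have n1 : IsNoetherianRing A := Algebra.FiniteType.isNoetherianRing ℤ A
  have n2 : IsNoetherianRing A' := Algebra.FiniteType.isNoetherianRing ℤ A'
  have f1 : Finite (A ⧸ m1) := quot_fin m1 h1
  have f2 : Finite (A' ⧸ m2) := quot_fin m2 h2
  have f1' : Finite SL(2, A ⧸ m1) := Subtype.finite
  have f2' : Finite SL(2, A' ⧸ m2) := Subtype.finite
  let K1 : Subgroup SL(2, A) :=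
    (Matrix.SpecialLinearGroup.map (n := Fin 2) ((Ideal.Quotient.mk m1).comp (RingHom.id A))).ker
  let K2 : Subgroup SL(2, A) :=
    (Matrix.SpecialLinearGroup.map (n := Fin 2) ((Ideal.Quotient.mk m2).comp f)).ker
  have k1 : K1.FiniteIndex := Subgroup.finiteIndex_ker _
  have k2 : K2.FiniteIndex := Subgroup.finiteIndex_ker _
  refine ⟨K1 ⊓ K2, inferInstance, ?_⟩
  intro a ha n hn hpow
  by_contra hne
  have ho : orderOf a ≠ 1 := fun e => hne (orderOf_eq_one_iff.mp e)
  have ho' : 0 < orderOf a := orderOf_pos_iff.mpr (isOfFinOrder_iff_pow_eq_one.mpr ⟨n, hn, hpow⟩)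
  obtain ⟨r, hr, k, hk⟩ := Nat.exists_prime_and_dvd ho
  have hb : (a ^ k) ^ r = 1 := by
    rw [← pow_mul, mul_comm, ← hk, pow_orderOf_eq_one]
  have hbK : a ^ k ∈ K1 ⊓ K2 := pow_mem ha k
  have hk0 : 0 < k := by
    rcases Nat.eq_zero_or_pos k with h | h
    · subst h; omega
    · exact h
  have hb1 : a ^ k = 1 := by
    rcases h r hr with h | h
    · exact core_SL (RingHom.id A) Function.injective_id m1 h1 r h _ hbK.1 hb
    · exact core_SL f hf m2 h2 r h _ hbK.2 hb
  have := orderOf_le_of_pow_eq_one hk0 hb1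
  rw [hk] at this
  nlinarith [hr.two_le]

theorem sel_real (E : Set ℝ) (hE : E.Finite) :
    ∃ K : Subgroup SL(2, Algebra.adjoin ℤ E), K.FiniteIndex ∧
      ∀ a ∈ K, ∀ n : ℕ, 0 < n → a ^ n = 1 → a = 1 := by
  have t1 : Algebra.FiniteType ℤ (Algebra.adjoin ℤ E) := Algebra.FiniteType.adjoin_of_finite hE
  obtain ⟨m1, h1⟩ := Ideal.exists_maximal (Algebra.adjoin ℤ E)
  have f1 := quot_fin m1 h1
  obtain ⟨p, hp⟩ := CharP.exists (Algebra.adjoin ℤ E ⧸ m1)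
  have hpp : p.Prime := by
    let := Ideal.Quotient.field m1
    have : NeZero p := ⟨CharP.char_ne_zero_of_finite (Algebra.adjoin ℤ E ⧸ m1) p⟩
    exact (CharP.char_is_prime_or_zero (Algebra.adjoin ℤ E ⧸ m1) p).resolve_right (NeZero.ne p)
  let E' : Set ℝ := E ∪ {(p : ℝ)⁻¹}
  have t2 : Algebra.FiniteType ℤ (Algebra.adjoin ℤ E') :=
    Algebra.FiniteType.adjoin_of_finite (hE.union (Set.finite_singleton _))
  obtain ⟨m2, h2⟩ := Ideal.exists_maximal (Algebra.adjoin ℤ E')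
  have hle : Algebra.adjoin ℤ E ≤ Algebra.adjoin ℤ E' := Algebra.adjoin_mono Set.subset_union_left
  refine sel_ring (Subalgebra.inclusion hle).toRingHom (Subalgebra.inclusion_injective hle)
    m1 m2 h1 h2 ?_
  intro r hr
  by_cases hrm : ((r : ℕ) : Algebra.adjoin ℤ E) ∈ m1
  · right
    have : (r : Algebra.adjoin ℤ E ⧸ m1) = 0 := by
      have := Ideal.Quotient.eq_zero_iff_mem.mpr hrm
      simpa using this
    have hd := (CharP.cast_eq_zero_iff _ p r).mp this
    have : p = r := (Nat.prime_dvd_prime_iff_eq hpp hr).mp hd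
    subst this
    intro hm
    have hin : (p : ℝ)⁻¹ ∈ Algebra.adjoin ℤ E' := Algebra.subset_adjoin (Or.inr rfl)
    refine h2.ne_top (Ideal.eq_top_of_isUnit_mem _ hm ?_)
    refine IsUnit.of_mul_eq_one ⟨_, hin⟩ ?_
    ext
    have : (p : ℝ) ≠ 0 := by exact_mod_cast hpp.ne_zero
    simp [this]
  · left; exact hrm

theorem selberg {G : Type} [Group G] (hfg : Group.FG G) (ψ : G →* PSL(2, ℝ))
    (hinj : Function.Injective ψ) :
    ∃ N : Subgroup G, N.FiniteIndex ∧ ∀ a ∈ N, ∀ n : ℕ, 0 < n → a ^ n = 1 → a = 1 := by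
  obtain ⟨s, hs, hsf⟩ := Group.fg_iff.mp hfg
  let E : Set ℝ := ⋃ g ∈ s, ⋃ i, ⋃ j, {(Hyp.lft ψ g).1 i j}
  have hE : E.Finite := by
    refine hsf.biUnion fun g _ => Set.finite_iUnion fun i => Set.finite_iUnion fun j =>
      Set.finite_singleton _
  obtain ⟨K, hK, htf⟩ := sel_real E hE
  let A := Algebra.adjoin ℤ E
  let ι : SL(2, A) →* SL(2, ℝ) := Matrix.SpecialLinearGroup.map (algebraMap A ℝ)
  let q : SL(2, ℝ) →* PSL(2, ℝ) := QuotientGroup.mk' _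
  let θ : SL(2, A) →* PSL(2, ℝ) := q.comp ι
  have hιinj : Function.Injective ι := by
    intro a b h
    ext i j
    have := congrArg (fun c : SL(2, ℝ) => c.1 i j) h
    exact this
  have hr : ψ.range ≤ θ.range := by
    rw [MonoidHom.range_eq_map, ← hs, MonoidHom.map_closure, Subgroup.closure_le]
    rintro _ ⟨g, hg, rfl⟩
    have hmem : ∀ i j, (Hyp.lft ψ g).1 i j ∈ A := by
      intro i j
      refine Algebra.subset_adjoin ?_
      simp only [E, Set.mem_iUnion]
      exact ⟨g, hg, i, j, rfl⟩
    let M : Matrix (Fin 2) (Fin 2) A := fun i j => ⟨_, hmem i j⟩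
    have hM : M.det = 1 := by
      have h2 := (Hyp.lft ψ g).2
      apply Subtype.ext
      rw [Matrix.det_fin_two] at h2 ⊢
      exact h2
    refine ⟨⟨M, hM⟩, ?_⟩
    have : ι ⟨M, hM⟩ = Hyp.lft ψ g := by ext i j; rfl
    show q (ι ⟨M, hM⟩) = _
    rw [this]
    exact Hyp.mk_lft ψ g
  refine ⟨(K.map θ).comap ψ, ?_, ?_⟩
  · constructor
    rw [Subgroup.index_comap]
    have h1 : (K.map θ).relIndex θ.range ≠ 0 := by
      rw [MonoidHom.range_eq_map]
      rw [Subgroup.relIndex_map_map]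
      have hK0 : K.relIndex (⊤ ⊔ θ.ker) ≠ 0 := by
        rw [top_sup_eq, Subgroup.relIndex_top_right]
        exact hK.index_ne_zero
      exact fun h0 => hK0 (Nat.eq_zero_of_zero_dvd
        (h0 ▸ Subgroup.relIndex_dvd_of_le_left _ le_sup_left))
    exact fun h0 => h1 (Subgroup.relIndex_eq_zero_of_le_right hr h0)
  · rintro g ⟨a, ha, hag⟩ n hn hgn
    have h1 : Hyp.mkP (ι (a ^ n)) = 1 := by
      have : θ (a ^ n) = 1 := by rw [map_pow, hag, ← map_pow, hgn, map_one]
      exact this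
    have h2 : (ι (a ^ n)) ^ 2 = 1 := by
      rcases Hyp.mkP_eq_one.mp h1 with h | h <;> rw [h] <;> simp
    have h3 : a ^ (n * 2) = 1 := by
      apply hιinj
      rw [pow_mul, map_pow, h2, map_one]
    have h4 := htf a ha (n * 2) (by omega) h3
    apply hinj
    rw [← hag, h4, map_one, map_one]

end Sel
end

section
open scoped MatrixGroups

namespace Ext

theorem fi_of_map {E Q : Type} [Group E] [Group Q] (τ : E →* Q) (hs : Function.Surjective τ)
    (hk : Finite τ.ker) (L : Subgroup E) (hL : (L.map τ).FiniteIndex) : L.FiniteIndex := by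
  have hq : Finite (Q ⧸ L.map τ) := inferInstance
  choose s hsec using hs
  let f : (Q ⧸ L.map τ) × τ.ker → E ⧸ L := fun p => QuotientGroup.mk (s p.1.out * p.2.1)
  have hf : Function.Surjective f := by
    intro x
    obtain ⟨e, rfl⟩ := QuotientGroup.mk_surjective x
    let q : Q ⧸ L.map τ := QuotientGroup.mk (τ e)
    have h1 : (q.out)⁻¹ * τ e ∈ L.map τ := by
      rw [← QuotientGroup.eq]
      exact Quotient.out_eq q
    obtain ⟨l, hl, hle⟩ := h1
    have hk : (s q.out)⁻¹ * e * l⁻¹ ∈ τ.ker := by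
      rw [MonoidHom.mem_ker, map_mul, map_mul, map_inv, map_inv, hle, hsec]
      group
    refine ⟨(q, ⟨_, hk⟩), ?_⟩
    show (QuotientGroup.mk (s q.out * ((s q.out)⁻¹ * e * l⁻¹)) : E ⧸ L) = QuotientGroup.mk e
    rw [QuotientGroup.eq]
    have : (s q.out * ((s q.out)⁻¹ * e * l⁻¹))⁻¹ * e = l := by group
    rw [this]
    exact hl
  have : Finite (E ⧸ L) := Finite.of_surjective f hf
  exact Subgroup.finiteIndex_of_finite_quotient

/-- Shear on the discrete torus. -/
def α (n : ℕ) : Equiv.Perm (ZMod n × ZMod n) where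
  toFun p := (p.1, p.2 + p.1)
  invFun p := (p.1, p.2 - p.1)
  left_inv p := by simp
  right_inv p := by simp

def β (n : ℕ) : Equiv.Perm (ZMod n × ZMod n) where
  toFun p := (p.1 + 1, p.2)
  invFun p := (p.1 - 1, p.2)
  left_inv p := by simp
  right_inv p := by simp

def γ (n : ℕ) : Equiv.Perm (ZMod n × ZMod n) where
  toFun p := (p.1, p.2 + 1)
  invFun p := (p.1, p.2 - 1)
  left_inv p := by simp
  right_inv p := by simp

theorem comm_αβ (n : ℕ) : α n * β n * (α n)⁻¹ * (β n)⁻¹ = γ n := by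
  rw [mul_inv_eq_iff_eq_mul, mul_inv_eq_iff_eq_mul]
  ext p <;> simp [α, β, γ]; ring

theorem γα (n : ℕ) : γ n * α n = α n * γ n := by
  ext p <;> simp [α, γ]; ring

theorem γβ (n : ℕ) : γ n * β n = β n * γ n := by
  ext p <;> simp [β, γ]

theorem γ_pow (n : ℕ) (k : ℕ) (p : ZMod n × ZMod n) : (γ n ^ k) p = (p.1, p.2 + k) := by
  induction k with
  | zero => simp
  | succ k ih =>
    rw [pow_succ', Equiv.Perm.mul_apply, ih]
    simp [γ]; ring

theorem γ_pow_one (n : ℕ) (k : ℕ) (h : γ n ^ k = 1) : n ∣ k := by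
  have := γ_pow n k (0, 0)
  rw [h] at this
  have := congrArg Prod.snd this
  simp at this
  exact (ZMod.natCast_eq_zero_iff k n).mp this.symm

theorem γ_zpow_one (n : ℕ) (k : ℤ) (h : γ n ^ k = 1) : (n : ℤ) ∣ k := by
  have : γ n ^ k.natAbs = 1 := by
    rcases Int.natAbs_eq k with e | e
    · rw [e] at h; rw [zpow_natCast] at h; exact h
    · rw [e] at h; rw [zpow_neg, zpow_natCast, inv_eq_one] at h; exact h
  exact Int.natCast_dvd.mpr (γ_pow_one n _ this)

def psi (n m : ℕ) : FreeGroup (Fin (m + 1) × Fin 2) →* Equiv.Perm (ZMod n × ZMod n) :=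
  FreeGroup.lift fun p => if p.1 = 0 then (if p.2 = 0 then α n else β n) else 1

theorem psi_rel (n m : ℕ) : psi n m (surfaceRelator (m + 1)) = γ n := by
  rw [surfaceRelator, List.ofFn_succ, List.prod_cons, map_mul, map_list_prod, List.map_ofFn]
  have h1 : (List.ofFn (⇑(psi n m) ∘ fun i : Fin m => FreeGroup.of (i.succ, (0 : Fin 2)) *
      FreeGroup.of (i.succ, 1) * (FreeGroup.of (i.succ, 0))⁻¹ *
      (FreeGroup.of (i.succ, 1))⁻¹)).prod = 1 := by
    apply List.prod_eq_one
    intro x hx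
    obtain ⟨i, rfl⟩ := (List.mem_ofFn' _ _).mp hx
    simp [psi]
  rw [h1, mul_one, ← comm_αβ]
  simp [psi]

theorem psi_comm (n m : ℕ) (w : FreeGroup (Fin (m + 1) × Fin 2)) :
    Commute (γ n) (psi n m w) := by
  induction w using FreeGroup.induction_on with
  | C1 => rw [map_one]; exact Commute.one_right _
  | of x =>
    rw [psi, FreeGroup.lift_apply_of]
    split_ifs
    · exact γα n
    · exact γβ n
    · exact Commute.one_right _
  | inv_of x h => rw [map_inv]; exact h.inv_right
  | mul x y hx hy => rw [map_mul]; exact hx.mul_right hy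

theorem surf_ext {E : Type} [Group E] (m : ℕ) (τ : E →* SurfaceGroup (m + 1))
    (hs : Function.Surjective τ) (hk : Finite τ.ker) (hc : τ.ker ≤ Subgroup.center E) :
    ∃ L : Subgroup E, L.FiniteIndex ∧ L ⊓ τ.ker = ⊥ := by
  let lam : FreeGroup (Fin (m + 1) × Fin 2) →* E :=
    FreeGroup.lift fun p => (hs (PresentedGroup.of p)).choose
  have hlam : ∀ w, τ (lam w) = PresentedGroup.mk {surfaceRelator (m + 1)} w := by
    have : τ.comp lam = PresentedGroup.mk {surfaceRelator (m + 1)} := by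
      ext p
      show τ (lam (FreeGroup.of p)) = _
      rw [FreeGroup.lift_apply_of, (hs (PresentedGroup.of p)).choose_spec]
      rfl
    exact fun w => DFunLike.congr_fun this w
  let z := lam (surfaceRelator (m + 1))
  have hz : z ∈ τ.ker := by
    rw [MonoidHom.mem_ker, hlam]
    exact PresentedGroup.one_of_mem rfl
  have hzc : ∀ g : E, g * z = z * g := fun g => Subgroup.mem_center_iff.mp (hc hz) g
  have hn : 0 < orderOf z := by
    have : 0 < orderOf (⟨z, hz⟩ : τ.ker) := orderOf_pos _
    rwa [Subgroup.orderOf_mk] at this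
  set n := orderOf z with hndef
  have : NeZero n := ⟨hn.ne'⟩
  let T : Subgroup (FreeGroup (Fin (m + 1) × Fin 2)) :=
    { carrier := {w | ∃ k : ℤ, lam w = z ^ k ∧ psi n m w = γ n ^ k}
      one_mem' := ⟨0, by simp, by simp⟩
      mul_mem' := by
        rintro a b ⟨k, h1, h2⟩ ⟨l, h3, h4⟩
        exact ⟨k + l, by rw [map_mul, h1, h3, zpow_add], by rw [map_mul, h2, h4, zpow_add]⟩
      inv_mem' := by
        rintro a ⟨k, h1, h2⟩
        exact ⟨-k, by rw [map_inv, h1, zpow_neg], by rw [map_inv, h2, zpow_neg]⟩ }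
  have hT : T.Normal := by
    constructor
    rintro w ⟨k, h1, h2⟩ g
    refine ⟨k, ?_, ?_⟩
    · rw [map_mul, map_mul, map_inv, h1]
      have : Commute (lam g) z := hzc _
      rw [(this.zpow_right k).eq, mul_inv_cancel_right]
    · rw [map_mul, map_mul, map_inv, h2]
      have : Commute (psi n m g) (γ n) := (psi_comm n m g).symm
      rw [(this.zpow_right k).eq, mul_inv_cancel_right]
  have hnc : Subgroup.normalClosure {surfaceRelator (m + 1)} ≤ T := by
    apply Subgroup.normalClosure_le_normal
    rintro _ rfl
    exact ⟨1, by rw [zpow_one], by rw [zpow_one, psi_rel]⟩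
  refine ⟨(psi n m).ker.map lam, ?_, ?_⟩
  · apply fi_of_map τ hs hk
    constructor
    rw [Subgroup.map_map]
    have hsm : Function.Surjective (τ.comp lam) := by
      intro x
      obtain ⟨w, rfl⟩ := PresentedGroup.mk_surjective _ x
      exact ⟨w, hlam w⟩
    have hfi : (psi n m).ker.FiniteIndex := Subgroup.finiteIndex_ker _
    intro h0
    have := Subgroup.index_map_dvd (psi n m).ker hsm
    rw [h0, zero_dvd_iff] at this
    exact hfi.index_ne_zero this
  · rw [eq_bot_iff]
    rintro x ⟨⟨w, hw, rfl⟩, hx⟩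
    have h1 : PresentedGroup.mk {surfaceRelator (m + 1)} w = 1 := by
      rw [← hlam]; exact hx
    have h2 : w ∈ Subgroup.normalClosure {surfaceRelator (m + 1)} :=
      (QuotientGroup.eq_one_iff w).mp h1
    obtain ⟨k, h3, h4⟩ := hnc h2
    have h5 : psi n m w = 1 := hw
    rw [h5] at h4
    obtain ⟨l, rfl⟩ := γ_zpow_one n k h4.symm
    rw [Subgroup.mem_bot, h3, zpow_mul, zpow_natCast, pow_orderOf_eq_one, one_zpow]

theorem free_ext {E S : Type} [Group E] (τ : E →* FreeGroup S)
    (hs : Function.Surjective τ) (hk : Finite τ.ker) :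
    ∃ L : Subgroup E, L.FiniteIndex ∧ L ⊓ τ.ker = ⊥ := by
  let lam : FreeGroup S →* E := FreeGroup.lift fun p => (hs (FreeGroup.of p)).choose
  have hlam : ∀ w, τ (lam w) = w := by
    have : τ.comp lam = MonoidHom.id _ := by
      ext p
      show τ (lam (FreeGroup.of p)) = _
      rw [FreeGroup.lift_apply_of, (hs (FreeGroup.of p)).choose_spec]
      rfl
    exact fun w => DFunLike.congr_fun this w
  refine ⟨lam.range, fi_of_map τ hs hk _ ?_, ?_⟩
  · have : lam.range.map τ = ⊤ := by
      rw [eq_top_iff]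
      intro w _
      exact ⟨lam w, ⟨w, rfl⟩, hlam w⟩
    rw [this]
    infer_instance
  · rw [eq_bot_iff]
    rintro x ⟨⟨w, rfl⟩, hx⟩
    have h1 : τ (lam w) = 1 := hx
    rw [hlam] at h1
    rw [h1, map_one]
    exact Subgroup.one_mem _

theorem gen_ext {E Q : Type} [Group E] [Group Q] (τ : E →* Q)
    (hs : Function.Surjective τ) (hk : Finite τ.ker) (hc : τ.ker ≤ Subgroup.center E)
    (hQ : IsFreeGroupOn Q ∨ IsSurfaceGroup Q) :
    ∃ L : Subgroup E, L.FiniteIndex ∧ L ⊓ τ.ker = ⊥ := by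
  have hker : ∀ {Q' : Type} [Group Q'] (e : Q ≃* Q'), (e.toMonoidHom.comp τ).ker = τ.ker := by
    intro Q' _ e
    ext x
    simp [MonoidHom.mem_ker]
  rcases hQ with ⟨S, ⟨e⟩⟩ | ⟨g, hg, ⟨e⟩⟩
  · have := free_ext (e.toMonoidHom.comp τ) (e.surjective.comp hs) (by rw [hker]; exact hk)
    rwa [hker] at this
  · obtain ⟨m, rfl⟩ : ∃ m, g = m + 1 := ⟨g - 1, by omega⟩
    have := surf_ext m (e.toMonoidHom.comp τ) (e.surjective.comp hs) (by rw [hker]; exact hk)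
      (by rw [hker]; exact hc)
    rwa [hker] at this

theorem final {Γ Γ' : Type} [Group Γ] [Group Γ']
    (hfg : Group.FG Γ')
    (ψ : Γ' →* PSL(2, ℝ)) (hinj : Function.Injective ψ)
    (hdisc : DiscreteTopology ψ.range)
    (π : Γ →* Γ') (hker : Finite π.ker) :
    ∃ H : Subgroup Γ, H.FiniteIndex ∧ (IsFreeGroupOn H ∨ IsSurfaceGroup H) := by
  obtain ⟨N, hN, htf⟩ := Sel.selberg hfg ψ hinj
  let Γ1 : Subgroup Γ := (MulAut.conjNormal (H := π.ker)).ker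
  have hfm : Finite (MulAut π.ker) := Finite.of_injective (fun e => (e : π.ker → π.ker))
    DFunLike.coe_injective
  have h1 : Γ1.FiniteIndex := Subgroup.finiteIndex_ker _
  have h1c : ∀ g ∈ Γ1, ∀ x ∈ π.ker, g * x = x * g := by
    intro g hg x hx
    have e : MulAut.conjNormal (H := π.ker) g = 1 := hg
    have := congrArg (fun f : MulAut π.ker => (f ⟨x, hx⟩ : Γ)) e
    have h2 : g * x * g⁻¹ = x := by simpa using this
    exact mul_inv_eq_iff_eq_mul.mp h2
  let Γ2 : Subgroup Γ := N.comap π ⊓ Γ1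
  have hc2 : (N.comap π).FiniteIndex := ⟨by
    rw [Subgroup.index_comap]
    exact fun h0 => hN.index_ne_zero (by
      rw [← Subgroup.relIndex_top_right]
      exact Subgroup.relIndex_eq_zero_of_le_right le_top h0)⟩
  have h2 : Γ2.FiniteIndex := inferInstance
  let Q := (π.comp Γ2.subtype).range
  let τ : Γ2 →* Q := (π.comp Γ2.subtype).rangeRestrict
  have hτs : Function.Surjective τ := MonoidHom.rangeRestrict_surjective _
  have hτ : ∀ x : Γ2, x ∈ τ.ker ↔ (x : Γ) ∈ π.ker := by
    intro x
    rw [MonoidHom.ker_rangeRestrict]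
    rfl
  have hτk : Finite τ.ker := by
    refine Finite.of_injective (fun x : τ.ker => (⟨x.1.1, (hτ x.1).mp x.2⟩ : π.ker)) ?_
    intro x y h
    apply Subtype.ext; apply Subtype.ext
    exact congrArg (fun t : π.ker => t.1) h
  have hτc : τ.ker ≤ Subgroup.center Γ2 := by
    intro x hx
    rw [Subgroup.mem_center_iff]
    intro g
    apply Subtype.ext
    exact h1c g.1 g.2.2 x.1 ((hτ x).mp hx)
  have disc : ∀ {K : Type} [Group K] (f : K →* Γ'), DiscreteTopology (ψ.comp f).range := by
    intro K _ f
    have hle : ((ψ.comp f).range : Set PSL(2, ℝ)) ⊆ ψ.range := by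
      rintro _ ⟨x, rfl⟩; exact ⟨f x, rfl⟩
    exact DiscreteTopology.of_subset (s := (ψ.range : Set PSL(2, ℝ))) hdisc hle
  have hQN : ∀ q : Q, (q : Γ') ∈ N := by
    rintro ⟨_, x, rfl⟩
    exact x.2.1
  have hQtf : ∀ (q : Q) (n : ℕ), 0 < n → q ^ n = 1 → q = 1 := by
    intro q n hn h
    apply Subtype.ext
    exact htf q.1 (hQN q) n hn (congrArg Subtype.val h)
  have hQ : IsFreeGroupOn Q ∨ IsSurfaceGroup Q :=
    Hyp.main_tf (ψ.comp Q.subtype) (hinj.comp Subtype.val_injective) (disc _) hQtf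
  obtain ⟨L, hL, hLk⟩ := gen_ext τ hτs hτk hτc hQ
  have hinj' : Function.Injective (π.comp (L.map Γ2.subtype).subtype) := by
    rw [injective_iff_map_eq_one]
    rintro ⟨_, y, hy, rfl⟩ h
    have h' : π (y : Γ) = 1 := h
    have : y ∈ L ⊓ τ.ker := ⟨hy, (hτ y).mpr h'⟩
    rw [hLk, Subgroup.mem_bot] at this
    subst this
    rfl
  refine ⟨L.map Γ2.subtype, ?_, ?_⟩
  · constructor
    rw [Subgroup.index_map_subtype]
    exact mul_ne_zero hL.index_ne_zero h2.index_ne_zero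
  · refine Hyp.main_tf (ψ.comp (π.comp (L.map Γ2.subtype).subtype)) (hinj.comp hinj') (disc _) ?_
    rintro x n hn h
    apply hinj'
    rw [map_one]
    refine htf _ ?_ n hn ?_
    · obtain ⟨_, y, hy, rfl⟩ := x
      exact y.2.1
    · rw [← map_pow, h, map_one]

end Ext
end

/-- **Theorem (finite extensions of finitely generated discrete subgroups of `PSL(2,ℝ)`).**
If `Γ'` is a finitely generated group embedding in `PSL(2,ℝ)` with discrete image and
`1 → F → Γ → Γ' → 1` is exact with `F` finite, then `Γ` has a finite-index subgroup which is
a free group or a surface group. -/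
theorem finite_extension_of_discrete_PSL2_subgroup_virtually_free_or_surface
    {Γ Γ' : Type} [Group Γ] [Group Γ']
    (hfg : Group.FG Γ')
    (ψ : Γ' →* PSL(2, ℝ)) (hinj : Function.Injective ψ)
    (hdisc : DiscreteTopology ψ.range)
    (π : Γ →* Γ') (hsurj : Function.Surjective π) (hker : Finite π.ker) :
    ∃ H : Subgroup Γ, H.FiniteIndex ∧ (IsFreeGroupOn H ∨ IsSurfaceGroup H) := by
  exact Ext.final hfg ψ hinj hdisc π hker
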